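/- arXiv:2305.12919 — 2 statements merged into one kernel-verified Lean document; each statement's English description precedes it below -/
import Mathlib

section
/- The set of pairs (r, s) of real numbers with 0 < s < r < 1 such that there exists a compact packing of the Euclidean plane by disks of radii 1, r and s in which all three radii are actually used has at most 13617 elements. -/
open Metric Set

noncomputable section

/-- The Euclidean plane. -/
abbrev Plane : Type := EuclideanSpace ℝ (Fin 2)

/-- A closed disk in the plane, given by its center and (positive) radius. -/
structure Disk where
  center : Plane
  radius : ℝ
  radius_pos : 0 < radius

/-- The set of points of a disk (a closed ball). -/
def Disk.set (d : Disk) : Set Plane := closedBall d.center d.radius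

/-- A packing: a family of closed disks with pairwise disjoint interiors. -/
def IsPacking (P : Set Disk) : Prop :=
  ∀ d ∈ P, ∀ d' ∈ P, d ≠ d' → Disjoint (interior d.set) (interior d'.set)

/-- Two disks are (externally) tangent: they intersect in exactly one point. -/
def Disk.Tangent (d d' : Disk) : Prop :=
  dist d.center d'.center = d.radius + d'.radius

/-- The union of the disks of a packing. -/
def packingUnion (P : Set Disk) : Set Plane := ⋃ d ∈ P, d.set

/-- A packing is compact (triangulated) if every connected component of the
complement of the union of the disks is bounded and its closure meets exactly
three of the disks, these three disks being pairwise tangent. -/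
def IsCompactPacking (P : Set Disk) : Prop :=
  IsPacking P ∧
  ∀ x ∈ (packingUnion P)ᶜ,
    Bornology.IsBounded (connectedComponentIn (packingUnion P)ᶜ x) ∧
    ∃ d₁ d₂ d₃ : Disk, d₁ ∈ P ∧ d₂ ∈ P ∧ d₃ ∈ P ∧
      d₁ ≠ d₂ ∧ d₁ ≠ d₃ ∧ d₂ ≠ d₃ ∧
      d₁.Tangent d₂ ∧ d₁.Tangent d₃ ∧ d₂.Tangent d₃ ∧
      {d ∈ P | (closure (connectedComponentIn (packingUnion P)ᶜ x) ∩ d.set).Nonempty}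
        = {d₁, d₂, d₃}

/-- A packing uses the radius `r` if one of its disks has radius `r`. -/
def UsesRadius (P : Set Disk) (r : ℝ) : Prop := ∃ d ∈ P, d.radius = r

/-- All radii of the disks of `P` belong to `S`. -/
def RadiiIn (P : Set Disk) (S : Set ℝ) : Prop := ∀ d ∈ P, d.radius ∈ S

/-- The square `[-r, r]²`. -/
def square (r : ℝ) : Set Plane := {x | |x 0| ≤ r ∧ |x 1| ≤ r}

/-- The density of a packing: the limsup, as `r → ∞`, of the proportion of the
square `[-r, r]²` covered by the disks. -/
def density (P : Set Disk) : ℝ :=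
  Filter.limsup
    (fun r : ℝ => (MeasureTheory.volume (packingUnion P ∩ square r)).toReal / (4 * r ^ 2))
    Filter.atTop

end


/-! ### Polar coordinates -/

noncomputable def pt (c : Plane) (ρ φ : ℝ) : Plane := c + ρ • !₂[Real.cos φ, Real.sin φ]

theorem pt_dist_sq (c : Plane) (ρ σ φ ψ : ℝ) :
    dist (pt c ρ φ) (pt c σ ψ) ^ 2 = ρ ^ 2 + σ ^ 2 - 2 * ρ * σ * Real.cos (φ - ψ) := by
  rw [EuclideanSpace.dist_eq, Real.sq_sqrt (by positivity), Fin.sum_univ_two, Real.cos_sub]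
  simp only [pt, Real.dist_eq, sq_abs]
  simp
  nlinarith [Real.sin_sq_add_cos_sq φ, Real.sin_sq_add_cos_sq ψ]

theorem pt_zero (c : Plane) (φ : ℝ) : pt c 0 φ = c := by simp [pt]

theorem pt_dist_center (c : Plane) {ρ : ℝ} (hρ : 0 ≤ ρ) (φ : ℝ) : dist (pt c ρ φ) c = ρ := by
  have h := pt_dist_sq c ρ 0 φ 0
  rw [pt_zero] at h
  have h2 : dist (pt c ρ φ) c ^ 2 = ρ ^ 2 := by rw [h]; ring
  exact (pow_left_inj₀ dist_nonneg hρ (by norm_num)).1 h2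

theorem pt_periodic (c : Plane) (ρ φ : ℝ) : pt c ρ (φ + 2 * Real.pi) = pt c ρ φ := by
  simp [pt]

theorem pt_continuous (c : Plane) : Continuous (fun q : ℝ × ℝ => pt c q.1 q.2) := by
  unfold pt
  refine continuous_const.add (continuous_fst.smul ?_)
  refine (PiLp.continuous_toLp 2 _).comp ?_
  refine continuous_pi fun i => ?_
  fin_cases i <;> simp <;> fun_prop

theorem exists_polar (c z : Plane) :
    ∃ φ, 0 ≤ φ ∧ φ < 2 * Real.pi ∧ z = pt c (dist z c) φ := by
  have key : ∃ φ, -Real.pi < φ ∧ φ ≤ Real.pi ∧ z = pt c (dist z c) φ := by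
    set w : ℂ := ⟨z 0 - c 0, z 1 - c 1⟩ with hw
    have hn : dist z c = ‖w‖ := by
      rw [EuclideanSpace.dist_eq, Complex.norm_def, Complex.normSq_apply, Fin.sum_univ_two]
      simp only [Real.dist_eq, sq_abs, hw]
      congr 1; ring
    refine ⟨w.arg, Complex.neg_pi_lt_arg w, Complex.arg_le_pi w, ?_⟩
    rw [hn]
    have h1 := Complex.norm_mul_cos_arg w
    have h2 := Complex.norm_mul_sin_arg w
    ext i
    fin_cases i
    · simp [pt, h1, hw]
    · simp [pt, h2, hw]
  obtain ⟨φ, h1, h2, h3⟩ := key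
  rcases lt_or_ge φ 0 with h | h
  · exact ⟨φ + 2 * Real.pi, by linarith, by linarith, by rw [pt_periodic]; exact h3⟩
  · exact ⟨φ, h, by linarith [Real.pi_pos], h3⟩

/-! ### Basic facts on packings -/

theorem packing_dist {P : Set Disk} (hP : IsPacking P) {d e : Disk} (hd : d ∈ P) (he : e ∈ P)
    (hne : d ≠ e) : d.radius + e.radius ≤ dist d.center e.center := by
  have h := hP d hd e he hne
  unfold Disk.set at h
  rw [interior_closedBall _ d.radius_pos.ne', interior_closedBall _ e.radius_pos.ne'] at h
  exact (disjoint_ball_ball_iff d.radius_pos e.radius_pos).1 h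

theorem disk_ext {d e : Disk} (h1 : d.center = e.center) (h2 : d.radius = e.radius) : d = e := by
  cases d; cases e; simp_all

theorem center_inj {P : Set Disk} (hP : IsPacking P) {d e : Disk} (hd : d ∈ P) (he : e ∈ P)
    (h : d.center = e.center) : d = e := by
  by_contra hne
  have := packing_dist hP hd he hne
  rw [h, dist_self] at this
  linarith [d.radius_pos, e.radius_pos]

/-- bounded families are finite -/
theorem finite_near {P : Set Disk} (hP : IsPacking P) {m : ℝ} (hm : 0 < m)
    (hlow : ∀ d ∈ P, m ≤ d.radius) (z : Plane) (B : ℝ) :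
    {d ∈ P | dist d.center z ≤ B}.Finite := by
  have hinj : Set.InjOn Disk.center {d ∈ P | dist d.center z ≤ B} :=
    fun d hd e he h => center_inj hP hd.1 he.1 h
  refine Set.Finite.of_finite_image ?_ hinj
  by_contra hinf
  have hinf : (Disk.center '' {d ∈ P | dist d.center z ≤ B}).Infinite := hinf
  have hsub : Disk.center '' {d ∈ P | dist d.center z ≤ B} ⊆ closedBall z B := by
    rintro _ ⟨d, hd, rfl⟩; exact hd.2
  obtain ⟨a, -, ha⟩ := hinf.exists_accPt_of_subset_isCompact (isCompact_closedBall z B) hsub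
  rw [accPt_iff_nhds] at ha
  obtain ⟨y, ⟨hy1, d, hd, rfl⟩, hy2⟩ := ha (ball a m) (ball_mem_nhds a hm)
  obtain ⟨y', ⟨hy1', e, he, rfl⟩, hy2'⟩ := ha (ball a (min m (dist d.center a)))
    (ball_mem_nhds a (lt_min hm (dist_pos.2 hy2)))
  have hne : d ≠ e := by
    rintro rfl
    have : dist d.center a < min m (dist d.center a) := hy1'
    exact absurd (lt_of_lt_of_le this (min_le_right _ _)) (lt_irrefl _)
  have h1 := packing_dist hP hd.1 he.1 hne
  have h2 : dist d.center a < m := hy1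
  have h3 : dist e.center a < m := lt_of_lt_of_le hy1' (min_le_left _ _)
  have h4 := dist_triangle_right d.center e.center a
  linarith [hlow d hd.1, hlow e he.1]

theorem sub_closed {P Q : Set Disk} (hP : IsPacking P) {m : ℝ} (hm : 0 < m)
    (hlow : ∀ d ∈ P, m ≤ d.radius) (hup : ∀ d ∈ P, d.radius ≤ 1) (hQ : Q ⊆ P) :
    IsClosed (⋃ d ∈ Q, d.set) := by
  rw [Set.biUnion_eq_iUnion]
  refine LocallyFinite.isClosed_iUnion ?_ (fun d => isClosed_closedBall)
  intro z
  refine ⟨ball z 1, ball_mem_nhds z one_pos, ?_⟩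
  have hf := finite_near hP hm hlow z 2
  have : (fun d : Q => (d : Disk)) '' {i : Q | ((i : Disk).set ∩ ball z 1).Nonempty} ⊆
      {d ∈ P | dist d.center z ≤ 2} := by
    rintro _ ⟨⟨d, hd⟩, ⟨y, hy1, hy2⟩, rfl⟩
    refine ⟨hQ hd, ?_⟩
    have h1 : dist y d.center ≤ d.radius := hy1
    have h2 : dist y z < 1 := hy2
    have := dist_triangle_left d.center z y
    linarith [hup d (hQ hd)]
  exact (hf.subset this).of_finite_image Subtype.val_injective.injOn

theorem union_closed {P : Set Disk} (hP : IsPacking P) {m : ℝ} (hm : 0 < m)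
    (hlow : ∀ d ∈ P, m ≤ d.radius) (hup : ∀ d ∈ P, d.radius ≤ 1) :
    IsClosed (packingUnion P) := sub_closed hP hm hlow hup subset_rfl

/-! ### Connectedness of the tangency graph -/

theorem exists_tangent_cut {P : Set Disk} (hC : IsCompactPacking P) {m : ℝ} (hm : 0 < m)
    (hlow : ∀ d ∈ P, m ≤ d.radius) (hup : ∀ d ∈ P, d.radius ≤ 1) (A : Set Disk)
    (h1 : ∃ d ∈ P, d ∈ A) (h2 : ∃ d ∈ P, d ∉ A) :
    ∃ d ∈ P, ∃ e ∈ P, d ∈ A ∧ e ∉ A ∧ d.Tangent e := by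
  by_contra hno
  push Not at hno
  obtain ⟨hP, hcomp⟩ := hC
  have hno' : ∀ d ∈ P, ∀ e ∈ P, d.Tangent e → (d ∈ A ↔ e ∈ A) := by
    intro d hd e he ht
    have ht' : e.Tangent d := by
      unfold Disk.Tangent at *; rw [dist_comm, ht, add_comm]
    constructor
    · intro h; by_contra h'; exact hno d hd e he h h' ht
    · intro h; by_contra h'; exact hno e he d hd h h' ht'
  -- a general open set construction
  have main : ∀ B : Set Disk, (∀ d ∈ P, ∀ e ∈ P, d.Tangent e → (d ∈ B ↔ e ∈ B)) →
      IsOpen ((⋃ d ∈ P ∩ B, d.set) ∪ {x | x ∈ (packingUnion P)ᶜ ∧ ∃ d ∈ P, d ∈ B ∧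
        (closure (connectedComponentIn (packingUnion P)ᶜ x) ∩ d.set).Nonempty}) := by
    intro B hB
    have hVc : IsClosed (⋃ d ∈ P \ B, d.set) := sub_closed hP hm hlow hup Set.sdiff_subset
    have hUc : IsClosed (⋃ d ∈ P ∩ B, d.set) := sub_closed hP hm hlow hup Set.inter_subset_left
    have hUU : IsClosed (packingUnion P) := union_closed hP hm hlow hup
    rw [Metric.isOpen_iff]
    rintro x (hx | ⟨hx, d, hd, hdB, hne⟩)
    · have hxV : x ∉ ⋃ d ∈ P \ B, d.set := by
        intro hxV
        simp only [Set.mem_iUnion, exists_prop] at hx hxV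
        obtain ⟨d, ⟨hd, hdB⟩, hxd⟩ := hx
        obtain ⟨e, ⟨he, heB⟩, hxe⟩ := hxV
        have hne : d ≠ e := by rintro rfl; exact heB hdB
        have h3 := packing_dist hP hd he hne
        have h4 : dist x d.center ≤ d.radius := hxd
        have h5 : dist x e.center ≤ e.radius := hxe
        have h6 := dist_triangle_left d.center e.center x
        have : d.Tangent e := by unfold Disk.Tangent; linarith
        exact heB ((hB d hd e he this).1 hdB)
      obtain ⟨ε, hε, hball⟩ := Metric.isOpen_iff.1 hVc.isOpen_compl x hxV
      refine ⟨ε, hε, ?_⟩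
      intro y hy
      by_cases hyU : y ∈ ⋃ d ∈ P ∩ B, d.set
      · exact Or.inl hyU
      right
      have hdec : ∀ z, z ∈ ball x ε → z ∉ (⋃ d ∈ P ∩ B, d.set) → z ∈ (packingUnion P)ᶜ := by
        intro z hz hzU hzP
        simp only [packingUnion, Set.mem_iUnion, exists_prop] at hzP
        obtain ⟨d, hd, hzd⟩ := hzP
        by_cases hdB : d ∈ B
        · exact hzU (Set.mem_biUnion (⟨hd, hdB⟩ : d ∈ P ∩ B) hzd)
        · exact hball hz (Set.mem_biUnion (⟨hd, hdB⟩ : d ∈ P \ B) hzd)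
      refine ⟨hdec y hy hyU, ?_⟩
      set C := connectedComponentIn (packingUnion P)ᶜ y with hCdef
      by_contra hcon
      push Not at hcon
      -- the component would contain the segment
      have hseg : segment ℝ y x ⊆ C := by
        refine (convex_segment y x).isPreconnected.subset_of_closure_inter_subset
          (hUU.isOpen_compl.connectedComponentIn) ?_ ?_
        · exact ⟨y, left_mem_segment ℝ y x, mem_connectedComponentIn (hdec y hy hyU)⟩
        · rintro z ⟨hz1, hz2⟩
          have hzb : z ∈ ball x ε := (convex_ball x ε).segment_subset hy (mem_ball_self hε) hz2
          have hzU : z ∉ ⋃ d ∈ P ∩ B, d.set := by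
            intro h
            simp only [Set.mem_iUnion, exists_prop] at h
            obtain ⟨d, ⟨hd, hdB⟩, hzd⟩ := h
            have := hcon d hd hdB
            exact (Set.eq_empty_iff_forall_notMem.1 this) z ⟨hz1, hzd⟩
          have hzc := hdec z hzb hzU
          have hopen := hUU.isOpen_compl.connectedComponentIn (x := z)
          obtain ⟨t, ht1, ht2⟩ := mem_closure_iff.1 hz1 _ hopen (mem_connectedComponentIn hzc)
          rw [hCdef, connectedComponentIn_eq ht2, ← connectedComponentIn_eq ht1]
          exact mem_connectedComponentIn hzc
      have hxC := hseg (right_mem_segment ℝ y x)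
      have := connectedComponentIn_subset _ _ hxC
      apply this
      simp only [Set.mem_iUnion, exists_prop] at hx
      obtain ⟨d, ⟨hd, hdB⟩, hxd⟩ := hx
      exact Set.mem_biUnion hd hxd
    · have hopen := hUU.isOpen_compl.connectedComponentIn (x := x)
      obtain ⟨ε, hε, hball⟩ := Metric.isOpen_iff.1 hopen x (mem_connectedComponentIn hx)
      refine ⟨ε, hε, ?_⟩
      intro y hy
      right
      have hyC := hball hy
      refine ⟨connectedComponentIn_subset _ _ hyC, d, hd, hdB, ?_⟩
      rw [← connectedComponentIn_eq hyC]
      exact hne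
  have hA := main A hno'
  have hAc := main Aᶜ (fun d hd e he ht => not_congr (hno' d hd e he ht))
  set UA := ((⋃ d ∈ P ∩ A, d.set) ∪ {x | x ∈ (packingUnion P)ᶜ ∧ ∃ d ∈ P, d ∈ A ∧
        (closure (connectedComponentIn (packingUnion P)ᶜ x) ∩ d.set).Nonempty}) with hUA
  set UB := ((⋃ d ∈ P ∩ Aᶜ, d.set) ∪ {x | x ∈ (packingUnion P)ᶜ ∧ ∃ d ∈ P, d ∈ Aᶜ ∧
        (closure (connectedComponentIn (packingUnion P)ᶜ x) ∩ d.set).Nonempty}) with hUB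
  have hcov : (Set.univ : Set Plane) ⊆ UA ∪ UB := by
    intro x _
    by_cases hx : x ∈ packingUnion P
    · simp only [packingUnion, Set.mem_iUnion, exists_prop] at hx
      obtain ⟨d, hd, hxd⟩ := hx
      by_cases hdA : d ∈ A
      · exact Or.inl (Or.inl (Set.mem_biUnion (⟨hd, hdA⟩ : d ∈ P ∩ A) hxd))
      · exact Or.inr (Or.inl (Set.mem_biUnion (⟨hd, hdA⟩ : d ∈ P ∩ Aᶜ) hxd))
    · obtain ⟨-, d1, d2, d3, hd1, -, -, -, -, -, -, -, -, heq⟩ := hcomp x hx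
      have : d1 ∈ {d ∈ P | (closure (connectedComponentIn (packingUnion P)ᶜ x) ∩ d.set).Nonempty} := by
        rw [heq]; simp
      by_cases hdA : d1 ∈ A
      · exact Or.inl (Or.inr ⟨hx, d1, hd1, hdA, this.2⟩)
      · exact Or.inr (Or.inr ⟨hx, d1, hd1, hdA, this.2⟩)
  have hnA : (Set.univ ∩ UA).Nonempty := by
    obtain ⟨d, hd, hdA⟩ := h1
    exact ⟨d.center, trivial, Or.inl (Set.mem_biUnion (⟨hd, hdA⟩ : d ∈ P ∩ A)
      (mem_closedBall_self d.radius_pos.le))⟩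
  have hnB : (Set.univ ∩ UB).Nonempty := by
    obtain ⟨d, hd, hdA⟩ := h2
    exact ⟨d.center, trivial, Or.inl (Set.mem_biUnion (⟨hd, hdA⟩ : d ∈ P ∩ Aᶜ)
      (mem_closedBall_self d.radius_pos.le))⟩
  obtain ⟨x, -, hxA, hxB⟩ := isPreconnected_univ UA UB hA hAc hcov hnA hnB
  by_cases hx : x ∈ packingUnion P
  · have hxA' : x ∈ ⋃ d ∈ P ∩ A, d.set := by
      rcases hxA with h | h
      · exact h
      · exact absurd hx h.1
    have hxB' : x ∈ ⋃ d ∈ P ∩ Aᶜ, d.set := by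
      rcases hxB with h | h
      · exact h
      · exact absurd hx h.1
    simp only [Set.mem_iUnion, exists_prop] at hxA' hxB'
    obtain ⟨d, ⟨hd, hdA⟩, hxd⟩ := hxA'
    obtain ⟨e, ⟨he, heA⟩, hxe⟩ := hxB'
    have hne : d ≠ e := by rintro rfl; exact heA hdA
    have h3 := packing_dist hP hd he hne
    have h4 : dist x d.center ≤ d.radius := hxd
    have h5 : dist x e.center ≤ e.radius := hxe
    have h6 := dist_triangle_left d.center e.center x
    have : d.Tangent e := by unfold Disk.Tangent; linarith
    exact heA ((hno' d hd e he this).1 hdA)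
  · have hxA' : ∃ d ∈ P, d ∈ A ∧
        (closure (connectedComponentIn (packingUnion P)ᶜ x) ∩ d.set).Nonempty := by
      rcases hxA with h | h
      · exfalso; apply hx
        simp only [Set.mem_iUnion, exists_prop] at h
        obtain ⟨d, ⟨hd, _⟩, hxd⟩ := h
        exact Set.mem_biUnion hd hxd
      · exact h.2
    have hxB' : ∃ d ∈ P, d ∈ Aᶜ ∧
        (closure (connectedComponentIn (packingUnion P)ᶜ x) ∩ d.set).Nonempty := by
      rcases hxB with h | h
      · exfalso; apply hx
        simp only [Set.mem_iUnion, exists_prop] at h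
        obtain ⟨d, ⟨hd, _⟩, hxd⟩ := h
        exact Set.mem_biUnion hd hxd
      · exact h.2
    obtain ⟨d, hd, hdA, hd2⟩ := hxA'
    obtain ⟨e, he, heA, he2⟩ := hxB'
    obtain ⟨-, d1, d2, d3, hd1, hd2', hd3, -, -, -, t12, t13, t23, heq⟩ := hcomp x hx
    have e1 : d ∈ ({d1, d2, d3} : Set Disk) := by rw [← heq]; exact ⟨hd, hd2⟩
    have e2 : e ∈ ({d1, d2, d3} : Set Disk) := by rw [← heq]; exact ⟨he, he2⟩
    have i12 := hno' d1 hd1 d2 hd2' t12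
    have i13 := hno' d1 hd1 d3 hd3 t13
    have e1' : d1 ∈ A := by
      rcases e1 with rfl | rfl | rfl
      · exact hdA
      · exact i12.2 hdA
      · exact i13.2 hdA
    have e2' : d1 ∉ A := by
      rcases e2 with rfl | rfl | rfl
      · exact heA
      · exact fun h => heA (i12.1 h)
      · exact fun h => heA (i13.1 h)
    exact e2' e1'

/-! ### Arcs and coronas -/

theorem arc_component {P : Set Disk} (hC : IsCompactPacking P) {m : ℝ} (hm : 0 < m)
    (hlow : ∀ d ∈ P, m ≤ d.radius) (hup : ∀ d ∈ P, d.radius ≤ 1) {d : Disk}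
    {φ₀ φ₁ : ℝ} (hφ : φ₀ < φ₁)
    (hfree : ∀ φ ∈ Ioo φ₀ φ₁, ∀ e ∈ P, e ≠ d → pt d.center d.radius φ ∉ e.set) :
    ∃ x ∈ (packingUnion P)ᶜ,
      (∀ φ ∈ Icc φ₀ φ₁, pt d.center d.radius φ ∈
        closure (connectedComponentIn (packingUnion P)ᶜ x)) ∧
      (∀ φ ∈ Ioo φ₀ φ₁, ∃ ε > 0, ∀ ρ ∈ Ioo d.radius (d.radius + ε),
        pt d.center ρ φ ∈ connectedComponentIn (packingUnion P)ᶜ x) := by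
  obtain ⟨hP, -⟩ := hC
  have hVc : IsClosed (⋃ e ∈ P \ {d}, e.set) := sub_closed hP hm hlow hup Set.sdiff_subset
  have local1 : ∀ φ ∈ Ioo φ₀ φ₁, ∃ η > 0, ∀ ψ ∈ Ioo (φ - η) (φ + η),
      ∀ ρ ∈ Ioo d.radius (d.radius + η), pt d.center ρ ψ ∈ (packingUnion P)ᶜ := by
    intro φ hφ
    have hn : pt d.center d.radius φ ∉ ⋃ e ∈ P \ {d}, e.set := by
      intro h
      simp only [Set.mem_iUnion, exists_prop] at h
      obtain ⟨e, ⟨he, hed⟩, h⟩ := h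
      exact hfree φ hφ e he hed h
    have hopen : IsOpen ((fun q : ℝ × ℝ => pt d.center q.1 q.2) ⁻¹' (⋃ e ∈ P \ {d}, e.set)ᶜ) :=
      hVc.isOpen_compl.preimage (pt_continuous d.center)
    obtain ⟨η, hη, hball⟩ := Metric.isOpen_iff.1 hopen (d.radius, φ) hn
    refine ⟨η, hη, ?_⟩
    intro ψ hψ ρ hρ h
    simp only [packingUnion, Set.mem_iUnion, exists_prop] at h
    obtain ⟨e, he, h⟩ := h
    by_cases hed : e = d
    · subst hed
      have h' : dist (pt e.center ρ ψ) e.center ≤ e.radius := h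
      rw [pt_dist_center _ (by linarith [hρ.1, e.radius_pos])] at h'
      linarith [hρ.1]
    · have : ((ρ, ψ) : ℝ × ℝ) ∈ ball (d.radius, φ) η := by
        rw [mem_ball, Prod.dist_eq]
        simp only [Real.dist_eq]
        refine max_lt ?_ ?_
        · rw [abs_lt]; constructor <;> linarith [hρ.1, hρ.2]
        · rw [abs_lt]; constructor <;> linarith [hψ.1, hψ.2]
      exact hball this (Set.mem_biUnion (⟨he, hed⟩ : e ∈ P \ {d}) h)
  have rel : ∀ φ ∈ Ioo φ₀ φ₁, ∀ ψ ∈ Ioo φ₀ φ₁, ∃ x ∈ (packingUnion P)ᶜ,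
      (∃ ε > 0, ∀ ρ ∈ Ioo d.radius (d.radius + ε),
        pt d.center ρ φ ∈ connectedComponentIn (packingUnion P)ᶜ x) ∧
      (∃ ε > 0, ∀ ρ ∈ Ioo d.radius (d.radius + ε),
        pt d.center ρ ψ ∈ connectedComponentIn (packingUnion P)ᶜ x) := by
    intro φ hφ ψ hψ
    refine isPreconnected_Ioo.induction₂ (fun φ ψ => ∃ x ∈ (packingUnion P)ᶜ,
      (∃ ε > 0, ∀ ρ ∈ Ioo d.radius (d.radius + ε),
        pt d.center ρ φ ∈ connectedComponentIn (packingUnion P)ᶜ x) ∧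
      (∃ ε > 0, ∀ ρ ∈ Ioo d.radius (d.radius + ε),
        pt d.center ρ ψ ∈ connectedComponentIn (packingUnion P)ᶜ x)) ?_ ?_ ?_ hφ hψ
    clear hφ hψ φ ψ
    · intro φ hφ
      obtain ⟨η, hη, h⟩ := local1 φ hφ
      have hpre : IsPreconnected ((fun q : ℝ × ℝ => pt d.center q.1 q.2) ''
          (Ioo d.radius (d.radius + η) ×ˢ Ioo (φ - η) (φ + η))) :=
        (isPreconnected_Ioo.prod isPreconnected_Ioo).image _ (pt_continuous d.center).continuousOn
      have hsub : ((fun q : ℝ × ℝ => pt d.center q.1 q.2) ''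
          (Ioo d.radius (d.radius + η) ×ˢ Ioo (φ - η) (φ + η))) ⊆ (packingUnion P)ᶜ := by
        rintro _ ⟨⟨ρ, ψ⟩, ⟨h1, h2⟩, rfl⟩
        exact h ψ h2 ρ h1
      have hx0 : pt d.center (d.radius + η / 2) φ ∈ ((fun q : ℝ × ℝ => pt d.center q.1 q.2) ''
          (Ioo d.radius (d.radius + η) ×ˢ Ioo (φ - η) (φ + η))) :=
        ⟨(d.radius + η / 2, φ), ⟨⟨by simp; linarith, by simp; linarith⟩,
          ⟨by simp; linarith, by simp; linarith⟩⟩, rfl⟩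
      have hcc := hpre.subset_connectedComponentIn hx0 hsub
      have hnear : Ioo (φ - η) (φ + η) ∈ nhdsWithin φ (Ioo φ₀ φ₁) :=
        mem_nhdsWithin_of_mem_nhds (Ioo_mem_nhds (by linarith) (by linarith))
      filter_upwards [hnear] with ψ hψ
      refine ⟨_, hsub hx0, ⟨η, hη, ?_⟩, ⟨η, hη, ?_⟩⟩
      · intro ρ hρ
        exact hcc ⟨(ρ, φ), ⟨hρ, ⟨by simp; linarith, by simp; linarith⟩⟩, rfl⟩
      · intro ρ hρ
        exact hcc ⟨(ρ, ψ), ⟨hρ, hψ⟩, rfl⟩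
    · rintro φ ψ χ - - - ⟨x, hx, h1, ε, hε, h2⟩ ⟨y, hy, ⟨δ, hδ, h3⟩, h4⟩
      refine ⟨x, hx, h1, ?_⟩
      have e1 := h2 (d.radius + min ε δ / 2)
        ⟨by have := lt_min hε hδ; linarith, by have := lt_min hε hδ; have := min_le_left ε δ; linarith⟩
      have e2 := h3 (d.radius + min ε δ / 2)
        ⟨by have := lt_min hε hδ; linarith, by have := lt_min hε hδ; have := min_le_right ε δ; linarith⟩
      rw [connectedComponentIn_eq e1, ← connectedComponentIn_eq e2]
      exact h4
    · rintro φ ψ - - ⟨x, hx, h1, h2⟩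
      exact ⟨x, hx, h2, h1⟩
  set φm := (φ₀ + φ₁) / 2 with hφm
  have hm' : φm ∈ Ioo φ₀ φ₁ := ⟨by linarith, by linarith⟩
  obtain ⟨x, hx, ⟨ε, hε, h1⟩, -⟩ := rel φm hm' φm hm'
  have hall : ∀ φ ∈ Ioo φ₀ φ₁, ∃ ε > 0, ∀ ρ ∈ Ioo d.radius (d.radius + ε),
      pt d.center ρ φ ∈ connectedComponentIn (packingUnion P)ᶜ x := by
    intro φ hφ
    obtain ⟨y, hy, ⟨δ, hδ, h2⟩, h3⟩ := rel φm hm' φ hφ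
    have e1 := h1 (d.radius + min ε δ / 2)
      ⟨by have := lt_min hε hδ; linarith, by have := lt_min hε hδ; have := min_le_left ε δ; linarith⟩
    have e2 := h2 (d.radius + min ε δ / 2)
      ⟨by have := lt_min hε hδ; linarith, by have := lt_min hε hδ; have := min_le_right ε δ; linarith⟩
    rw [connectedComponentIn_eq e1, ← connectedComponentIn_eq e2]
    exact h3
  refine ⟨x, hx, ?_, hall⟩
  have hcl : ∀ φ ∈ Ioo φ₀ φ₁, pt d.center d.radius φ ∈
      closure (connectedComponentIn (packingUnion P)ᶜ x) := by
    intro φ hφ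
    obtain ⟨ε, hε, h⟩ := hall φ hφ
    have hcont : Continuous (fun ρ => pt d.center ρ φ) :=
      (pt_continuous d.center).comp (by fun_prop : Continuous (fun ρ : ℝ => (ρ, φ)))
    have hsub : closure (Ioo d.radius (d.radius + ε)) ⊆ (fun ρ => pt d.center ρ φ) ⁻¹'
        closure (connectedComponentIn (packingUnion P)ᶜ x) :=
      closure_minimal (fun ρ hρ => subset_closure (h ρ hρ)) (isClosed_closure.preimage hcont)
    rw [closure_Ioo (by linarith)] at hsub
    exact hsub ⟨le_rfl, by linarith⟩
  have hcont : Continuous (fun φ => pt d.center d.radius φ) :=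
    (pt_continuous d.center).comp (by fun_prop : Continuous (fun φ : ℝ => (d.radius, φ)))
  have hsub : closure (Ioo φ₀ φ₁) ⊆ (fun φ => pt d.center d.radius φ) ⁻¹'
      closure (connectedComponentIn (packingUnion P)ᶜ x) :=
    closure_minimal hcl (isClosed_closure.preimage hcont)
  rw [closure_Ioo hφ.ne] at hsub
  exact hsub

/-- The angle at a disk of radius `a` between mutually tangent disks of radii `b` and `c`. -/
noncomputable def th (a b c : ℝ) : ℝ := Real.arccos (1 - 2 * b * c / ((a + b) * (a + c)))

theorem tangent_symm {d e : Disk} (h : d.Tangent e) : e.Tangent d := by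
  unfold Disk.Tangent at *; rw [dist_comm, h, add_comm]

theorem tangent_ne {d e : Disk} (h : d.Tangent e) : e ≠ d := by
  rintro rfl
  unfold Disk.Tangent at h
  rw [dist_self] at h
  linarith [e.radius_pos]

/-- A free arc between two distinct neighbours: they are tangent, and the gap is the angle. -/
theorem gap_lemma {P : Set Disk} (hC : IsCompactPacking P) {m : ℝ} (hm : 0 < m)
    (hlow : ∀ d ∈ P, m ≤ d.radius) (hup : ∀ d ∈ P, d.radius ≤ 1) {d e f : Disk}
    (hd : d ∈ P) (he : e ∈ P) (hf : f ∈ P) (hef : e ≠ f)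
    (hte : d.Tangent e) (htf : d.Tangent f)
    {φ₀ φ₁ : ℝ} (hφ : φ₀ < φ₁)
    (hce : e.center = pt d.center (d.radius + e.radius) φ₀)
    (hcf : f.center = pt d.center (d.radius + f.radius) φ₁)
    (hlen : φ₁ - φ₀ ≤ 2 * Real.pi)
    (hfree : ∀ φ ∈ Ioo φ₀ φ₁, ∀ e ∈ P, e ≠ d → pt d.center d.radius φ ∉ e.set) :
    e.Tangent f ∧ φ₁ - φ₀ = th d.radius e.radius f.radius := by
  obtain ⟨x, hx, h1, h2⟩ := arc_component hC hm hlow hup hφ hfree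
  have hUU : IsClosed (packingUnion P) := union_closed hC.1 hm hlow hup
  obtain ⟨hb, d1, d2, d3, hd1, hd2, hd3, n12, n13, n23, t12, t13, t23, heq⟩ := hC.2 x hx
  set C := connectedComponentIn (packingUnion P)ᶜ x with hCdef
  have hdR := d.radius_pos
  have heR := e.radius_pos
  have hfR := f.radius_pos
  have contact : ∀ g : Disk, ∀ φ, g.center = pt d.center (d.radius + g.radius) φ →
      pt d.center d.radius φ ∈ g.set := by
    intro g φ hg
    have hgR := g.radius_pos
    change dist _ _ ≤ _
    have := pt_dist_sq d.center d.radius (d.radius + g.radius) φ φ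
    rw [← hg, sub_self, Real.cos_zero] at this
    have h3 : dist (pt d.center d.radius φ) g.center ^ 2 = g.radius ^ 2 := by rw [this]; ring
    exact ((pow_left_inj₀ dist_nonneg hgR.le (by norm_num)).1 h3).le
  have md : d ∈ ({d1, d2, d3} : Set Disk) := by
    rw [← heq]
    refine ⟨hd, pt d.center d.radius φ₀, h1 φ₀ ⟨le_rfl, hφ.le⟩, ?_⟩
    change dist _ _ ≤ _
    rw [pt_dist_center _ hdR.le]
  have me : e ∈ ({d1, d2, d3} : Set Disk) := by
    rw [← heq]
    exact ⟨he, pt d.center d.radius φ₀, h1 φ₀ ⟨le_rfl, hφ.le⟩, contact e φ₀ hce⟩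
  have mf : f ∈ ({d1, d2, d3} : Set Disk) := by
    rw [← heq]
    exact ⟨hf, pt d.center d.radius φ₁, h1 φ₁ ⟨hφ.le, le_rfl⟩, contact f φ₁ hcf⟩
  have hde := tangent_ne hte
  have hdf := tangent_ne htf
  have tef : e.Tangent f := by
    have t21 := tangent_symm t12
    have t31 := tangent_symm t13
    have t32 := tangent_symm t23
    rcases me with rfl | rfl | rfl <;> rcases mf with rfl | rfl | rfl <;>
      first | assumption | exact absurd rfl hef
  have hcover : ∀ g ∈ P, (closure C ∩ g.set).Nonempty → g = d ∨ g = e ∨ g = f := by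
    intro g hg hgC
    have mg : g ∈ ({d1, d2, d3} : Set Disk) := by rw [← heq]; exact ⟨hg, hgC⟩
    simp only [Set.mem_insert_iff, Set.mem_singleton_iff] at md me mf mg
    rcases md with rfl | rfl | rfl <;> rcases me with rfl | rfl | rfl <;>
      rcases mf with rfl | rfl | rfl <;> rcases mg with rfl | rfl | rfl <;>
      first
        | exact Or.inl rfl
        | exact Or.inr (Or.inl rfl)
        | exact Or.inr (Or.inr rfl)
        | exact absurd rfl hef
        | exact absurd rfl hde
        | exact absurd rfl hdf
  refine ⟨tef, ?_⟩
  have hcos : Real.cos (φ₁ - φ₀) = 1 - 2 * e.radius * f.radius /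
      ((d.radius + e.radius) * (d.radius + f.radius)) := by
    have := pt_dist_sq d.center (d.radius + e.radius) (d.radius + f.radius) φ₀ φ₁
    rw [← hce, ← hcf, tef, ← neg_sub φ₁ φ₀, Real.cos_neg] at this
    field_simp
    linarith
  by_cases hgap : φ₁ - φ₀ ≤ Real.pi
  · unfold th
    rw [← hcos, Real.arccos_cos (by linarith) hgap]
  exfalso
  push Not at hgap
  set φm := (φ₀ + φ₁) / 2 with hφm
  have hm' : φm ∈ Ioo φ₀ φ₁ := ⟨by linarith, by linarith⟩
  have hray : (fun ρ => pt d.center ρ φm) '' (Ioi d.radius) ⊆ C := by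
    have hcont : Continuous (fun ρ => pt d.center ρ φm) :=
      (pt_continuous d.center).comp (by fun_prop : Continuous (fun ρ : ℝ => (ρ, φm)))
    refine (isPreconnected_Ioi.image _ hcont.continuousOn).subset_of_closure_inter_subset
      (hUU.isOpen_compl.connectedComponentIn) ?_ ?_
    · obtain ⟨ε, hε, h⟩ := h2 φm hm'
      exact ⟨_, ⟨d.radius + ε / 2, by simp; linarith, rfl⟩,
        h _ ⟨by linarith, by linarith⟩⟩
    · rintro _ ⟨hz, ρ, hρ, rfl⟩
      simp only at hz ⊢
      have hρ : d.radius < ρ := hρ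
      have hzc : pt d.center ρ φm ∈ (packingUnion P)ᶜ := by
        intro hzU
        simp only [packingUnion, Set.mem_iUnion, exists_prop] at hzU
        obtain ⟨g, hg, hzg⟩ := hzU
        have far : ∀ g : Disk, ∀ φ, g.center = pt d.center (d.radius + g.radius) φ →
            Real.cos (φm - φ) ≤ 0 → pt d.center ρ φm ∉ g.set := by
          intro g φ hgc hcos hmem
          have hgR := g.radius_pos
          have hmem : dist (pt d.center ρ φm) g.center ≤ g.radius := hmem
          have e1 := pt_dist_sq d.center ρ (d.radius + g.radius) φm φ
          rw [← hgc] at e1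
          have e2 : dist (pt d.center ρ φm) g.center ^ 2 ≤ g.radius ^ 2 :=
            pow_le_pow_left₀ dist_nonneg hmem 2
          have e3 : 0 ≤ ρ * (d.radius + g.radius) * (-Real.cos (φm - φ)) :=
            mul_nonneg (by nlinarith) (by linarith)
          nlinarith
        rcases hcover g hg ⟨_, hz, hzg⟩ with rfl | rfl | rfl
        · have hzg : dist (pt g.center ρ φm) g.center ≤ g.radius := hzg
          rw [pt_dist_center _ (by linarith)] at hzg
          linarith
        · refine far g φ₀ hce (Real.cos_nonpos_of_pi_div_two_le_of_le ?_ ?_) hzg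
          · linarith
          · linarith
        · refine far g φ₁ hcf ?_ hzg
          rw [← Real.cos_neg]
          refine Real.cos_nonpos_of_pi_div_two_le_of_le ?_ ?_
          · linarith
          · linarith
      have hopen := hUU.isOpen_compl.connectedComponentIn (x := pt d.center ρ φm)
      obtain ⟨t, ht1, ht2⟩ := mem_closure_iff.1 hz _ hopen (mem_connectedComponentIn hzc)
      rw [hCdef, connectedComponentIn_eq ht2, ← connectedComponentIn_eq ht1]
      exact mem_connectedComponentIn hzc
  obtain ⟨B, hB⟩ := (hb.subset hray).subset_closedBall d.center
  have hmem := hB ⟨max (d.radius + 1) (B + 1), by simp, rfl⟩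
  have hmem : dist (pt d.center (max (d.radius + 1) (B + 1)) φm) d.center ≤ B := hmem
  rw [pt_dist_center _ (by have := le_max_left (d.radius + 1) (B + 1); linarith)] at hmem
  have := le_max_right (d.radius + 1) (B + 1)
  linarith


theorem corona {P : Set Disk} (hC : IsCompactPacking P) {m : ℝ} (hm : 0 < m)
    (hlow : ∀ d ∈ P, m ≤ d.radius) (hup : ∀ d ∈ P, d.radius ≤ 1) {d : Disk} (hd : d ∈ P) :
    ∃ (n : ℕ) (f : ℕ → Disk), 0 < n ∧ f n = f 0 ∧ (∀ i, f i ∈ P ∧ d.Tangent (f i)) ∧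
      (∀ e ∈ P, d.Tangent e → ∃ i < n, f i = e) ∧ (∀ i < n, (f i).Tangent (f (i + 1))) ∧
      ∑ i ∈ Finset.range n, th d.radius (f i).radius (f (i + 1)).radius = 2 * Real.pi := by
  have hpi := Real.pi_pos
  have hdR := d.radius_pos
  have hP := hC.1
  have hTfin : {e ∈ P | d.Tangent e}.Finite := by
    refine (finite_near hP hm hlow d.center 2).subset ?_
    rintro e ⟨he, ht⟩
    refine ⟨he, ?_⟩
    rw [dist_comm, ht]
    linarith [hup d hd, hup e he]
  choose ang ang0 ang1 ang2 using fun e : Disk => exists_polar d.center e.center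
  have angc : ∀ e, d.Tangent e → e.center = pt d.center (d.radius + e.radius) (ang e) := by
    intro e he
    have := ang2 e
    rw [dist_comm, he] at this
    exact this
  have contact : ∀ φ, ∀ e ∈ P, e ≠ d → pt d.center d.radius φ ∈ e.set →
      d.Tangent e ∧ ∃ k : ℤ, φ = ang e + k * (2 * Real.pi) := by
    intro φ e he hne hmem
    have heR := e.radius_pos
    have hmem : dist (pt d.center d.radius φ) e.center ≤ e.radius := hmem
    have h1 := packing_dist hP hd he hne.symm
    have h2 := pt_dist_center d.center hdR.le φ
    have h3 := dist_triangle_left d.center e.center (pt d.center d.radius φ)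
    have ht : d.Tangent e := by unfold Disk.Tangent; linarith
    refine ⟨ht, ?_⟩
    have h4 := pt_dist_sq d.center d.radius (d.radius + e.radius) φ (ang e)
    rw [← angc e ht] at h4
    have h5 : dist (pt d.center d.radius φ) e.center ^ 2 ≤ e.radius ^ 2 :=
      pow_le_pow_left₀ dist_nonneg hmem 2
    have h6 : Real.cos (φ - ang e) = 1 := by
      refine le_antisymm (Real.cos_le_one _) ?_
      by_contra hlt
      push Not at hlt
      have : 0 < d.radius * (d.radius + e.radius) * (1 - Real.cos (φ - ang e)) :=
        mul_pos (by positivity) (by linarith)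
      nlinarith
    obtain ⟨k, hk⟩ := (Real.cos_eq_one_iff _).1 h6
    exact ⟨k, by linarith⟩
  have anginj : ∀ e ∈ P, ∀ f ∈ P, d.Tangent e → d.Tangent f → ang e = ang f → e = f := by
    intro e he f hf hte htf hang
    by_contra hne
    have h1 := packing_dist hP he hf hne
    have h2 := pt_dist_sq d.center (d.radius + e.radius) (d.radius + f.radius) (ang e) (ang f)
    rw [← angc e hte, ← angc f htf, hang, sub_self, Real.cos_zero] at h2
    have heR := e.radius_pos
    have hfR := f.radius_pos
    have h3 : (e.radius + f.radius) ^ 2 ≤ dist e.center f.center ^ 2 :=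
      pow_le_pow_left₀ (by positivity) h1 2
    nlinarith [mul_pos heR hfR]
  have two : ∃ e f, e ∈ P ∧ f ∈ P ∧ d.Tangent e ∧ d.Tangent f ∧ e ≠ f := by
    by_contra hno
    push Not at hno
    have hsub : ∃ φ₀, ∀ e ∈ P, d.Tangent e → ang e = φ₀ := by
      by_cases h : ∃ e ∈ P, d.Tangent e
      · obtain ⟨e, he, hte⟩ := h
        refine ⟨ang e, fun f hf htf => ?_⟩
        rw [hno f e hf he htf hte]
      · push Not at h
        exact ⟨0, fun e he hte => absurd hte (h e he)⟩
    obtain ⟨φ₀, hφ₀⟩ := hsub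
    obtain ⟨x, hx, h1, -⟩ := arc_component hC hm hlow hup (d := d) (φ₀ := φ₀)
      (φ₁ := φ₀ + 2 * Real.pi) (by linarith) (by
        intro φ hφ e he hne hmem
        obtain ⟨ht, k, hk⟩ := contact φ e he hne hmem
        rw [hφ₀ e he ht] at hk
        have k1 : (0 : ℝ) < k := by
          by_contra h
          push Not at h
          have : (k : ℝ) * (2 * Real.pi) ≤ 0 := mul_nonpos_of_nonpos_of_nonneg h (by linarith)
          linarith [hφ.1]
        have k2 : (k : ℝ) < 1 := by
          by_contra h
          push Not at h
          have : 1 * (2 * Real.pi) ≤ (k : ℝ) * (2 * Real.pi) :=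
            mul_le_mul_of_nonneg_right h (by linarith)
          linarith [hφ.2]
        have k1' : 0 < k := by exact_mod_cast k1
        have k2' : k < 1 := by exact_mod_cast k2
        omega)
    obtain ⟨hb, d1, d2, d3, hd1, hd2, hd3, n12, n13, n23, t12, t13, t23, heq⟩ := hC.2 x hx
    have md : d ∈ ({d1, d2, d3} : Set Disk) := by
      rw [← heq]
      refine ⟨hd, pt d.center d.radius φ₀, h1 φ₀ ⟨le_rfl, by linarith⟩, ?_⟩
      change dist _ _ ≤ _
      rw [pt_dist_center _ hdR.le]
    rcases md with rfl | rfl | rfl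
    · exact n23 (hno _ _ hd2 hd3 t12 t13)
    · exact n13 (hno _ _ hd1 hd3 (tangent_symm t12) t23)
    · exact n12 (hno _ _ hd1 hd2 (tangent_symm t13) (tangent_symm t23))
  set Tf := hTfin.toFinset with hTf
  have memT : ∀ e, e ∈ Tf ↔ e ∈ P ∧ d.Tangent e := by
    intro e; rw [hTf, Set.Finite.mem_toFinset]; rfl
  classical
  set S := Tf.image ang with hS
  obtain ⟨n, hn⟩ : ∃ n, S.card = n := ⟨_, rfl⟩
  have hn2 : 2 ≤ n := by
    obtain ⟨e, f, he, hf, hte, htf, hne⟩ := two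
    rw [← hn]
    refine Finset.one_lt_card.2 ⟨ang e, ?_, ang f, ?_, ?_⟩
    · exact Finset.mem_image_of_mem _ ((memT e).2 ⟨he, hte⟩)
    · exact Finset.mem_image_of_mem _ ((memT f).2 ⟨hf, htf⟩)
    · exact fun h => hne (anginj e he f hf hte htf h)
  set g := S.orderEmbOfFin hn with hg
  have hgmem : ∀ i, ∃ e, (e ∈ P ∧ d.Tangent e) ∧ ang e = g i := by
    intro i
    have := Finset.orderEmbOfFin_mem S hn i
    obtain ⟨e, he, hee⟩ := Finset.mem_image.1 this
    exact ⟨e, (memT e).1 he, hee⟩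
  choose D hD1 hD2 using hgmem
  have hgsurj : ∀ e ∈ P, d.Tangent e → ∃ i, g i = ang e := by
    intro e he hte
    have : ang e ∈ Set.range g := by
      rw [hg, Finset.range_orderEmbOfFin]
      exact Finset.mem_image_of_mem _ ((memT e).2 ⟨he, hte⟩)
    exact this
  have n0 : 0 < n := by omega
  set a : ℕ → ℝ := fun i => if h : i < n then g ⟨i, h⟩ else g ⟨0, n0⟩ + 2 * Real.pi with ha
  set f : ℕ → Disk := fun i => if h : i < n then D ⟨i, h⟩ else D ⟨0, n0⟩ with hf
  have fP : ∀ i, f i ∈ P ∧ d.Tangent (f i) := by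
    intro i
    simp only [hf]
    split_ifs
    · exact hD1 _
    · exact hD1 _
  have a_lt : ∀ i (h : i < n), a i = g ⟨i, h⟩ := fun i h => by simp only [ha]; rw [dif_pos h]
  have f_lt : ∀ i (h : i < n), f i = D ⟨i, h⟩ := fun i h => by simp only [hf]; rw [dif_pos h]
  have a_n : a n = g ⟨0, n0⟩ + 2 * Real.pi := by simp only [ha]; rw [dif_neg (lt_irrefl n)]
  have f_n : f n = D ⟨0, n0⟩ := by simp only [hf]; rw [dif_neg (lt_irrefl n)]
  have fcen : ∀ i ≤ n, (f i).center = pt d.center (d.radius + (f i).radius) (a i) := by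
    intro i hi
    rcases lt_or_eq_of_le hi with h | h
    · rw [f_lt i h, a_lt i h, ← hD2]
      exact angc _ (hD1 _).2
    · subst h
      rw [f_n, a_n, pt_periodic, ← hD2]
      exact angc _ (hD1 _).2
  have grange : ∀ i, 0 ≤ g i ∧ g i < 2 * Real.pi := by
    intro i
    rw [← hD2]
    exact ⟨ang0 _, ang1 _⟩
  have step : ∀ i < n, (f i).Tangent (f (i + 1)) ∧
      a (i + 1) - a i = th d.radius (f i).radius (f (i + 1)).radius := by
    intro i hi
    have hlt : a i < a (i + 1) := by
      rcases lt_or_eq_of_le (Nat.succ_le_of_lt hi) with h | h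
      · rw [a_lt i hi, a_lt (i + 1) h]
        exact g.strictMono (by simp [Fin.lt_def])
      · have h' : i + 1 = n := h
        rw [h', a_n, a_lt i hi]
        linarith [(grange ⟨i, hi⟩).2, (grange ⟨0, n0⟩).1]
    have hle : a (i + 1) - a i ≤ 2 * Real.pi := by
      rcases lt_or_eq_of_le (Nat.succ_le_of_lt hi) with h | h
      · rw [a_lt i hi, a_lt (i + 1) h]
        linarith [(grange ⟨i, hi⟩).1, (grange ⟨i + 1, h⟩).2]
      · have h' : i + 1 = n := h
        rw [h', a_n, a_lt i hi]
        have : g ⟨0, n0⟩ ≤ g ⟨i, hi⟩ := g.monotone (by simp [Fin.le_def])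
        linarith
    have hne : f i ≠ f (i + 1) := by
      intro hff
      have hinj : ∀ j k, D j = D k → j = k := by
        intro j k hjk
        have : g j = g k := by rw [← hD2 j, ← hD2 k, hjk]
        exact g.injective this
      rcases lt_or_eq_of_le (Nat.succ_le_of_lt hi) with h | h
      · rw [f_lt i hi, f_lt (i + 1) h] at hff
        have := hinj _ _ hff
        simp at this
      · have h' : i + 1 = n := h
        rw [h', f_n, f_lt i hi] at hff
        have := hinj _ _ hff
        simp at this
        omega
    refine gap_lemma hC hm hlow hup hd (fP i).1 (fP (i + 1)).1 hne (fP i).2 (fP (i + 1)).2 hlt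
      (fcen i hi.le) (fcen (i + 1) hi) hle ?_
    intro φ hφ e he hed hmem
    obtain ⟨ht, k, hk⟩ := contact φ e he hed hmem
    obtain ⟨j, hj⟩ := hgsurj e he ht
    rw [← hj] at hk
    have hj0 := (grange j).1
    have hj1 := (grange j).2
    have hg0 : g ⟨0, n0⟩ ≤ g j := g.monotone (by simp [Fin.le_def])
    have hφ1 := hφ.1
    have hφ2 := hφ.2
    have k1 : (-1 : ℝ) < k := by
      by_contra h
      push Not at h
      have : (k : ℝ) * (2 * Real.pi) ≤ (-1) * (2 * Real.pi) :=
        mul_le_mul_of_nonneg_right h (by linarith)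
      rw [a_lt i hi] at hφ1
      linarith [(grange ⟨i, hi⟩).1]
    have k1' : -1 < k := by exact_mod_cast k1
    have k2 : (k : ℝ) < 1 := by
      by_contra h
      push Not at h
      have : 1 * (2 * Real.pi) ≤ (k : ℝ) * (2 * Real.pi) :=
        mul_le_mul_of_nonneg_right h (by linarith)
      rcases lt_or_eq_of_le (Nat.succ_le_of_lt hi) with h | h
      · rw [a_lt (i + 1) h] at hφ2
        linarith [(grange ⟨i + 1, h⟩).2]
      · have h' : i + 1 = n := h
        rw [h', a_n] at hφ2
        linarith
    have k2' : k < 1 := by exact_mod_cast k2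
    have k0 : k = 0 := by omega
    rw [k0] at hk
    simp at hk
    rw [hk, a_lt i hi] at hφ1
    have hij : i < j := by
      have := g.lt_iff_lt.1 hφ1
      exact this
    rcases lt_or_eq_of_le (Nat.succ_le_of_lt hi) with h | h
    · rw [hk, a_lt (i + 1) h] at hφ2
      have : (j : ℕ) < i + 1 := g.lt_iff_lt.1 hφ2
      omega
    · have h' : i + 1 = n := h
      have := j.2
      omega
  refine ⟨n, f, n0, ?_, fP, ?_, fun i hi => (step i hi).1, ?_⟩
  · rw [f_n, f_lt 0 n0]
  · intro e he hte
    obtain ⟨j, hj⟩ := hgsurj e he hte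
    refine ⟨j, j.2, ?_⟩
    rw [f_lt j j.2]
    exact anginj _ (hD1 j).1 _ he (hD1 j).2 hte (by rw [hD2, hj])
  · rw [Finset.sum_congr rfl (fun i hi => (step i (Finset.mem_range.1 hi)).2.symm),
      Finset.sum_range_sub, a_n, a_lt 0 n0]
    ring

/-! ### Angles -/

theorem th_comm (a b c : ℝ) : th a b c = th a c b := by
  unfold th
  rw [mul_right_comm, mul_comm (a + b)]

theorem frac_le {a b a' b' : ℝ} (ha : 0 < a) (hb : 0 < b) (ha' : 0 < a') (hb' : 0 < b')
    (h : b * a' ≤ b' * a) : b / (a + b) ≤ b' / (a' + b') := by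
  rw [div_le_div_iff₀ (by positivity) (by positivity)]
  nlinarith

theorem frac_lt {a b a' b' : ℝ} (ha : 0 < a) (hb : 0 < b) (ha' : 0 < a') (hb' : 0 < b')
    (h : b * a' < b' * a) : b / (a + b) < b' / (a' + b') := by
  rw [div_lt_div_iff₀ (by positivity) (by positivity)]
  nlinarith

theorem th_eq {a b c : ℝ} (ha : 0 < a) (hb : 0 < b) (hc : 0 < c) :
    th a b c = Real.arccos (1 - 2 * (b / (a + b) * (c / (a + c)))) := by
  unfold th
  congr 2
  field_simp

theorem frac_bd {a b : ℝ} (ha : 0 < a) (hb : 0 < b) : 0 < b / (a + b) ∧ b / (a + b) < 1 :=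
  ⟨by positivity, by rw [div_lt_one (by positivity)]; linarith⟩

theorem th_le {a b c a' b' c' : ℝ} (ha : 0 < a) (hb : 0 < b) (hc : 0 < c) (ha' : 0 < a')
    (hb' : 0 < b') (hc' : 0 < c') (h1 : b * a' ≤ b' * a) (h2 : c * a' ≤ c' * a) :
    th a b c ≤ th a' b' c' := by
  rw [th_eq ha hb hc, th_eq ha' hb' hc']
  apply Real.arccos_le_arccos
  have e1 := frac_le ha hb ha' hb' h1
  have e2 := frac_le ha hc ha' hc' h2
  have e3 := mul_le_mul e1 e2 (frac_bd ha hc).1.le (frac_bd ha' hb').1.le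
  linarith

theorem th_lt {a b c a' b' c' : ℝ} (ha : 0 < a) (hb : 0 < b) (hc : 0 < c) (ha' : 0 < a')
    (hb' : 0 < b') (hc' : 0 < c') (h1 : b * a' < b' * a) (h2 : c * a' ≤ c' * a) :
    th a b c < th a' b' c' := by
  rw [th_eq ha hb hc, th_eq ha' hb' hc']
  have e1 := frac_lt ha hb ha' hb' h1
  have e2 := frac_le ha hc ha' hc' h2
  have e3 := mul_lt_mul e1 e2 (frac_bd ha hc).1 (frac_bd ha' hb').1.le
  have e4 := frac_bd ha hb
  have e5 := frac_bd ha hc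
  have e6 := frac_bd ha' hb'
  have e7 := frac_bd ha' hc'
  have e8 : b' / (a' + b') * (c' / (a' + c')) < 1 := by nlinarith
  have e9 := mul_pos e4.1 e5.1
  apply Real.arccos_lt_arccos <;> linarith

theorem th_lt' {a b c a' b' c' : ℝ} (ha : 0 < a) (hb : 0 < b) (hc : 0 < c) (ha' : 0 < a')
    (hb' : 0 < b') (hc' : 0 < c') (h1 : b * a' ≤ b' * a) (h2 : c * a' < c' * a) :
    th a b c < th a' b' c' := by
  rw [th_comm a, th_comm a']
  exact th_lt ha hc hb ha' hc' hb' h2 h1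

theorem th_self {a : ℝ} (ha : 0 < a) : th a a a = Real.pi / 3 := by
  unfold th
  have : 1 - 2 * a * a / ((a + a) * (a + a)) = Real.cos (Real.pi / 3) := by
    rw [Real.cos_pi_div_three]; field_simp; norm_num
  rw [this, Real.arccos_cos] <;> linarith [Real.pi_pos]

theorem th_lt_pi {a b c : ℝ} (ha : 0 < a) (hb : 0 < b) (hc : 0 < c) : th a b c < Real.pi := by
  rw [th_eq ha hb hc, ← Real.arccos_neg_one]
  have e4 := frac_bd ha hb
  have e5 := frac_bd ha hc
  apply Real.arccos_lt_arccos <;> nlinarith [mul_pos e4.1 e5.1]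

theorem th_pos {a b c : ℝ} (ha : 0 < a) (hb : 0 < b) (hc : 0 < c) : 0 < th a b c := by
  rw [th_eq ha hb hc, Real.arccos_pos]
  have e4 := frac_bd ha hb
  have e5 := frac_bd ha hc
  nlinarith [mul_pos e4.1 e5.1]

theorem th_half {a c : ℝ} (ha : 0 < a) (hc : 0 < c) : th a a c < Real.pi / 2 := by
  rw [th_eq ha ha hc, Real.arccos_lt_pi_div_two]
  have e5 := frac_bd ha hc
  have : a / (a + a) = 1 / 2 := by field_simp; norm_num
  rw [this]
  linarith

/-! ### Numerical bounds -/

theorem nonneg_of_deriv {f f' : ℝ → ℝ} (h : ∀ x, HasDerivAt f (f' x) x) (h0 : f 0 = 0)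
    (h' : ∀ x, 0 ≤ x → 0 ≤ f' x) : ∀ x, 0 ≤ x → 0 ≤ f x := by
  have hmono : MonotoneOn f (Ici 0) := by
    refine monotoneOn_of_deriv_nonneg (convex_Ici 0)
      (fun x _ => (h x).continuousAt.continuousWithinAt)
      (fun x _ => (h x).differentiableAt.differentiableWithinAt) ?_
    intro x hx
    rw [interior_Ici] at hx
    rw [(h x).deriv]
    exact h' x (le_of_lt hx)
  intro x hx
  rw [← h0]
  exact hmono (Set.mem_Ici.2 le_rfl) hx hx

theorem poly_deriv (c : ℝ) (n : ℕ) (x : ℝ) :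
    HasDerivAt (fun x : ℝ => c * x ^ (n + 1)) (c * ((n + 1 : ℕ) * x ^ n)) x := by
  simpa using (hasDerivAt_pow (n + 1) x).const_mul c

theorem sin_step {p p' : ℝ → ℝ} (hp : ∀ x, HasDerivAt p (p' x) x) (h0 : p 0 = 0)
    (h : ∀ x, 0 ≤ x → 0 ≤ Real.cos x - p' x) : ∀ x, 0 ≤ x → 0 ≤ Real.sin x - p x :=
  nonneg_of_deriv (fun x => (Real.hasDerivAt_sin x).sub (hp x)) (by simp [h0]) h

theorem sin_step' {p p' : ℝ → ℝ} (hp : ∀ x, HasDerivAt p (p' x) x) (h0 : p 0 = 0)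
    (h : ∀ x, 0 ≤ x → 0 ≤ p' x - Real.cos x) : ∀ x, 0 ≤ x → 0 ≤ p x - Real.sin x :=
  nonneg_of_deriv (fun x => (hp x).sub (Real.hasDerivAt_sin x)) (by simp [h0]) h

theorem cos_step {p p' : ℝ → ℝ} (hp : ∀ x, HasDerivAt p (-p' x) x) (h0 : p 0 = 1)
    (h : ∀ x, 0 ≤ x → 0 ≤ p' x - Real.sin x) : ∀ x, 0 ≤ x → 0 ≤ Real.cos x - p x :=
  nonneg_of_deriv (f' := fun x => p' x - Real.sin x)
    (fun x => by
      have := (Real.hasDerivAt_cos x).sub (hp x)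
      have e : -Real.sin x - -p' x = p' x - Real.sin x := by ring
      rw [e] at this
      exact this) (by simp [h0]) h

theorem cos_step' {p p' : ℝ → ℝ} (hp : ∀ x, HasDerivAt p (-p' x) x) (h0 : p 0 = 1)
    (h : ∀ x, 0 ≤ x → 0 ≤ Real.sin x - p' x) : ∀ x, 0 ≤ x → 0 ≤ p x - Real.cos x :=
  nonneg_of_deriv (f' := fun x => Real.sin x - p' x)
    (fun x => by
      have := (hp x).sub (Real.hasDerivAt_cos x)
      have e : -p' x - -Real.sin x = Real.sin x - p' x := by ring
      rw [e] at this
      exact this) (by simp [h0]) h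

/-- the Taylor polynomials of sine and cosine, in the form of a recursion -/
noncomputable def cosP (k : ℕ) (x : ℝ) : ℝ :=
  ∑ i ∈ Finset.range k, (-1) ^ i * x ^ (2 * i) / (2 * i).factorial

noncomputable def sinP (k : ℕ) (x : ℝ) : ℝ :=
  ∑ i ∈ Finset.range k, (-1) ^ i * x ^ (2 * i + 1) / (2 * i + 1).factorial

theorem sinP_deriv (k : ℕ) (x : ℝ) : HasDerivAt (sinP k) (cosP k x) x := by
  unfold sinP cosP
  refine HasDerivAt.fun_sum fun i _ => ?_
  have := ((hasDerivAt_pow (2 * i + 1) x).const_mul ((-1 : ℝ) ^ i)).div_const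
    ((2 * i + 1).factorial : ℝ)
  refine this.congr_deriv ?_
  rw [Nat.factorial_succ]
  have : ((2 * i).factorial : ℝ) ≠ 0 := by positivity
  push_cast
  try simp only [Nat.add_sub_cancel]
  field_simp

theorem cosP_deriv (k : ℕ) (x : ℝ) : HasDerivAt (cosP (k + 1)) (-sinP k x) x := by
  unfold sinP cosP
  have hfun : (fun x : ℝ => ∑ i ∈ Finset.range (k + 1),
      (-1 : ℝ) ^ i * x ^ (2 * i) / (2 * i).factorial) =
      fun x => (∑ i ∈ Finset.range k,
        (-1 : ℝ) ^ (i + 1) * x ^ (2 * (i + 1)) / (2 * (i + 1)).factorial) + 1 := by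
    funext x; rw [Finset.sum_range_succ']; simp
  rw [hfun, ← Finset.sum_neg_distrib]
  refine HasDerivAt.add_const _ (HasDerivAt.fun_sum fun i _ => ?_)
  have := ((hasDerivAt_pow (2 * (i + 1)) x).const_mul ((-1 : ℝ) ^ (i + 1))).div_const
    ((2 * (i + 1)).factorial : ℝ)
  refine this.congr_deriv ?_
  have e : 2 * (i + 1) = 2 * i + 1 + 1 := by ring
  rw [e, Nat.factorial_succ (2 * i + 1)]
  have : ((2 * i + 1).factorial : ℝ) ≠ 0 := by positivity
  push_cast
  try simp only [Nat.add_sub_cancel]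
  field_simp
  ring

theorem cosP_zero (k : ℕ) : cosP (k + 1) 0 = 1 := by
  unfold cosP
  rw [Finset.sum_range_succ']
  simp

theorem sinP_zero (k : ℕ) : sinP k 0 = 0 := by
  unfold sinP
  simp

theorem taylor_all (k : ℕ) :
    (∀ x, 0 ≤ x → 0 ≤ cosP (2 * k + 1) x - Real.cos x) ∧
    (∀ x, 0 ≤ x → 0 ≤ Real.cos x - cosP (2 * k + 2) x) := by
  induction k with
  | zero =>
    have h1 : ∀ x : ℝ, 0 ≤ x → 0 ≤ cosP (2 * 0 + 1) x - Real.cos x := by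
      intro x _
      have : cosP (2 * 0 + 1) x = 1 := by simp [cosP]
      rw [this]; linarith [Real.cos_le_one x]
    refine ⟨h1, ?_⟩
    exact cos_step (cosP_deriv 1) (cosP_zero 1) (sin_step' (sinP_deriv 1) (sinP_zero 1) h1)
  | succ k ih =>
    have h1 : ∀ x : ℝ, 0 ≤ x → 0 ≤ cosP (2 * (k + 1) + 1) x - Real.cos x :=
      cos_step' (cosP_deriv (2 * k + 2)) (cosP_zero _)
        (sin_step (sinP_deriv (2 * k + 2)) (sinP_zero _) ih.2)
    refine ⟨h1, ?_⟩
    exact cos_step (cosP_deriv (2 * (k + 1) + 1)) (cosP_zero _)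
      (sin_step' (sinP_deriv _) (sinP_zero _) h1)

theorem cos_lower (x : ℝ) (hx : 0 ≤ x) :
    1 - x ^ 2 / 2 + x ^ 4 / 24 - x ^ 6 / 720 + x ^ 8 / 40320 - x ^ 10 / 3628800 ≤ Real.cos x := by
  have h := (taylor_all 2).2 x hx
  have e : cosP (2 * 2 + 2) x =
      1 - x ^ 2 / 2 + x ^ 4 / 24 - x ^ 6 / 720 + x ^ 8 / 40320 - x ^ 10 / 3628800 := by
    simp only [cosP, Finset.sum_range_succ, Finset.sum_range_zero, Nat.factorial]
    norm_num
    ring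
  linarith

theorem th_numeric {a b c : ℝ} (p : ℕ)
    (h : 1 - 2 * b * c / ((a + b) * (a + c)) <
      1 - (p * 3.1416 / 6000) ^ 2 / 2 + (p * 3.1416 / 6000) ^ 4 / 24
        - (p * 3.1416 / 6000) ^ 6 / 720 + (p * 3.1416 / 6000) ^ 8 / 40320
        - (p * 3.1416 / 6000) ^ 10 / 3628800)
    (hl : -1 ≤ 1 - 2 * b * c / ((a + b) * (a + c))) (hp' : (p : ℝ) * 3.1416 / 6000 ≤ 3) :
    p * (Real.pi / 6000) < th a b c := by
  have hpi := Real.pi_pos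
  have hpi2 := Real.pi_lt_d4
  have hpi3 := Real.pi_gt_three
  have p0 : (0 : ℝ) ≤ p := Nat.cast_nonneg p
  have h1 : (p : ℝ) * (Real.pi / 6000) ≤ p * 3.1416 / 6000 := by nlinarith
  have h2 := cos_lower ((p : ℝ) * 3.1416 / 6000) (by positivity)
  have h3 : Real.cos (p * 3.1416 / 6000) ≤ Real.cos (p * (Real.pi / 6000)) :=
    Real.cos_le_cos_of_nonneg_of_le_pi (by positivity) (by linarith) h1
  unfold th
  have h4 : Real.arccos (Real.cos (p * (Real.pi / 6000))) = p * (Real.pi / 6000) :=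
    Real.arccos_cos (by positivity) (by linarith)
  rw [← h4]
  apply Real.arccos_lt_arccos hl (by linarith) (Real.cos_le_one _)

/-- One numerical class: the threshold `X / 10` for `r / s`, and lower bounds for angles in units
of `π / 6000`. -/
structure Cls where
  X : ℕ
  al : ℕ
  be : ℕ
  u : ℕ
  v : ℕ

def classes : List Cls :=
  [⟨19, 2327, 2728, 1344, 1635⟩, ⟨29, 2504, 3202, 990, 1398⟩, ⟨36, 2581, 3433, 837, 1283⟩,
    ⟨65, 2744, 4004, 510, 997⟩, ⟨100, 2826, 4358, 347, 820⟩]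

theorem classes_spec : ∀ w ∈ classes, 0 < w.X ∧
    w.al * (Real.pi / 6000) < th 1 1 (w.X / 10) ∧
    w.be * (Real.pi / 6000) < th 1 (w.X / 10) (w.X / 10) ∧
    w.u * (Real.pi / 6000) < th (w.X / 10) 1 1 ∧
    w.v * (Real.pi / 6000) < th (w.X / 10) 1 (w.X / 10) := by
  intro w hw
  simp only [classes, List.mem_cons, List.not_mem_nil, or_false] at hw
  rcases hw with rfl | rfl | rfl | rfl | rfl <;>
    refine ⟨by norm_num, ?_, ?_, ?_, ?_⟩ <;> apply th_numeric <;> norm_num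


/-! ### Corona vectors -/

/-- The numbers of consecutive pairs of neighbours of each type in a corona
(`s` small, `r` medium, `l` large). -/
structure Vc where
  ss : ℕ
  sr : ℕ
  sl : ℕ
  rr : ℕ
  rl : ℕ
  ll : ℕ

namespace Vc

def hasS (N : Vc) : Prop := 0 < N.ss + N.sr + N.sl
def hasR (N : Vc) : Prop := 0 < N.sr + N.rr + N.rl
def hasL (N : Vc) : Prop := 0 < N.sl + N.rl + N.ll

/-- Total angle of a corona vector around a disk of radius `a`. -/
noncomputable def Sg (N : Vc) (a s r l : ℝ) : ℝ :=
  N.ss * th a s s + N.sr * th a s r + N.sl * th a s l + N.rr * th a r r + N.rl * th a r l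
    + N.ll * th a l l

/-- Parity and connectivity conditions. -/
def ok (N : Vc) : Prop :=
  (N.sr + N.sl) % 2 = 0 ∧ (N.sr + N.rl) % 2 = 0 ∧
  (N.sr + N.sl = 0 → N.ss = 0 ∨ N.rr + N.rl + N.ll = 0) ∧
  (N.sr + N.rl = 0 → N.rr = 0 ∨ N.ss + N.sl + N.ll = 0) ∧
  (N.sl + N.rl = 0 → N.ll = 0 ∨ N.ss + N.sr + N.rr = 0)

end Vc

/-- Add a pair of colours to a vector. -/
def addE (N : Vc) : Fin 3 → Fin 3 → Vc
  | 0, 0 => { N with ss := N.ss + 1 }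
  | 0, 1 => { N with sr := N.sr + 1 }
  | 1, 0 => { N with sr := N.sr + 1 }
  | 0, 2 => { N with sl := N.sl + 1 }
  | 2, 0 => { N with sl := N.sl + 1 }
  | 1, 1 => { N with rr := N.rr + 1 }
  | 1, 2 => { N with rl := N.rl + 1 }
  | 2, 1 => { N with rl := N.rl + 1 }
  | 2, 2 => { N with ll := N.ll + 1 }

def vec (c : ℕ → Fin 3) : ℕ → Vc
  | 0 => ⟨0, 0, 0, 0, 0, 0⟩
  | n + 1 => addE (vec c n) (c n) (c (n + 1))

def rad (s r : ℝ) : Fin 3 → ℝ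
  | 0 => s
  | 1 => r
  | 2 => 1

theorem fin3 (x : Fin 3) : x = 0 ∨ x = 1 ∨ x = 2 := by
  revert x; decide

theorem vec_sum (c : ℕ → Fin 3) (a s r : ℝ) (n : ℕ) :
    (vec c n).Sg a s r 1 = ∑ i ∈ Finset.range n, th a (rad s r (c i)) (rad s r (c (i + 1))) := by
  induction n with
  | zero => simp [vec, Vc.Sg]
  | succ n ih =>
    rw [Finset.sum_range_succ, ← ih]
    have h1 := th_comm a r s
    have h2 := th_comm a 1 s
    have h3 := th_comm a 1 r
    rcases fin3 (c n) with h | h | h <;> rcases fin3 (c (n + 1)) with h' | h' | h' <;>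
      simp only [vec, h, h', addE, Vc.Sg, rad] <;> push_cast <;>
      (try rw [h1]) <;> (try rw [h2]) <;> (try rw [h3]) <;> ring

theorem vec_inv (c : ℕ → Fin 3) (n : ℕ) :
    (((vec c n).sr + (vec c n).sl) % 2 = 0 ↔ (c 0 = 0 ↔ c n = 0)) ∧
    (((vec c n).sr + (vec c n).rl) % 2 = 0 ↔ (c 0 = 1 ↔ c n = 1)) ∧
    ((vec c n).sr + (vec c n).sl = 0 →
      (c n = 0 ∧ (vec c n).rr + (vec c n).rl + (vec c n).ll = 0) ∨ (c n ≠ 0 ∧ (vec c n).ss = 0)) ∧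
    ((vec c n).sr + (vec c n).rl = 0 →
      (c n = 1 ∧ (vec c n).ss + (vec c n).sl + (vec c n).ll = 0) ∨ (c n ≠ 1 ∧ (vec c n).rr = 0)) ∧
    ((vec c n).sl + (vec c n).rl = 0 →
      (c n = 2 ∧ (vec c n).ss + (vec c n).sr + (vec c n).rr = 0) ∨ (c n ≠ 2 ∧ (vec c n).ll = 0)) := by
  induction n with
  | zero => simp [vec]; tauto
  | succ n ih =>
    obtain ⟨i1, i2, i3, i4, i5⟩ := ih
    refine ⟨?_, ?_, ?_, ?_, ?_⟩
    · clear i2 i3 i4 i5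
      by_cases h0 : c 0 = 0 <;>
      rcases fin3 (c n) with h | h | h <;> rcases fin3 (c (n + 1)) with h' | h' | h' <;>
      simp [vec, h, h', addE, h0] at i1 ⊢ <;> omega
    · clear i1 i3 i4 i5
      by_cases h0 : c 0 = 1 <;>
      rcases fin3 (c n) with h | h | h <;> rcases fin3 (c (n + 1)) with h' | h' | h' <;>
      simp [vec, h, h', addE, h0] at i2 ⊢ <;> omega
    · clear i1 i2 i4 i5
      rcases fin3 (c n) with h | h | h <;> rcases fin3 (c (n + 1)) with h' | h' | h' <;>
      simp [vec, h, h', addE] at i3 ⊢ <;> omega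
    · clear i1 i2 i3 i5
      rcases fin3 (c n) with h | h | h <;> rcases fin3 (c (n + 1)) with h' | h' | h' <;>
      simp [vec, h, h', addE] at i4 ⊢ <;> omega
    · clear i1 i2 i3 i4
      rcases fin3 (c n) with h | h | h <;> rcases fin3 (c (n + 1)) with h' | h' | h' <;>
      simp [vec, h, h', addE] at i5 ⊢ <;> omega

theorem ex_succ {p : ℕ → Prop} {n : ℕ} : (∃ i < n + 1, p i) ↔ (∃ i < n, p i) ∨ p n := by
  constructor
  · rintro ⟨i, hi, h⟩
    rcases Nat.lt_succ_iff_lt_or_eq.1 hi with h' | h'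
    · exact Or.inl ⟨i, h', h⟩
    · subst h'; exact Or.inr h
  · rintro (⟨i, hi, h⟩ | h)
    · exact ⟨i, by omega, h⟩
    · exact ⟨n, by omega, h⟩

theorem vec_has (c : ℕ → Fin 3) (n : ℕ) :
    ((vec c n).hasS ↔ ∃ i < n, c i = 0 ∨ c (i + 1) = 0) ∧
    ((vec c n).hasR ↔ ∃ i < n, c i = 1 ∨ c (i + 1) = 1) ∧
    ((vec c n).hasL ↔ ∃ i < n, c i = 2 ∨ c (i + 1) = 2) ∧
    (0 < (vec c n).sl → ∃ i < n, (c i = 0 ∧ c (i + 1) = 2) ∨ (c i = 2 ∧ c (i + 1) = 0)) := by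
  induction n with
  | zero => simp [vec, Vc.hasS, Vc.hasR, Vc.hasL]
  | succ n ih =>
    obtain ⟨i1, i2, i3, i4⟩ := ih
    rw [ex_succ, ex_succ, ex_succ, ex_succ, ← i1, ← i2, ← i3]
    unfold Vc.hasS Vc.hasR Vc.hasL
    clear i1 i2 i3
    rcases fin3 (c n) with h | h | h <;> rcases fin3 (c (n + 1)) with h' | h' | h' <;>
      simp [vec, h, h', addE] <;> exact i4

/-- Standing assumptions on the packing. -/
structure Hyp (P : Set Disk) (r s : ℝ) : Prop where
  s0 : 0 < s
  sr : s < r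
  r1 : r < 1
  hC : IsCompactPacking P
  hR : RadiiIn P {1, r, s}
  u1 : UsesRadius P 1
  ur : UsesRadius P r
  us : UsesRadius P s

theorem Hyp.radius {P : Set Disk} {r s : ℝ} (H : Hyp P r s) {d : Disk} (hd : d ∈ P) :
    d.radius = 1 ∨ d.radius = r ∨ d.radius = s := by
  have := H.hR d hd
  simpa using this

theorem Hyp.low {P : Set Disk} {r s : ℝ} (H : Hyp P r s) : ∀ d ∈ P, s ≤ d.radius := by
  intro d hd
  have := H.sr
  have := H.r1
  rcases H.radius hd with h | h | h <;> rw [h] <;> linarith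

theorem Hyp.up {P : Set Disk} {r s : ℝ} (H : Hyp P r s) : ∀ d ∈ P, d.radius ≤ 1 := by
  intro d hd
  have := H.sr
  have := H.r1
  rcases H.radius hd with h | h | h <;> rw [h] <;> linarith

theorem Hyp.vector {P : Set Disk} {r s : ℝ} (H : Hyp P r s) {d : Disk} (hd : d ∈ P) :
    ∃ N : Vc, N.Sg d.radius s r 1 = 2 * Real.pi ∧ N.ok ∧
      (N.hasS ↔ ∃ e ∈ P, d.Tangent e ∧ e.radius = s) ∧
      (N.hasR ↔ ∃ e ∈ P, d.Tangent e ∧ e.radius = r) ∧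
      (N.hasL ↔ ∃ e ∈ P, d.Tangent e ∧ e.radius = 1) ∧
      (0 < N.sl → ∃ e ∈ P, ∃ f ∈ P, e.Tangent f ∧ e.radius = s ∧ f.radius = 1) := by
  classical
  have hsr := H.sr
  have hr1 := H.r1
  obtain ⟨n, f, n0, fn, fP, fall, ftan, fsum⟩ := corona H.hC H.s0 H.low H.up hd
  set c : ℕ → Fin 3 := fun i => if (f i).radius = s then 0 else if (f i).radius = r then 1 else 2
    with hc
  have cn : c n = c 0 := by simp only [hc, fn]
  have crad : ∀ i, rad s r (c i) = (f i).radius := by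
    intro i
    simp only [hc]
    split_ifs with h1 h2
    · simp [rad, h1]
    · simp [rad, h2]
    · rcases H.radius (fP i).1 with h | h | h
      · simp [rad, h]
      · exact absurd h h2
      · exact absurd h h1
  have c0 : ∀ i, c i = 0 ↔ (f i).radius = s := by
    intro i
    rw [← crad]
    rcases fin3 (c i) with h | h | h <;> rw [h] <;> simp [rad] <;> intro h <;> linarith
  have c1 : ∀ i, c i = 1 ↔ (f i).radius = r := by
    intro i
    rw [← crad]
    rcases fin3 (c i) with h | h | h <;> rw [h] <;> simp [rad] <;> intro h <;> linarith
  have c2 : ∀ i, c i = 2 ↔ (f i).radius = 1 := by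
    intro i
    rw [← crad]
    rcases fin3 (c i) with h | h | h <;> rw [h] <;> simp [rad] <;> intro h <;> linarith
  obtain ⟨v1, v2, v3, v4, v5⟩ := vec_inv c n
  obtain ⟨w1, w2, w3, w4⟩ := vec_has c n
  have key : ∀ (k : Fin 3) (t : ℝ), (∀ i, c i = k ↔ (f i).radius = t) →
      ((∃ i < n, c i = k ∨ c (i + 1) = k) ↔ ∃ e ∈ P, d.Tangent e ∧ e.radius = t) := by
    intro k t h
    constructor
    · rintro ⟨i, hi, h' | h'⟩
      · exact ⟨f i, (fP i).1, (fP i).2, (h i).1 h'⟩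
      · exact ⟨f (i + 1), (fP _).1, (fP _).2, (h _).1 h'⟩
    · rintro ⟨e, he, ht, hr⟩
      obtain ⟨i, hi, hfi⟩ := fall e he ht
      exact ⟨i, hi, Or.inl ((h i).2 (by rw [hfi, hr]))⟩
  refine ⟨vec c n, ?_, ?_, w1.trans (key 0 s c0), w2.trans (key 1 r c1), w3.trans (key 2 1 c2), ?_⟩
  · rw [vec_sum, ← fsum]
    simp only [crad]
  · refine ⟨v1.2 (by rw [cn]), v2.2 (by rw [cn]), ?_, ?_, ?_⟩
    · intro h; rcases v3 h with h | h
      · exact Or.inr h.2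
      · exact Or.inl h.2
    · intro h; rcases v4 h with h | h
      · exact Or.inr h.2
      · exact Or.inl h.2
    · intro h; rcases v5 h with h | h
      · exact Or.inr h.2
      · exact Or.inl h.2
  · intro h
    obtain ⟨i, hi, h | h⟩ := w4 h
    · exact ⟨f i, (fP i).1, f (i + 1), (fP _).1, ftan i hi, (c0 i).1 h.1, (c2 _).1 h.2⟩
    · exact ⟨f (i + 1), (fP _).1, f i, (fP _).1, tangent_symm (ftan i hi), (c0 _).1 h.2,
        (c2 _).1 h.1⟩

/-! ### Monotonicity of the angle sums -/

theorem term_le {k : ℕ} {t t' : ℝ} (h : 0 < k → t ≤ t') : (k : ℝ) * t ≤ k * t' := by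
  rcases Nat.eq_zero_or_pos k with h0 | h0
  · subst h0; simp
  · exact mul_le_mul_of_nonneg_left (h h0) (Nat.cast_nonneg k)

theorem term_lt {k : ℕ} {t t' : ℝ} (h0 : 0 < k) (h : t < t') : (k : ℝ) * t < k * t' :=
  mul_lt_mul_of_pos_left h (by exact_mod_cast h0)

theorem Sg_cmp (N : Vc) {a s r l a' s' r' l' : ℝ} (ha : 0 < a) (hs : 0 < s) (hr : 0 < r)
    (hl : 0 < l) (ha' : 0 < a') (hs' : 0 < s') (hr' : 0 < r') (hl' : 0 < l')
    (hS : N.hasS → s * a' ≤ s' * a) (hR : N.hasR → r * a' ≤ r' * a)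
    (hL : N.hasL → l * a' ≤ l' * a) :
    N.Sg a s r l ≤ N.Sg a' s' r' l' ∧
    ((N.hasS ∧ s * a' < s' * a) ∨ (N.hasR ∧ r * a' < r' * a) ∨ (N.hasL ∧ l * a' < l' * a) →
      N.Sg a s r l < N.Sg a' s' r' l') := by
  unfold Vc.hasS Vc.hasR Vc.hasL at *
  unfold Vc.Sg
  have l1 := term_le (k := N.ss) fun h =>
    th_le ha hs hs ha' hs' hs' (hS (by omega)) (hS (by omega))
  have l2 := term_le (k := N.sr) fun h =>
    th_le ha hs hr ha' hs' hr' (hS (by omega)) (hR (by omega))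
  have l3 := term_le (k := N.sl) fun h =>
    th_le ha hs hl ha' hs' hl' (hS (by omega)) (hL (by omega))
  have l4 := term_le (k := N.rr) fun h =>
    th_le ha hr hr ha' hr' hr' (hR (by omega)) (hR (by omega))
  have l5 := term_le (k := N.rl) fun h =>
    th_le ha hr hl ha' hr' hl' (hR (by omega)) (hL (by omega))
  have l6 := term_le (k := N.ll) fun h =>
    th_le ha hl hl ha' hl' hl' (hL (by omega)) (hL (by omega))
  refine ⟨by linarith, ?_⟩
  rintro (⟨h, hlt⟩ | ⟨h, hlt⟩ | ⟨h, hlt⟩)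
  · have : 0 < N.ss ∨ 0 < N.sr ∨ 0 < N.sl := by omega
    rcases this with h | h | h
    · have := term_lt h (th_lt ha hs hs ha' hs' hs' hlt hlt.le); linarith
    · have := term_lt h (th_lt ha hs hr ha' hs' hr' hlt (hR (by omega))); linarith
    · have := term_lt h (th_lt ha hs hl ha' hs' hl' hlt (hL (by omega))); linarith
  · have : 0 < N.sr ∨ 0 < N.rr ∨ 0 < N.rl := by omega
    rcases this with h | h | h
    · have := term_lt h (th_lt' ha hs hr ha' hs' hr' (hS (by omega)) hlt); linarith
    · have := term_lt h (th_lt ha hr hr ha' hr' hr' hlt hlt.le); linarith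
    · have := term_lt h (th_lt ha hr hl ha' hr' hl' hlt (hL (by omega))); linarith
  · have : 0 < N.sl ∨ 0 < N.rl ∨ 0 < N.ll := by omega
    rcases this with h | h | h
    · have := term_lt h (th_lt' ha hs hl ha' hs' hl' (hS (by omega)) hlt); linarith
    · have := term_lt h (th_lt' ha hr hl ha' hr' hl' (hR (by omega)) hlt); linarith
    · have := term_lt h (th_lt ha hl hl ha' hl' hl' hlt hlt.le); linarith

/-! ### Bounds on the vectors -/

theorem s_bounds {r s : ℝ} (s0 : 0 < s) (sr : s < r) (r1 : r < 1) {A : Vc}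
    (hA : A.Sg s s r 1 = 2 * Real.pi) (h : A.hasR ∨ A.hasL) :
    A.ss + A.sr + A.sl + A.rr + A.rl + A.ll ≤ 5 ∧
    12 < 2 * A.ss + 3 * (A.sr + A.sl) + 6 * (A.rr + A.rl + A.ll) := by
  have hpi := Real.pi_pos
  have r0 : 0 < r := by linarith
  constructor
  · have h1 := (Sg_cmp A one_pos one_pos one_pos one_pos s0 s0 r0 one_pos (by intros; linarith)
      (by intros; linarith) (by intros; linarith)).2 (by
        rcases h with h | h
        · exact Or.inr (Or.inl ⟨h, by linarith⟩)
        · exact Or.inr (Or.inr ⟨h, by linarith⟩))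
    rw [hA] at h1
    simp only [Vc.Sg, th_self one_pos] at h1
    have h2 : ((A.ss + A.sr + A.sl + A.rr + A.rl + A.ll : ℕ) : ℝ) < 6 := by
      push_cast
      nlinarith
    have h3 : A.ss + A.sr + A.sl + A.rr + A.rl + A.ll < 6 := by exact_mod_cast h2
    omega
  · have q1 := th_self s0
    have q2 := th_half s0 r0
    have q3 := th_half s0 one_pos
    have q4 := th_lt_pi s0 r0 r0
    have q5 := th_lt_pi s0 r0 one_pos
    have q6 := th_lt_pi s0 one_pos one_pos
    have l2 := term_le (k := A.sr) fun _ => q2.le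
    have l3 := term_le (k := A.sl) fun _ => q3.le
    have l4 := term_le (k := A.rr) fun _ => q4.le
    have l5 := term_le (k := A.rl) fun _ => q5.le
    have l6 := term_le (k := A.ll) fun _ => q6.le
    have key : 2 * Real.pi < A.ss * (Real.pi / 3) + A.sr * (Real.pi / 2) + A.sl * (Real.pi / 2)
        + A.rr * Real.pi + A.rl * Real.pi + A.ll * Real.pi := by
      rw [← hA]
      unfold Vc.Sg
      rw [q1]
      have : 0 < A.sr ∨ 0 < A.sl ∨ 0 < A.rr ∨ 0 < A.rl ∨ 0 < A.ll := by
        unfold Vc.hasR Vc.hasL at h; omega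
      rcases this with h | h | h | h | h
      · have := term_lt h q2; linarith
      · have := term_lt h q3; linarith
      · have := term_lt h q4; linarith
      · have := term_lt h q5; linarith
      · have := term_lt h q6; linarith
    have h2 : ((12 : ℕ) : ℝ) <
        ((2 * A.ss + 3 * (A.sr + A.sl) + 6 * (A.rr + A.rl + A.ll) : ℕ) : ℝ) := by
      push_cast
      nlinarith
    exact_mod_cast h2

/-- The test showing that `A` forces `r / s < X / 10`. -/
def Cls.test (w : Cls) (A : Vc) : Bool :=
  Nat.blt 12000 (A.ss * 2000 + (A.sr + A.sl) * w.al + (A.rr + A.rl + A.ll) * w.be)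

theorem class_lt {r s : ℝ} (s0 : 0 < s) (sr : s < r) (r1 : r < 1) {A : Vc}
    (hA : A.Sg s s r 1 = 2 * Real.pi) {w : Cls} (hw : w ∈ classes) (ht : w.test A = true) :
    r * 10 < w.X * s := by
  have hpi := Real.pi_pos
  have r0 : 0 < r := by linarith
  obtain ⟨X0, h1, h2, -, -⟩ := classes_spec w hw
  have X0' : (0 : ℝ) < w.X / 10 := by
    have : (0 : ℝ) < w.X := by exact_mod_cast X0
    positivity
  by_contra hcon
  push Not at hcon
  have hc := (Sg_cmp A one_pos one_pos X0' X0' s0 s0 r0 one_pos (by intros; linarith)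
      (by intros; linarith) (by intros; linarith)).1
  rw [hA] at hc
  simp only [Vc.Sg, th_self one_pos] at hc
  have l2 := term_le (k := A.sr) fun _ => h1.le
  have l3 := term_le (k := A.sl) fun _ => h1.le
  have l4 := term_le (k := A.rr) fun _ => h2.le
  have l5 := term_le (k := A.rl) fun _ => h2.le
  have l6 := term_le (k := A.ll) fun _ => h2.le
  have ht' : 12000 < A.ss * 2000 + (A.sr + A.sl) * w.al + (A.rr + A.rl + A.ll) * w.be := by
    simpa [Cls.test, Nat.blt, Nat.ble_eq, Nat.succ_le_iff] using ht
  have ht2 : (12000 : ℝ) < (A.ss * 2000 + (A.sr + A.sl) * w.al + (A.rr + A.rl + A.ll) * w.be) := by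
    exact_mod_cast ht'
  have := mul_lt_mul_of_pos_right ht2 (show 0 < Real.pi / 6000 by positivity)
  linarith

theorem r_bounds {r s : ℝ} (s0 : 0 < s) (sr : s < r) (r1 : r < 1) {N : Vc}
    (hN : N.Sg r s r 1 = 2 * Real.pi) (h : N.hasS ∨ N.hasL) {w : Cls} (hw : w ∈ classes)
    (hX : r * 10 < w.X * s) :
    N.ss * w.u + (N.sr + N.sl) * w.v + (N.rr + N.rl + N.ll) * 2000 < 12000 := by
  have hpi := Real.pi_pos
  have r0 : 0 < r := by linarith
  obtain ⟨X0, -, -, h1, h2⟩ := classes_spec w hw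
  have X0' : (0 : ℝ) < w.X / 10 := by
    have : (0 : ℝ) < w.X := by exact_mod_cast X0
    positivity
  have hXX : 1 * (w.X / 10 : ℝ) ≥ r * (w.X / 10 : ℝ) := by
    exact mul_le_mul_of_nonneg_right r1.le X0'.le
  have hXX' : r * (w.X / 10 : ℝ) < 1 * (w.X / 10 : ℝ)  := by
    exact mul_lt_mul_of_pos_right r1 X0'
  have hc := (Sg_cmp N X0' one_pos X0' X0' r0 s0 r0 one_pos (by intros; linarith)
      (by intros; linarith) (by intros; linarith)).2 (by
        rcases h with h | h
        · exact Or.inl ⟨h, by linarith⟩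
        · exact Or.inr (Or.inr ⟨h, by linarith⟩))
  rw [hN] at hc
  rw [Vc.Sg, th_self X0'] at hc
  have l1 := term_le (k := N.ss) fun _ => h1.le
  have l2 := term_le (k := N.sr) fun _ => h2.le
  have l3 := term_le (k := N.sl) fun _ => h2.le
  have key : (N.ss * w.u + (N.sr + N.sl) * w.v + (N.rr + N.rl + N.ll) * 2000 : ℝ)
      * (Real.pi / 6000) < 12000 * (Real.pi / 6000) := by linarith
  have := lt_of_mul_lt_mul_right key (by positivity)
  exact_mod_cast this

theorem r_bounds' {r s : ℝ} (s0 : 0 < s) (sr : s < r) (r1 : r < 1) {N : Vc}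
    (hN : N.Sg r s r 1 = 2 * Real.pi) (hS : ¬ N.hasS) (hL : N.hasL) :
    N.rr + N.rl + N.ll < 6 := by
  have hpi := Real.pi_pos
  have r0 : 0 < r := by linarith
  have hc := (Sg_cmp N one_pos one_pos one_pos one_pos r0 s0 r0 one_pos (fun h => absurd h hS)
      (by intros; linarith) (by intros; linarith)).2 (Or.inr (Or.inr ⟨hL, by linarith⟩))
  rw [hN] at hc
  simp only [Vc.Sg, th_self one_pos] at hc
  have h2 : ((N.ss + N.sr + N.sl + N.rr + N.rl + N.ll : ℕ) : ℝ) < 6 := by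
    push_cast
    nlinarith
  have h3 : N.ss + N.sr + N.sl + N.rr + N.rl + N.ll < 6 := by exact_mod_cast h2
  omega

theorem three_le {r s : ℝ} (s0 : 0 < s) (sr : s < r) {N : Vc}
    (hN : N.Sg r s r 1 = 2 * Real.pi) : 3 ≤ N.ss + N.sr + N.sl + N.rr + N.rl + N.ll := by
  have hpi := Real.pi_pos
  have r0 : 0 < r := by linarith
  have q1 := th_lt_pi r0 s0 s0
  have q2 := th_lt_pi r0 s0 r0
  have q3 := th_lt_pi r0 s0 one_pos
  have q4 := th_lt_pi r0 r0 r0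
  have q5 := th_lt_pi r0 r0 one_pos
  have q6 := th_lt_pi r0 one_pos one_pos
  have l1 := term_le (k := N.ss) fun _ => q1.le
  have l2 := term_le (k := N.sr) fun _ => q2.le
  have l3 := term_le (k := N.sl) fun _ => q3.le
  have l4 := term_le (k := N.rr) fun _ => q4.le
  have l5 := term_le (k := N.rl) fun _ => q5.le
  have l6 := term_le (k := N.ll) fun _ => q6.le
  have key : 2 * Real.pi < N.ss * Real.pi + N.sr * Real.pi + N.sl * Real.pi
        + N.rr * Real.pi + N.rl * Real.pi + N.ll * Real.pi := by
    unfold Vc.Sg at hN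
    have : 0 < N.ss ∨ 0 < N.sr ∨ 0 < N.sl ∨ 0 < N.rr ∨ 0 < N.rl ∨ 0 < N.ll := by
      by_contra hcon
      have e : N.ss = 0 ∧ N.sr = 0 ∧ N.sl = 0 ∧ N.rr = 0 ∧ N.rl = 0 ∧ N.ll = 0 := by omega
      obtain ⟨e1, e2, e3, e4, e5, e6⟩ := e
      simp [e1, e2, e3, e4, e5, e6] at hN
    rw [← hN]
    rcases this with h | h | h | h | h | h
    · have := term_lt h q1; linarith
    · have := term_lt h q2; linarith
    · have := term_lt h q3; linarith
    · have := term_lt h q4; linarith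
    · have := term_lt h q5; linarith
    · have := term_lt h q6; linarith
  have h2 : ((2 : ℕ) : ℝ) < ((N.ss + N.sr + N.sl + N.rr + N.rl + N.ll : ℕ) : ℝ) := by
    push_cast
    nlinarith
  have h3 : 2 < N.ss + N.sr + N.sl + N.rr + N.rl + N.ll := by exact_mod_cast h2
  omega

/-! ### Uniqueness of the radii given the vectors -/

def Base (p : ℝ × ℝ) : Prop := 0 < p.2 ∧ p.2 < p.1 ∧ p.1 < 1

def Vc.atS (A : Vc) (p : ℝ × ℝ) : Prop := A.Sg p.2 p.2 p.1 1 = 2 * Real.pi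
def Vc.atR (A : Vc) (p : ℝ × ℝ) : Prop := A.Sg p.1 p.2 p.1 1 = 2 * Real.pi

/-- an `s`-corona without large disks determines `r / s` -/
theorem uniq_ratio {A : Vc} {p q : ℝ × ℝ} (hp : Base p) (hq : Base q) (h1 : A.atS p)
    (h2 : A.atS q) (hR : A.hasR) (hL : ¬ A.hasL) : ¬ p.1 * q.2 < q.1 * p.2 := by
  intro hlt
  have p0 : 0 < p.1 := hp.1.trans hp.2.1
  have q0 : 0 < q.1 := hq.1.trans hq.2.1
  have := (Sg_cmp A hp.1 hp.1 p0 one_pos hq.1 hq.1 q0 one_pos (by intros; linarith)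
    (by intros; linarith) (fun h => absurd h hL)).2 (Or.inr (Or.inl ⟨hR, hlt⟩))
  unfold Vc.atS at h1 h2
  linarith

/-- an `s`-corona without medium disks determines `s` -/
theorem uniq_s {A : Vc} {p q : ℝ × ℝ} (hp : Base p) (hq : Base q) (h1 : A.atS p)
    (h2 : A.atS q) (hR : ¬ A.hasR) (hL : A.hasL) : ¬ q.2 < p.2 := by
  intro hlt
  have p0 : 0 < p.1 := hp.1.trans hp.2.1
  have q0 : 0 < q.1 := hq.1.trans hq.2.1
  have := (Sg_cmp A hp.1 hp.1 p0 one_pos hq.1 hq.1 q0 one_pos (by intros; linarith)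
    (fun h => absurd h hR) (by intros; linarith)).2 (Or.inr (Or.inr ⟨hL, by linarith⟩))
  unfold Vc.atS at h1 h2
  linarith

/-- with the ratio fixed, a corona with large disks determines the size -/
theorem uniq_scale {A : Vc} {p q : ℝ × ℝ} (hp : Base p) (hq : Base q) (h1 : A.atS p)
    (h2 : A.atS q) (hL : A.hasL) (he : p.1 * q.2 = q.1 * p.2) : ¬ q.2 < p.2 := by
  intro hlt
  have p0 : 0 < p.1 := hp.1.trans hp.2.1
  have q0 : 0 < q.1 := hq.1.trans hq.2.1
  have := (Sg_cmp A hp.1 hp.1 p0 one_pos hq.1 hq.1 q0 one_pos (by intros; linarith)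
    (by intros; linarith) (by intros; linarith)).2 (Or.inr (Or.inr ⟨hL, by linarith⟩))
  unfold Vc.atS at h1 h2
  linarith

theorem uniq_scaleR {A : Vc} {p q : ℝ × ℝ} (hp : Base p) (hq : Base q) (h1 : A.atR p)
    (h2 : A.atR q) (hL : A.hasL) (he : ¬ A.hasS ∨ p.1 * q.2 = q.1 * p.2) : ¬ q.1 < p.1 := by
  intro hlt
  have p0 : 0 < p.1 := hp.1.trans hp.2.1
  have q0 : 0 < q.1 := hq.1.trans hq.2.1
  have := (Sg_cmp A p0 hp.1 p0 one_pos q0 hq.1 q0 one_pos (by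
      intro h
      rcases he with he | he
      · exact absurd h he
      · linarith)
    (by intros; linarith) (by intros; linarith)).2 (Or.inr (Or.inr ⟨hL, by linarith⟩))
  unfold Vc.atR at h1 h2
  linarith

/-- mixed case -/
theorem uniq_mixed {A N : Vc} {p q : ℝ × ℝ} (hp : Base p) (hq : Base q) (h1 : A.atS p)
    (h2 : A.atS q) (hR : A.hasR) (h3 : N.atR p) (h4 : N.atR q) (hS : N.hasS) :
    ¬ p.1 * q.2 < q.1 * p.2 := by
  intro hlt
  have p0 : 0 < p.1 := hp.1.trans hp.2.1
  have q0 : 0 < q.1 := hq.1.trans hq.2.1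
  unfold Vc.atS at h1 h2
  unfold Vc.atR at h3 h4
  rcases le_or_gt q.2 p.2 with h | h
  · have := (Sg_cmp A hp.1 hp.1 p0 one_pos hq.1 hq.1 q0 one_pos (by intros; linarith)
      (by intros; linarith) (by intros; linarith)).2 (Or.inr (Or.inl ⟨hR, hlt⟩))
    linarith
  · have h5 : p.1 < q.1 := by
      by_contra hcon
      push Not at hcon
      have e1 : q.1 * p.2 ≤ p.1 * p.2 := mul_le_mul_of_nonneg_right hcon hp.1.le
      have e2 : p.1 * p.2 < p.1 * q.2 := mul_lt_mul_of_pos_left h p0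
      linarith
    have := (Sg_cmp N q0 hq.1 q0 one_pos p0 hp.1 p0 one_pos (by intros; linarith)
      (by intros; linarith) (by intros; linarith)).2 (Or.inl ⟨hS, by linarith⟩)
    linarith

theorem eq_of {p q : ℝ × ℝ} (hp : Base p) (hq : Base q) (h : p.1 * q.2 = q.1 * p.2)
    (h' : p.2 = q.2 ∨ p.1 = q.1) : p = q := by
  have p0 : 0 < p.1 := hp.1.trans hp.2.1
  have q0 : 0 < q.1 := hq.1.trans hq.2.1
  rcases h' with h' | h'
  · rw [h'] at h
    exact Prod.ext (mul_right_cancel₀ hq.1.ne' h) h'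
  · rw [h'] at h
    exact Prod.ext h' (mul_left_cancel₀ q0.ne' h).symm

def Rel1 (k : Vc × Vc) (p : ℝ × ℝ) : Prop :=
  Base p ∧ k.1.atS p ∧ k.2.atR p ∧ k.1.hasR ∧ k.1.hasL ∧ k.2.hasS

def Rel2 (k : Vc × Vc) (p : ℝ × ℝ) : Prop :=
  Base p ∧ k.1.atS p ∧ k.2.atS p ∧ k.1.hasR ∧ ¬ k.1.hasL ∧ ¬ k.2.hasR ∧ k.2.hasL

def Rel3 (k : Vc × Vc) (p : ℝ × ℝ) : Prop :=
  Base p ∧ k.1.atS p ∧ k.2.atR p ∧ k.1.hasR ∧ ¬ k.1.hasL ∧ k.2.hasL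

def Rel4 (k : Vc × Vc) (p : ℝ × ℝ) : Prop :=
  Base p ∧ k.1.atS p ∧ k.2.atR p ∧ ¬ k.1.hasR ∧ k.1.hasL ∧ ¬ k.2.hasS ∧ k.2.hasL

theorem rel1_uniq (k : Vc × Vc) : {p | Rel1 k p}.Subsingleton := by
  rintro p ⟨bp, a1, a2, a3, a4, a5⟩ q ⟨bq, b1, b2, -⟩
  have e : p.1 * q.2 = q.1 * p.2 :=
    le_antisymm (not_lt.1 (uniq_mixed bq bp b1 a1 a3 b2 a2 a5))
      (not_lt.1 (uniq_mixed bp bq a1 b1 a3 a2 b2 a5))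
  exact eq_of bp bq e (Or.inl (le_antisymm (not_lt.1 (uniq_scale bp bq a1 b1 a4 e))
    (not_lt.1 (uniq_scale bq bp b1 a1 a4 e.symm))))

theorem rel2_uniq (k : Vc × Vc) : {p | Rel2 k p}.Subsingleton := by
  rintro p ⟨bp, a1, a2, a3, a4, a5, a6⟩ q ⟨bq, b1, b2, -⟩
  have e : p.1 * q.2 = q.1 * p.2 :=
    le_antisymm (not_lt.1 (uniq_ratio bq bp b1 a1 a3 a4))
      (not_lt.1 (uniq_ratio bp bq a1 b1 a3 a4))
  exact eq_of bp bq e (Or.inl (le_antisymm (not_lt.1 (uniq_s bp bq a2 b2 a5 a6))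
    (not_lt.1 (uniq_s bq bp b2 a2 a5 a6))))

theorem rel3_uniq (k : Vc × Vc) : {p | Rel3 k p}.Subsingleton := by
  rintro p ⟨bp, a1, a2, a3, a4, a5⟩ q ⟨bq, b1, b2, -⟩
  have e : p.1 * q.2 = q.1 * p.2 :=
    le_antisymm (not_lt.1 (uniq_ratio bq bp b1 a1 a3 a4))
      (not_lt.1 (uniq_ratio bp bq a1 b1 a3 a4))
  exact eq_of bp bq e (Or.inr (le_antisymm (not_lt.1 (uniq_scaleR bp bq a2 b2 a5 (Or.inr e)))
    (not_lt.1 (uniq_scaleR bq bp b2 a2 a5 (Or.inr e.symm)))))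

theorem rel4_uniq (k : Vc × Vc) : {p | Rel4 k p}.Subsingleton := by
  rintro p ⟨bp, a1, a2, a3, a4, a5, a6⟩ q ⟨bq, b1, b2, -⟩
  exact Prod.ext (le_antisymm (not_lt.1 (uniq_scaleR bp bq a2 b2 a6 (Or.inl a5)))
    (not_lt.1 (uniq_scaleR bq bp b2 a2 a6 (Or.inl a5))))
    (le_antisymm (not_lt.1 (uniq_s bp bq a1 b1 a3 a4)) (not_lt.1 (uniq_s bq bp b1 a1 a3 a4)))

theorem count_rel {α : Type} (K : List α) (Rel : α → ℝ × ℝ → Prop)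
    (h : ∀ k, {p | Rel k p}.Subsingleton) :
    {p | ∃ k ∈ K, Rel k p}.Finite ∧ {p | ∃ k ∈ K, Rel k p}.ncard ≤ K.length := by
  induction K with
  | nil => simp
  | cons k K ih =>
    have e : {p | ∃ k' ∈ k :: K, Rel k' p} = {p | Rel k p} ∪ {p | ∃ k ∈ K, Rel k p} := by
      ext p
      simp
    rw [e]
    refine ⟨(h k).finite.union ih.1, (Set.ncard_union_le _ _).trans ?_⟩
    have hf : Finite ↑{p | Rel k p} := (h k).finite
    have := (Set.ncard_le_one_iff_subsingleton (s := {p | Rel k p})).2 (h k)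
    rw [List.length_cons]
    have := ih.2
    omega

/-! ### Enumeration -/

namespace Vc

def okB (N : Vc) : Bool :=
  Nat.beq ((N.sr + N.sl) % 2) 0 && Nat.beq ((N.sr + N.rl) % 2) 0 &&
  (!(Nat.beq (N.sr + N.sl) 0) || Nat.beq N.ss 0 || Nat.beq (N.rr + N.rl + N.ll) 0) &&
  (!(Nat.beq (N.sr + N.rl) 0) || Nat.beq N.rr 0 || Nat.beq (N.ss + N.sl + N.ll) 0) &&
  (!(Nat.beq (N.sl + N.rl) 0) || Nat.beq N.ll 0 || Nat.beq (N.ss + N.sr + N.rr) 0)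

def bS (N : Vc) : Bool := Nat.blt 0 (N.ss + N.sr + N.sl)
def bR (N : Vc) : Bool := Nat.blt 0 (N.sr + N.rr + N.rl)
def bL (N : Vc) : Bool := Nat.blt 0 (N.sl + N.rl + N.ll)

theorem blt_iff (a b : ℕ) : Nat.blt a b = true ↔ a < b := by
  simp [Nat.blt, Nat.ble_eq]

theorem bS_iff (N : Vc) : N.bS = true ↔ N.hasS := blt_iff _ _
theorem bR_iff (N : Vc) : N.bR = true ↔ N.hasR := blt_iff _ _
theorem bL_iff (N : Vc) : N.bL = true ↔ N.hasL := blt_iff _ _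

theorem okB_of {N : Vc} (h : N.ok) : N.okB = true := by
  unfold ok at h
  unfold okB
  simp only [Bool.and_eq_true, Bool.or_eq_true, Bool.not_eq_true', Nat.beq_eq,
    ← Bool.not_eq_true]
  omega

end Vc

def sTest (N : Vc) : Bool :=
  Nat.blt 12 (2 * N.ss + 3 * (N.sr + N.sl) + 6 * (N.rr + N.rl + N.ll)) && N.okB

/-- all candidate `s`-coronas -/
def SV : List Vc :=
  ((List.range 6).flatMap fun a => (List.range (6 - a)).flatMap fun b =>
    (List.range (6 - a - b)).flatMap fun c => (List.range (6 - a - b - c)).flatMap fun d =>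
    (List.range (6 - a - b - c - d)).flatMap fun e =>
    (List.range (6 - a - b - c - d - e)).map fun f => Vc.mk a b c d e f).filter sTest

theorem mem_SV {A : Vc} (h1 : A.ss + A.sr + A.sl + A.rr + A.rl + A.ll ≤ 5)
    (h2 : 12 < 2 * A.ss + 3 * (A.sr + A.sl) + 6 * (A.rr + A.rl + A.ll)) (h3 : A.ok) :
    A ∈ SV := by
  unfold SV
  rw [List.mem_filter]
  constructor
  · simp only [List.mem_flatMap, List.mem_map, List.mem_range]
    exact ⟨A.ss, by omega, A.sr, by omega, A.sl, by omega, A.rr, by omega, A.rl, by omega,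
      A.ll, by omega, rfl⟩
  · unfold sTest
    rw [Bool.and_eq_true, Vc.blt_iff]
    exact ⟨h2, Vc.okB_of h3⟩

def rTest (w : Cls) (N : Vc) : Bool :=
  Nat.blt (N.ss * w.u + (N.sr + N.sl) * w.v + (N.rr + N.rl + N.ll) * 2000) 12000 &&
  Nat.blt 2 (N.ss + N.sr + N.sl + N.rr + N.rl + N.ll) && N.okB

/-- all candidate `r`-coronas in a given class -/
def RV (w : Cls) : List Vc :=
  ((List.range 6).flatMap fun f => (List.range (6 - f)).flatMap fun e =>
    (List.range (6 - f - e)).flatMap fun d =>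
    ((List.range ((12000 - (d + e + f) * 2000) / w.v + 1)).filter
      fun b => Nat.beq ((b + e) % 2) 0).flatMap fun b =>
    ((List.range ((12000 - (d + e + f) * 2000 - b * w.v) / w.v + 1)).filter
      fun c => Nat.beq ((b + c) % 2) 0).flatMap fun c =>
    (List.range ((12000 - (d + e + f) * 2000 - b * w.v - c * w.v) / w.u + 1)).map fun a =>
      Vc.mk a b c d e f).filter (rTest w)

theorem mem_RV {w : Cls} (hu : 0 < w.u) (hv : 0 < w.v) {N : Vc}
    (h1 : N.ss * w.u + (N.sr + N.sl) * w.v + (N.rr + N.rl + N.ll) * 2000 < 12000)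
    (h2 : 3 ≤ N.ss + N.sr + N.sl + N.rr + N.rl + N.ll) (h3 : N.ok) : N ∈ RV w := by
  unfold RV
  rw [List.mem_filter]
  constructor
  · have p1 := h3.1
    have p2 := h3.2.1
    simp only [List.mem_flatMap, List.mem_map, List.mem_filter, List.mem_range, Nat.lt_succ_iff,
      Nat.beq_eq, Nat.le_div_iff_mul_le hu, Nat.le_div_iff_mul_le hv]
    rw [Nat.add_mul] at h1
    exact ⟨N.ll, by omega, N.rl, by omega, N.rr, by omega, N.sr, ⟨by omega, p2⟩, N.sl,
      ⟨by omega, p1⟩, N.ss, by omega, rfl⟩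
  · unfold rTest
    rw [Bool.and_eq_true, Bool.and_eq_true, Vc.blt_iff, Vc.blt_iff]
    exact ⟨⟨h1, h2⟩, Vc.okB_of h3⟩

/-- the first class whose test succeeds -/
def clsX (A : Vc) : ℕ :=
  match classes.find? (fun w => w.test A) with
  | some w => w.X
  | none => 0

def sMixed (w : Cls) : List Vc := SV.filter fun A => A.bR && A.bL && clsX A == w.X
def sMed (w : Cls) : List Vc := SV.filter fun A => A.bR && !A.bL && clsX A == w.X
def sMedAll : List Vc := SV.filter fun A => A.bR && !A.bL
def sLarge : List Vc := SV.filter fun A => !A.bR && A.bL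
def w0 : Cls := ⟨19, 2327, 2728, 1344, 1635⟩

def K1 : List (Vc × Vc) := classes.flatMap fun w => sMixed w ×ˢ ((RV w).filter Vc.bS)
def K2 : List (Vc × Vc) := sMedAll ×ˢ sLarge
def K3 : List (Vc × Vc) := classes.flatMap fun w =>
  sMed w ×ˢ ((RV w).filter fun N => N.bL && N.sl == 0)
def K4 : List (Vc × Vc) := sLarge ×ˢ ((RV w0).filter fun N => N.bL && !N.bS)

theorem K1_length : K1.length ≤ 11828 := by
  unfold K1
  rw [List.length_flatMap]
  simp only [List.length_product]
  decide +kernel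

theorem K2_length : K2.length ≤ 100 := by
  unfold K2
  rw [List.length_product]
  decide +kernel

theorem K3_length : K3.length ≤ 555 := by
  unfold K3
  rw [List.length_flatMap]
  simp only [List.length_product]
  decide +kernel

theorem K4_length : K4.length ≤ 150 := by
  unfold K4
  rw [List.length_product]
  decide +kernel

theorem classes_pos : ∀ w ∈ classes, 0 < w.u ∧ 0 < w.v := by
  intro w hw
  simp only [classes, List.mem_cons, List.not_mem_nil, or_false] at hw
  rcases hw with rfl | rfl | rfl | rfl | rfl <;> simp

theorem exists_class_aux :
    (SV.all fun A => !A.bR || classes.any fun w => w.test A && clsX A == w.X) = true := by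
  decide +kernel

theorem exists_class {A : Vc} (hA : A ∈ SV) (hR : A.hasR) :
    ∃ w ∈ classes, w.test A = true ∧ clsX A = w.X := by
  have h := List.all_eq_true.1 exists_class_aux A hA
  rw [Bool.or_eq_true] at h
  rcases h with h | h
  · rw [(Vc.bR_iff A).2 hR] at h
    simp at h
  · rw [List.any_eq_true] at h
    obtain ⟨w, hw, h⟩ := h
    rw [Bool.and_eq_true, beq_iff_eq] at h
    exact ⟨w, hw, h.1, h.2⟩

/-! ### The main case analysis -/

theorem covered {P : Set Disk} {p : ℝ × ℝ} (H : Hyp P p.1 p.2) :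
    (∃ k ∈ K1, Rel1 k p) ∨ (∃ k ∈ K2, Rel2 k p) ∨ (∃ k ∈ K3, Rel3 k p) ∨
      (∃ k ∈ K4, Rel4 k p) := by
  have hb : Base p := ⟨H.s0, H.sr, H.r1⟩
  have hs0 := H.s0
  have hsr := H.sr
  have hr1 := H.r1
  have memS : ∀ A : Vc, A.atS p → A.ok → A.hasR ∨ A.hasL → A ∈ SV := by
    intro A h1 h2 h3
    have := s_bounds hs0 hsr hr1 h1 h3
    exact mem_SV this.1 this.2 h2
  have bLf : ∀ A : Vc, ¬ A.hasL → A.bL = false := fun A h => by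
    rw [← Vc.bL_iff] at h; simpa using h
  have bRf : ∀ A : Vc, ¬ A.hasR → A.bR = false := fun A h => by
    rw [← Vc.bR_iff] at h; simpa using h
  have bSf : ∀ A : Vc, ¬ A.hasS → A.bS = false := fun A h => by
    rw [← Vc.bS_iff] at h; simpa using h
  by_cases hmix : ∃ d ∈ P, d.radius = p.2 ∧ (∃ e ∈ P, d.Tangent e ∧ e.radius = p.1) ∧
      (∃ e ∈ P, d.Tangent e ∧ e.radius = 1)
  · left
    obtain ⟨d, hd, hds, ⟨e, he, hte, her⟩, h1⟩ := hmix
    obtain ⟨A, A1, A2, A3, A4, A5, A6⟩ := H.vector hd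
    obtain ⟨N, N1, N2, N3, N4, N5, N6⟩ := H.vector he
    rw [hds] at A1
    rw [her] at N1
    have aR : A.hasR := A4.2 ⟨e, he, hte, her⟩
    have aL : A.hasL := A5.2 h1
    have nS : N.hasS := N3.2 ⟨d, hd, tangent_symm hte, hds⟩
    have aS := memS A A1 A2 (Or.inl aR)
    obtain ⟨w, hw, ht, hx⟩ := exists_class aS aR
    have hX := class_lt hs0 hsr hr1 A1 hw ht
    have nb := r_bounds hs0 hsr hr1 N1 (Or.inl nS) hw hX
    have nm := mem_RV (classes_pos w hw).1 (classes_pos w hw).2 nb (three_le hs0 hsr N1) N2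
    refine ⟨(A, N), ?_, hb, A1, N1, aR, aL, nS⟩
    unfold K1
    rw [List.mem_flatMap]
    refine ⟨w, hw, List.mem_product.2 ⟨?_, ?_⟩⟩
    · unfold sMixed
      rw [List.mem_filter]
      refine ⟨aS, ?_⟩
      simp [(Vc.bR_iff A).2 aR, (Vc.bL_iff A).2 aL, hx]
    · rw [List.mem_filter]
      exact ⟨nm, (Vc.bS_iff N).2 nS⟩
  right
  by_cases hr : ∃ d ∈ P, d.radius = p.2 ∧ ∃ e ∈ P, d.Tangent e ∧ e.radius = p.1
  · obtain ⟨d, hd, hds, hdr⟩ := hr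
    obtain ⟨A, A1, A2, A3, A4, A5, A6⟩ := H.vector hd
    rw [hds] at A1
    have aR : A.hasR := A4.2 hdr
    have aL : ¬ A.hasL := fun h => hmix ⟨d, hd, hds, hdr, A5.1 h⟩
    have aS := memS A A1 A2 (Or.inl aR)
    by_cases hl : ∃ d ∈ P, d.radius = p.2 ∧ ∃ e ∈ P, d.Tangent e ∧ e.radius = 1
    · left
      obtain ⟨d', hd', hds', hdl'⟩ := hl
      obtain ⟨B, B1, B2, B3, B4, B5, B6⟩ := H.vector hd'
      rw [hds'] at B1
      have bL : B.hasL := B5.2 hdl'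
      have bR : ¬ B.hasR := fun h => hmix ⟨d', hd', hds', B4.1 h, hdl'⟩
      have bS := memS B B1 B2 (Or.inr bL)
      refine ⟨(A, B), ?_, hb, A1, B1, aR, aL, bR, bL⟩
      unfold K2
      refine List.mem_product.2 ⟨?_, ?_⟩
      · unfold sMedAll
        rw [List.mem_filter]
        exact ⟨aS, by simp [(Vc.bR_iff A).2 aR, bLf A aL]⟩
      · unfold sLarge
        rw [List.mem_filter]
        exact ⟨bS, by simp [(Vc.bL_iff B).2 bL, bRf B bR]⟩
    · right; left
      obtain ⟨d1, hd1, hdr1⟩ := H.u1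
      obtain ⟨d2, hd2, e, he, td2, te, htan⟩ := exists_tangent_cut H.hC H.s0 H.low H.up
        {d | d.radius = 1} ⟨d1, hd1, hdr1⟩ ⟨d, hd, by
          simp only [Set.mem_ofPred_eq, hds]; intro h; linarith⟩
      have td2 : d2.radius = 1 := td2
      have te : ¬ e.radius = 1 := te
      have her : e.radius = p.1 := by
        rcases H.radius he with h | h | h
        · exact absurd h te
        · exact h
        · exact absurd ⟨e, he, h, d2, hd2, tangent_symm htan, td2⟩ hl
      obtain ⟨N, N1, N2, N3, N4, N5, N6⟩ := H.vector he
      rw [her] at N1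
      have nL : N.hasL := N5.2 ⟨d2, hd2, tangent_symm htan, td2⟩
      have nsl : N.sl = 0 := by
        by_contra hne
        obtain ⟨e1, he1, f1, hf1, t1, r1, r2⟩ := N6 (Nat.pos_of_ne_zero hne)
        exact hl ⟨e1, he1, r1, f1, hf1, t1, r2⟩
      obtain ⟨w, hw, ht, hx⟩ := exists_class aS aR
      have hX := class_lt hs0 hsr hr1 A1 hw ht
      have nb := r_bounds hs0 hsr hr1 N1 (Or.inr nL) hw hX
      have nm := mem_RV (classes_pos w hw).1 (classes_pos w hw).2 nb (three_le hs0 hsr N1) N2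
      refine ⟨(A, N), ?_, hb, A1, N1, aR, aL, nL⟩
      unfold K3
      rw [List.mem_flatMap]
      refine ⟨w, hw, List.mem_product.2 ⟨?_, ?_⟩⟩
      · unfold sMed
        rw [List.mem_filter]
        refine ⟨aS, ?_⟩
        simp [(Vc.bR_iff A).2 aR, bLf A aL, hx]
      · rw [List.mem_filter]
        exact ⟨nm, by simp [(Vc.bL_iff N).2 nL, nsl]⟩
  · right; right
    obtain ⟨d1, hd1, hdr1⟩ := H.u1
    obtain ⟨d2, hd2, hdr2⟩ := H.ur
    obtain ⟨d3, hd3, hdr3⟩ := H.us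
    -- a small disk touching a large one
    obtain ⟨d, hd, e, he, td, te, htan⟩ := exists_tangent_cut H.hC H.s0 H.low H.up
        {d | d.radius = p.2} ⟨d3, hd3, hdr3⟩ ⟨d1, hd1, by
          simp only [Set.mem_ofPred_eq, hdr1]; intro h; linarith⟩
    have td : d.radius = p.2 := td
    have te : ¬ e.radius = p.2 := te
    have her : e.radius = 1 := by
      rcases H.radius he with h | h | h
      · exact h
      · exact absurd ⟨d, hd, td, e, he, htan, h⟩ hr
      · exact absurd h te
    obtain ⟨B, B1, B2, B3, B4, B5, B6⟩ := H.vector hd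
    rw [td] at B1
    have bL : B.hasL := B5.2 ⟨e, he, htan, her⟩
    have bR : ¬ B.hasR := fun h => hr ⟨d, hd, td, B4.1 h⟩
    have bS := memS B B1 B2 (Or.inr bL)
    -- a medium disk touching a large one
    obtain ⟨d', hd', e', he', td', te', htan'⟩ := exists_tangent_cut H.hC H.s0 H.low H.up
        {d | d.radius = p.1} ⟨d2, hd2, hdr2⟩ ⟨d1, hd1, by
          simp only [Set.mem_ofPred_eq, hdr1]; intro h; linarith⟩
    have td' : d'.radius = p.1 := td'
    have te' : ¬ e'.radius = p.1 := te'
    have her' : e'.radius = 1 := by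
      rcases H.radius he' with h | h | h
      · exact h
      · exact absurd h te'
      · exact absurd ⟨e', he', h, d', hd', tangent_symm htan', td'⟩ hr
    obtain ⟨N, N1, N2, N3, N4, N5, N6⟩ := H.vector hd'
    rw [td'] at N1
    have nL : N.hasL := N5.2 ⟨e', he', htan', her'⟩
    have nS : ¬ N.hasS := by
      intro h
      obtain ⟨g, hg, tg, hgr⟩ := N3.1 h
      exact hr ⟨g, hg, hgr, d', hd', tangent_symm tg, td'⟩
    have nb := r_bounds' hs0 hsr hr1 N1 nS nL
    have nz : N.ss = 0 ∧ N.sr = 0 ∧ N.sl = 0 := by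
      unfold Vc.hasS at nS; omega
    have nm : N ∈ RV w0 := mem_RV (by simp [w0]) (by simp [w0]) (by
      rw [nz.1, nz.2.1, nz.2.2]; omega) (three_le hs0 hsr N1) N2
    refine ⟨(B, N), ?_, hb, B1, N1, bR, bL, nS, nL⟩
    unfold K4
    refine List.mem_product.2 ⟨?_, ?_⟩
    · unfold sLarge
      rw [List.mem_filter]
      exact ⟨bS, by simp [(Vc.bL_iff B).2 bL, bRf B bR]⟩
    · rw [List.mem_filter]
      exact ⟨nm, by simp [(Vc.bL_iff N).2 nL, bSf N nS]⟩

/-- there are at most 13617 pairs `(r, s)` with `0 < s < r < 1`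
allowing a compact packing by disks of radii `1`, `r` and `s` using all three radii. -/
theorem ternary_compact_ratios_bound :
    {p : ℝ × ℝ | 0 < p.2 ∧ p.2 < p.1 ∧ p.1 < 1 ∧
      ∃ P : Set Disk, IsCompactPacking P ∧ RadiiIn P {1, p.1, p.2} ∧
        UsesRadius P 1 ∧ UsesRadius P p.1 ∧ UsesRadius P p.2}.Finite ∧
    {p : ℝ × ℝ | 0 < p.2 ∧ p.2 < p.1 ∧ p.1 < 1 ∧
      ∃ P : Set Disk, IsCompactPacking P ∧ RadiiIn P {1, p.1, p.2} ∧
        UsesRadius P 1 ∧ UsesRadius P p.1 ∧ UsesRadius P p.2}.ncard ≤ 13617 := by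
  have c1 := count_rel K1 Rel1 rel1_uniq
  have c2 := count_rel K2 Rel2 rel2_uniq
  have c3 := count_rel K3 Rel3 rel3_uniq
  have c4 := count_rel K4 Rel4 rel4_uniq
  have l1 := K1_length
  have l2 := K2_length
  have l3 := K3_length
  have l4 := K4_length
  have hsub : {p : ℝ × ℝ | 0 < p.2 ∧ p.2 < p.1 ∧ p.1 < 1 ∧
      ∃ P : Set Disk, IsCompactPacking P ∧ RadiiIn P {1, p.1, p.2} ∧
        UsesRadius P 1 ∧ UsesRadius P p.1 ∧ UsesRadius P p.2} ⊆
      {p | ∃ k ∈ K1, Rel1 k p} ∪ ({p | ∃ k ∈ K2, Rel2 k p} ∪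
        ({p | ∃ k ∈ K3, Rel3 k p} ∪ {p | ∃ k ∈ K4, Rel4 k p})) := by
    rintro p ⟨h1, h2, h3, P, h4, h5, h6, h7, h8⟩
    exact covered (P := P) ⟨h1, h2, h3, h4, h5, h6, h7, h8⟩
  have hfin := c1.1.union (c2.1.union (c3.1.union c4.1))
  refine ⟨hfin.subset hsub, (Set.ncard_le_ncard hsub hfin).trans ?_⟩
  refine (Set.ncard_union_le _ _).trans ?_
  have e2 := Set.ncard_union_le {p | ∃ k ∈ K2, Rel2 k p}
    ({p | ∃ k ∈ K3, Rel3 k p} ∪ {p | ∃ k ∈ K4, Rel4 k p})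
  have e3 := Set.ncard_union_le {p | ∃ k ∈ K3, Rel3 k p} {p | ∃ k ∈ K4, Rel4 k p}
  have f1 := c1.2
  have f2 := c2.2
  have f3 := c3.2
  have f4 := c4.2
  omega
end

section
/- For every natural number n ≥ 1, the set of tuples (r₁, …, r_{n−1}) with 0 < r₁ < … < r_{n−1} < 1 such that there exists a compact packing of the Euclidean plane by disks of radii r₁, …, r_{n−1}, 1 in which all n radii are actually used is finite. -/
open Metric Set

section AbstractPart
open Real Filter Topology

/-- Half of the angle at the centre of a disk of curvature `x` seen between two mutually tangent
neighbours of curvatures `y` and `z`. -/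
noncomputable def ang (x y z : ℝ) : ℝ := arcsin (√(x / (x + y) * (x / (x + z))))

/-- The same half-angle in terms of radii. -/
noncomputable def angR (r a b : ℝ) : ℝ := arcsin (√(a / (r + a) * (b / (r + b))))

lemma angR_eq_ang {m x y z : ℝ} (hm : 0 < m) (hx : 0 < x) (hy : 0 < y) (hz : 0 < z) :
    angR x y z = ang (m / x) (m / y) (m / z) := by
  unfold angR ang
  have h1 : y / (x + y) = m / x / (m / x + m / y) := by
    rw [div_eq_div_iff (by positivity) (by positivity)]; field_simp; ring
  have h2 : z / (x + z) = m / x / (m / x + m / z) := by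
    rw [div_eq_div_iff (by positivity) (by positivity)]; field_simp; ring
  rw [h1, h2]

lemma frac_le_s3 {x y x' y' μ : ℝ} (hx : 0 < x) (hy : 0 ≤ y) (hx' : 0 < x') (hμ : 0 < μ)
    (h1 : x' = μ * x) (h2 : μ * y ≤ y') : x' / (x' + y') ≤ x / (x + y) := by
  have : 0 ≤ μ * y := by positivity
  rw [div_le_div_iff₀ (by linarith) (by linarith)]
  subst h1
  nlinarith

lemma frac_lt_s3 {x y x' y' μ : ℝ} (hx : 0 < x) (hy : 0 ≤ y) (hx' : 0 < x') (hμ : 0 < μ)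
    (h1 : x' = μ * x) (h2 : μ * y < y') : x' / (x' + y') < x / (x + y) := by
  have : 0 ≤ μ * y := by positivity
  rw [div_lt_div_iff₀ (by linarith) (by linarith)]
  subst h1
  nlinarith

lemma frac_le_one {x y : ℝ} (hx : 0 < x) (hy : 0 ≤ y) : x / (x + y) ≤ 1 := by
  rw [div_le_one (by linarith)]; linarith

lemma ang_le {x y z x' y' z' μ : ℝ} (hx : 0 < x) (hy : 0 ≤ y) (hz : 0 ≤ z) (hx' : 0 < x')
    (hμ : 0 < μ) (h1 : x' = μ * x) (h2 : μ * y ≤ y') (h3 : μ * z ≤ z') :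
    ang x' y' z' ≤ ang x y z := by
  have h2' : 0 ≤ y' := le_trans (by positivity) h2
  have h3' : 0 ≤ z' := le_trans (by positivity) h3
  unfold ang
  apply monotone_arcsin
  apply Real.sqrt_le_sqrt
  exact mul_le_mul (frac_le_s3 hx hy hx' hμ h1 h2) (frac_le_s3 hx hz hx' hμ h1 h3)
    (by positivity) (by positivity)

lemma ang_lt {x y z x' y' z' μ : ℝ} (hx : 0 < x) (hy : 0 ≤ y) (hz : 0 ≤ z) (hx' : 0 < x')
    (hμ : 0 < μ) (h1 : x' = μ * x) (h2 : μ * y ≤ y') (h3 : μ * z ≤ z')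
    (h4 : μ * y < y' ∨ μ * z < z') :
    ang x' y' z' < ang x y z := by
  have h2' : 0 ≤ y' := le_trans (by positivity) h2
  have h3' : 0 ≤ z' := le_trans (by positivity) h3
  unfold ang
  have hb : x / (x + y) * (x / (x + z)) ≤ 1 :=
    mul_le_one₀ (frac_le_one hx hy) (by positivity) (frac_le_one hx hz)
  apply arcsin_lt_arcsin
  · linarith [Real.sqrt_nonneg (x' / (x' + y') * (x' / (x' + z')))]
  · apply Real.sqrt_lt_sqrt (by positivity)
    rcases h4 with h4 | h4
    · exact mul_lt_mul (frac_lt_s3 hx hy hx' hμ h1 h4) (frac_le_s3 hx hz hx' hμ h1 h3)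
        (by positivity) (by positivity)
    · exact mul_lt_mul' (frac_le_s3 hx hy hx' hμ h1 h2) (frac_lt_s3 hx hz hx' hμ h1 h4)
        (by positivity) (by positivity)
  · exact Real.sqrt_le_one.2 hb

/-- `ang` is bounded below when all curvatures are at most one. -/
lemma ang_ge {x y z c : ℝ} (hc : 0 < c) (hx : c ≤ x) (hx1 : x ≤ 1) (hy : 0 ≤ y) (hy1 : y ≤ 1)
    (hz : 0 ≤ z) (hz1 : z ≤ 1) : c / 2 ≤ ang x y z := by
  have key : ∀ w, 0 ≤ w → w ≤ 1 → c / 2 ≤ x / (x + w) := by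
    intro w hw hw1
    rw [div_le_div_iff₀ (by norm_num) (by linarith)]
    nlinarith
  have hs : c / 2 ≤ √(x / (x + y) * (x / (x + z))) := by
    apply Real.le_sqrt_of_sq_le
    rw [sq]
    have hx0 : 0 < x := by linarith
    exact mul_le_mul (key y hy hy1) (key z hz hz1) (by positivity) (by positivity)
  have hx0 : 0 < x := by linarith
  have hb : √(x / (x + y) * (x / (x + z))) ≤ 1 := by
    apply Real.sqrt_le_one.2
    exact mul_le_one₀ (frac_le_one hx0 hy) (by positivity) (frac_le_one hx0 hz)
  unfold ang
  refine hs.trans ?_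
  have h0 := Real.sqrt_nonneg (x / (x + y) * (x / (x + z)))
  calc _ = sin (arcsin (√(x / (x + y) * (x / (x + z))))) :=
        (sin_arcsin (by linarith) hb).symm
    _ ≤ _ := sin_le (arcsin_nonneg.2 h0)

lemma tendsto_ang {X : Type*} {F : Filter X} {x y z : X → ℝ} {a b c : ℝ} (ha : 0 < a) (hb : 0 ≤ b)
    (hc : 0 ≤ c) (hx : Tendsto x F (𝓝 a)) (hy : Tendsto y F (𝓝 b)) (hz : Tendsto z F (𝓝 c)) :
    Tendsto (fun i => ang (x i) (y i) (z i)) F (𝓝 (ang a b c)) := by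
  unfold ang
  apply (continuous_arcsin.tendsto _).comp
  apply (Real.continuous_sqrt.tendsto _).comp
  exact (hx.div (hx.add hy) (by linarith)).mul (hx.div (hx.add hz) (by linarith))

/-- Combinatorial data extracted from a compact packing. -/
def Realizable {ι : Type*} [Fintype ι] (R : ι → ℝ) : Prop :=
  ∃ N : Set (ι × (ι × ι → ℕ)),
    (∀ q ∈ N, ∑ p : ι × ι, (q.2 p : ℝ) * angR (R q.1) (R p.1) (R p.2) = π) ∧
    (∀ S : Set ι, S.Nonempty →
      (∀ q ∈ N, q.1 ∈ S → ∀ p, q.2 p ≠ 0 → p.1 ∈ S ∧ p.2 ∈ S) → S = Set.univ)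

theorem realizable_finite {ι : Type*} [Fintype ι] (e : ι) :
    {R : ι → ℝ | (∀ i, 0 < R i) ∧ R e = 1 ∧ Realizable R}.Finite := by
  classical
  by_contra hinf
  set X := {R : ι → ℝ | (∀ i, 0 < R i) ∧ R e = 1 ∧ Realizable R} with hX
  have : Infinite X := Set.infinite_coe_iff.2 hinf
  let F : Ultrafilter X := hyperfilter X
  have : Nonempty ι := ⟨e⟩
  have hpos : ∀ (R : X) i, 0 < R.1 i := fun R => R.2.1
  choose N hN1 hN2 using fun R : X => R.2.2.2
  -- normalised curvatures
  have hmin : ∀ R : X, ∃ i, ∀ j, R.1 i ≤ R.1 j := fun R => Finite.exists_min R.1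
  choose i0 hi0 using hmin
  let x : X → ι → ℝ := fun R i => R.1 (i0 R) / R.1 i
  have hx0 : ∀ R i, 0 < x R i := fun R i => div_pos (hpos _ _) (hpos _ _)
  have hx1 : ∀ R i, x R i ≤ 1 := fun R i => (div_le_one (hpos _ _)).2 (hi0 _ _)
  have hlim : ∀ i, ∃ ξ ∈ Set.Icc (0:ℝ) 1, Tendsto (fun R => x R i) F (𝓝 ξ) := by
    intro i
    have := isCompact_Icc.ultrafilter_le_nhds (s := Set.Icc (0:ℝ) 1) (F.map (fun R => x R i)) ?_
    · exact this
    · rw [le_principal_iff]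
      exact Filter.mem_map.2 (Filter.Eventually.of_forall fun R : X => ⟨(hx0 R i).le, hx1 R i⟩)
  choose ξ hξI hξ using hlim
  have hξ0 : ∀ i, 0 ≤ ξ i := fun i => (hξI i).1
  -- some index has positive limit
  obtain ⟨k0, hk0⟩ : ∃ i, 0 < ξ i := by
    have : ∀ᶠ R in (F : Filter X), ∃ i, x R i = 1 :=
      Eventually.of_forall fun R => ⟨i0 R, div_self (hpos _ _).ne'⟩
    obtain ⟨i, hi⟩ := Ultrafilter.eventually_exists_iff.1 this
    refine ⟨i, ?_⟩
    have h1 : Tendsto (fun R => x R i) F (𝓝 1) :=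
      (tendsto_congr' hi).2 tendsto_const_nhds
    rw [tendsto_nhds_unique (hξ i) h1]; exact one_pos
  have hsum : ∀ R, ∀ q ∈ N R, ∑ p : ι × ι, (q.2 p : ℝ) * ang (x R q.1) (x R p.1) (x R p.2) = π := by
    intro R q hq
    rw [← hN1 R q hq]
    refine Finset.sum_congr rfl fun p _ => ?_
    rw [angR_eq_ang (hpos R (i0 R)) (hpos _ _) (hpos _ _) (hpos _ _)]
  -- uniform bound on coronas of small disks
  obtain ⟨B, hB⟩ : ∃ B : ℕ, ∀ᶠ R in (F : Filter X), ∀ q ∈ N R, 0 < ξ q.1 → ∀ p, q.2 p ≤ B := by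
    have hi : ∀ i, ∃ B : ℕ, 0 < ξ i → ∀ᶠ R in (F : Filter X), ∀ q ∈ N R, q.1 = i → ∀ p, q.2 p ≤ B := by
      intro i
      by_cases h : 0 < ξ i
      swap
      · exact ⟨0, fun h' => absurd h' h⟩
      obtain ⟨B, hB⟩ := exists_nat_ge (4 * π / ξ i)
      refine ⟨B, fun _ => ?_⟩
      have : ∀ᶠ R in (F : Filter X), ξ i / 2 < x R i := (hξ i).eventually (lt_mem_nhds (by linarith))
      filter_upwards [this] with R hR q hq hqi p
      have hs := hsum R q hq
      have hge : ∀ p' : ι × ι, ξ i / 4 ≤ ang (x R q.1) (x R p'.1) (x R p'.2) := by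
        intro p'
        have := ang_ge (c := ξ i / 2) (x := x R q.1) (y := x R p'.1) (z := x R p'.2) (by linarith)
          (by rw [hqi]; exact hR.le) (hx1 _ _) (hx0 _ _).le (hx1 _ _) (hx0 _ _).le (hx1 _ _)
        linarith
      have h1 : (q.2 p : ℝ) * (ξ i / 4) ≤ π := by
        rw [← hs]
        refine le_trans ?_ (Finset.single_le_sum (f := fun p : ι × ι =>
          (q.2 p : ℝ) * ang (x R q.1) (x R p.1) (x R p.2)) (fun p' _ => ?_) (Finset.mem_univ p))
        · exact mul_le_mul_of_nonneg_left (hge p) (Nat.cast_nonneg _)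
        · exact mul_nonneg (Nat.cast_nonneg _) (le_trans (by linarith) (hge p'))
      have h2 : (q.2 p : ℝ) ≤ 4 * π / ξ i := by
        rw [le_div_iff₀ h]; linarith
      exact_mod_cast h2.trans hB
    choose Bi hBi using hi
    refine ⟨Finset.univ.sup Bi, ?_⟩
    have : ∀ᶠ R in (F : Filter X), ∀ i, 0 < ξ i → ∀ q ∈ N R, q.1 = i → ∀ p, q.2 p ≤ Bi i := by
      rw [eventually_all]
      intro i
      by_cases h : 0 < ξ i
      · filter_upwards [hBi i h] with R hR _ using hR
      · exact Eventually.of_forall fun R h' => absurd h' h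
    filter_upwards [this] with R hR q hq hq0 p
    exact (hR q.1 hq0 q hq rfl p).trans (Finset.le_sup (f := Bi) (Finset.mem_univ _))
  -- the corona set stabilises
  let G : Set (ι × (ι × ι → ℕ)) := {q | ∀ p, q.2 p ≤ B}
  have hG : G.Finite := by
    refine (Set.finite_univ.prod (Set.Finite.pi' fun _ : ι × ι => Set.finite_Iic B)).subset ?_
    intro q hq
    exact ⟨trivial, hq⟩
  let M : X → Set (ι × (ι × ι → ℕ)) := fun R => {q ∈ N R | 0 < ξ q.1}
  obtain ⟨M0, hM0⟩ : ∃ M0, ∀ᶠ R in (F : Filter X), M R = M0 := by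
    have h : ∀ᶠ R in (F : Filter X), ∃ M0 ∈ 𝒫 G, M R = M0 := by
      filter_upwards [hB] with R hR
      exact ⟨_, fun q hq => hR q hq.1 hq.2, rfl⟩
    obtain ⟨M0, -, h⟩ := (Ultrafilter.eventually_exists_mem_iff hG.finite_subsets).1 h
    exact ⟨M0, h⟩
  -- limit equations
  have hM0sum : ∀ q ∈ M0, ∑ p : ι × ι, (q.2 p : ℝ) * ang (ξ q.1) (ξ p.1) (ξ p.2) = π := by
    intro q hq
    obtain ⟨R, hR⟩ := hM0.exists
    have hq0 : 0 < ξ q.1 := by rw [← hR] at hq; exact hq.2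
    have h1 : Tendsto (fun R => ∑ p : ι × ι, (q.2 p : ℝ) * ang (x R q.1) (x R p.1) (x R p.2)) F
        (𝓝 (∑ p : ι × ι, (q.2 p : ℝ) * ang (ξ q.1) (ξ p.1) (ξ p.2))) := by
      refine tendsto_finsetSum _ fun p _ => ?_
      exact (tendsto_ang hq0 (hξ0 _) (hξ0 _) (hξ _) (hξ _) (hξ _)).const_mul _
    have h2 : Tendsto (fun R => ∑ p : ι × ι, (q.2 p : ℝ) * ang (x R q.1) (x R p.1) (x R p.2)) F
        (𝓝 π) := by
      refine (tendsto_congr' ?_).2 tendsto_const_nhds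
      filter_upwards [hM0] with R hR
      rw [← hR] at hq
      exact hsum R q hq.1
    exact tendsto_nhds_unique h1 h2
  -- maximum principle
  have hfix : ∀ R, M R = M0 → ∀ i, R.1 i = ξ e / ξ i := by
    intro R hR
    obtain ⟨k, hk, hkmin⟩ : ∃ k, 0 < ξ k ∧ ∀ j, 0 < ξ j → x R k / ξ k ≤ x R j / ξ j := by
      obtain ⟨k, hk, hk2⟩ := Finset.exists_min_image (Finset.univ.filter fun i => 0 < ξ i)
        (fun i => x R i / ξ i) ⟨k0, by simp [hk0]⟩
      exact ⟨k, by simpa using hk, fun j hj => hk2 j (by simpa using hj)⟩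
    set μ := x R k / ξ k with hμ
    have hμ0 : 0 < μ := div_pos (hx0 _ _) hk
    have hle : ∀ j, μ * ξ j ≤ x R j := by
      intro j
      rcases (hξ0 j).eq_or_lt with h | h
      · rw [← h, mul_zero]; exact (hx0 _ _).le
      · exact (le_div_iff₀ h).1 (hkmin j h)
    have hS := hN2 R {i | x R i = μ * ξ i} ⟨k, by
      show x R k = μ * ξ k
      rw [hμ]; field_simp⟩ ?_
    · have hall : ∀ i, x R i = μ * ξ i := fun i => by
        have : i ∈ {i | x R i = μ * ξ i} := by rw [hS]; trivial
        exact this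
      intro i
      have hξi : 0 < ξ i := by
        by_contra h
        have : ξ i = 0 := le_antisymm (not_lt.1 h) (hξ0 i)
        have h2 := hall i
        rw [this, mul_zero] at h2
        exact (hx0 R i).ne' h2
      have h1 := hall i
      have h2 := hall e
      have he : R.1 e = 1 := R.2.2.1
      simp only [x, he, div_one] at h1 h2
      rw [h2, div_eq_iff (hpos R i).ne'] at h1
      rw [eq_div_iff hξi.ne']
      have : μ * (ξ e) = μ * (R.1 i * ξ i) := by linarith
      exact (mul_left_cancel₀ hμ0.ne' this).symm
    · intro q hq hqS p hp
      have hqS' : x R q.1 = μ * ξ q.1 := hqS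
      have hq0 : 0 < ξ q.1 := by
        have := hx0 R q.1
        rw [hqS'] at this
        exact pos_of_mul_pos_right this hμ0.le
      have hqM : q ∈ M0 := by rw [← hR]; exact ⟨hq, hq0⟩
      by_contra hcon
      have hlt : ∑ p : ι × ι, (q.2 p : ℝ) * ang (x R q.1) (x R p.1) (x R p.2)
          < ∑ p : ι × ι, (q.2 p : ℝ) * ang (ξ q.1) (ξ p.1) (ξ p.2) := by
        refine Finset.sum_lt_sum (fun p' _ => ?_) ⟨p, Finset.mem_univ _, ?_⟩
        · exact mul_le_mul_of_nonneg_left (ang_le hq0 (hξ0 _) (hξ0 _) (hx0 _ _) hμ0 hqS'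
            (hle _) (hle _)) (Nat.cast_nonneg _)
        · refine mul_lt_mul_of_pos_left (ang_lt hq0 (hξ0 _) (hξ0 _) (hx0 _ _) hμ0 hqS'
            (hle _) (hle _) ?_) (by exact_mod_cast Nat.pos_of_ne_zero hp)
          by_contra h
          rw [not_or, not_lt, not_lt] at h
          exact hcon ⟨le_antisymm h.1 (hle _), le_antisymm h.2 (hle _)⟩
      rw [hsum R q hq, hM0sum q hqM] at hlt
      exact lt_irrefl _ hlt
  have hfin : {R : X | M R = M0}.Finite := by
    refine Set.Subsingleton.finite fun R hR R' hR' => ?_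
    apply Subtype.ext
    funext i
    rw [hfix R hR i, hfix R' hR' i]
  exact notMem_hyperfilter_of_finite hfin hM0

end AbstractPart

noncomputable section

section GeometryPart
open Filter Topology

lemma sep {P : Set Disk} (hP : IsPacking P) {d d' : Disk} (hd : d ∈ P) (hd' : d' ∈ P)
    (h : d ≠ d') : d.radius + d'.radius ≤ dist d.center d'.center := by
  have := hP d hd d' hd' h
  unfold Disk.set at this
  rw [interior_closedBall _ d.radius_pos.ne', interior_closedBall _ d'.radius_pos.ne'] at this
  exact (disjoint_ball_ball_iff d.radius_pos d'.radius_pos).1 this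

/-- Packings with radii in `[ρ, 1]`. -/
structure Good (P : Set Disk) (ρ : ℝ) : Prop where
  pack : IsPacking P
  pos : 0 < ρ
  lb : ∀ d ∈ P, ρ ≤ d.radius
  ub : ∀ d ∈ P, d.radius ≤ 1

lemma Good.mono {P Q : Set Disk} {ρ : ℝ} (h : Good P ρ) (hQ : Q ⊆ P) : Good Q ρ where
  pack := fun d hd d' hd' => h.pack d (hQ hd) d' (hQ hd')
  pos := h.pos
  lb := fun d hd => h.lb d (hQ hd)
  ub := fun d hd => h.ub d (hQ hd)

lemma Good.center_inj {P : Set Disk} {ρ : ℝ} (h : Good P ρ) : Set.InjOn Disk.center P := by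
  intro d hd d' hd' he
  by_contra hne
  have := sep h.pack hd hd' hne
  rw [he, dist_self] at this
  linarith [d.radius_pos, d'.radius_pos]

lemma Good.finite_near {P : Set Disk} {ρ : ℝ} (h : Good P ρ) (x : Plane) (K : ℝ) :
    {d ∈ P | dist d.center x ≤ K}.Finite := by
  have htb : TotallyBounded (closedBall x K) := (isCompact_closedBall x K).totallyBounded
  obtain ⟨t, ht, hcov⟩ := Metric.totallyBounded_iff.1 htb ρ h.pos
  have hch : ∀ d ∈ {d ∈ P | dist d.center x ≤ K}, ∃ y ∈ t, d.center ∈ ball y ρ := by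
    intro d hd
    have := hcov (show d.center ∈ closedBall x K from hd.2)
    simpa using this
  choose! f hft hfb using hch
  refine Set.Finite.of_finite_image (f := f) (ht.subset ?_) ?_
  · rintro _ ⟨d, hd, rfl⟩
    exact hft d hd
  · intro d hd d' hd' he
    by_contra hne
    have h1 := sep h.pack hd.1 hd'.1 hne
    have h2 := hfb d hd
    have h3 := hfb d' hd'
    rw [← he] at h3
    rw [mem_ball] at h2 h3
    have h4 := dist_triangle_right d.center d'.center (f d)
    linarith [h.lb d hd.1, h.lb d' hd'.1]

lemma Good.isClosed {P : Set Disk} {ρ : ℝ} (h : Good P ρ) : IsClosed (packingUnion P) := by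
  unfold packingUnion
  rw [Set.biUnion_eq_iUnion]
  refine LocallyFinite.isClosed_iUnion ?_ (fun d => isClosed_closedBall)
  intro x
  refine ⟨ball x 1, ball_mem_nhds x one_pos, ?_⟩
  have := h.finite_near x 2
  refine Set.Finite.of_finite_image (f := Subtype.val) (this.subset ?_) Subtype.val_injective.injOn
  rintro _ ⟨d, ⟨y, hy1, hy2⟩, rfl⟩
  refine ⟨d.2, ?_⟩
  have h1 : dist y d.1.center ≤ d.1.radius := hy1
  have h2 : dist y x < 1 := hy2
  have := dist_triangle_left d.1.center x y
  linarith [h.ub d.1 d.2]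

lemma Good.countable {P : Set Disk} {ρ : ℝ} (h : Good P ρ) : P.Countable := by
  refine Set.PairwiseDisjoint.countable_of_isOpen (s := fun d : Disk => interior d.set) ?_ ?_ ?_
  · intro d hd d' hd' hne
    exact h.pack d hd d' hd' hne
  · intro d _
    exact isOpen_interior
  · intro d _
    refine ⟨d.center, ?_⟩
    unfold Disk.set
    rw [interior_closedBall _ d.radius_pos.ne']
    exact mem_ball_self d.radius_pos

/-- Power of a point with respect to a disk. -/
def pw (d : Disk) (x : Plane) : ℝ := ‖x - d.center‖ ^ 2 - d.radius ^ 2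

lemma mem_set_iff {d : Disk} {x : Plane} : x ∈ d.set ↔ pw d x ≤ 0 := by
  unfold pw Disk.set
  rw [mem_closedBall, dist_eq_norm, sub_nonpos, sq_le_sq₀ (norm_nonneg _) d.radius_pos.le]

lemma notMem_set_iff {d : Disk} {x : Plane} : x ∉ d.set ↔ 0 < pw d x := by
  rw [mem_set_iff, not_le]

lemma pw_nonneg {P : Set Disk} (hP : IsPacking P) {d a : Disk} (hd : d ∈ P) (ha : a ∈ P)
    (h : d ≠ a) {x : Plane} (hx : x ∈ d.set) : 0 ≤ pw a x := by
  have h1 := sep hP hd ha h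
  have h2 : dist x d.center ≤ d.radius := hx
  have h3 := dist_triangle_left d.center a.center x
  have h4 : a.radius ≤ ‖x - a.center‖ := by rw [← dist_eq_norm]; linarith
  unfold pw
  nlinarith [a.radius_pos]

lemma pw_line (d : Disk) (o v : Plane) (s : ℝ) :
    pw d (o + s • v) = pw d o + 2 * s * inner ℝ v (o - d.center) + s ^ 2 * ‖v‖ ^ 2 := by
  unfold pw
  have : o + s • v - d.center = (o - d.center) + s • v := by abel
  rw [this, norm_add_sq_real, norm_smul, inner_smul_right, real_inner_comm, mul_pow,
    Real.norm_eq_abs, sq_abs]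
  ring

/-- The radical centre (incenter) of three mutually tangent disks. -/
def inc (d a b : Disk) : Plane :=
  d.center + (1 / (2 * (d.radius + a.radius + b.radius))) •
    ((d.radius + b.radius) • (a.center - d.center) + (d.radius + a.radius) • (b.center - d.center))

lemma inc_inner {d a b : Disk} (h1 : d.Tangent a) (h2 : d.Tangent b) (h3 : a.Tangent b) :
    inner ℝ (inc d a b - d.center) (a.center - d.center) = d.radius * (d.radius + a.radius) ∧
    inner ℝ (inc d a b - d.center) (b.center - d.center) = d.radius * (d.radius + b.radius) ∧
    ‖inc d a b - d.center‖ ^ 2 = d.radius * (d.radius + a.radius) * (d.radius + b.radius) /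
      (d.radius + a.radius + b.radius) := by
  have hr := d.radius_pos
  have ha := a.radius_pos
  have hb := b.radius_pos
  unfold Disk.Tangent at h1 h2 h3
  rw [dist_comm, dist_eq_norm] at h1 h2
  rw [dist_eq_norm] at h3
  set r := d.radius
  set s := a.radius
  set t := b.radius
  set u := a.center - d.center
  set v := b.center - d.center
  have huv : a.center - b.center = u - v := by simp [u, v]
  rw [huv] at h3
  have e : inc d a b - d.center = (1 / (2 * (r + s + t))) • ((r + t) • u + (r + s) • v) := by
    simp [inc, r, s, t, u, v]
  have hi : inner ℝ u v = r ^ 2 + r * s + r * t - s * t := by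
    have := norm_sub_sq_real u v
    rw [h1, h2, h3] at this
    linarith
  have hσ : r + s + t ≠ 0 := by positivity
  rw [e]
  refine ⟨?_, ?_, ?_⟩
  · rw [inner_smul_left, inner_add_left, inner_smul_left, inner_smul_left, real_inner_self_eq_norm_sq,
      real_inner_comm u v, hi, h1]
    simp only [conj_trivial]
    field_simp
    ring
  · rw [inner_smul_left, inner_add_left, inner_smul_left, inner_smul_left, real_inner_self_eq_norm_sq,
      hi, h2]
    simp only [conj_trivial]
    field_simp
    ring
  · rw [norm_smul, mul_pow, norm_add_sq_real, norm_smul, norm_smul, mul_pow, mul_pow,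
      inner_smul_left, inner_smul_right, hi, h1, h2]
    simp only [conj_trivial, Real.norm_eq_abs, sq_abs]
    field_simp
    ring

lemma pw_inc {d a b : Disk} (h1 : d.Tangent a) (h2 : d.Tangent b) (h3 : a.Tangent b) :
    0 < pw d (inc d a b) ∧ pw a (inc d a b) = pw d (inc d a b) ∧
      pw b (inc d a b) = pw d (inc d a b) := by
  have hr := d.radius_pos
  have ha := a.radius_pos
  have hb := b.radius_pos
  obtain ⟨e1, e2, e3⟩ := inc_inner h1 h2 h3
  unfold Disk.Tangent at h1 h2
  rw [dist_comm, dist_eq_norm] at h1 h2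
  have key : ∀ c : Disk, inner ℝ (inc d a b - d.center) (c.center - d.center)
      = d.radius * (d.radius + c.radius) → ‖c.center - d.center‖ = d.radius + c.radius →
      pw c (inc d a b) = pw d (inc d a b) := by
    intro c hc hc'
    unfold pw
    have : inc d a b - c.center = (inc d a b - d.center) - (c.center - d.center) := by abel
    rw [this, norm_sub_sq_real, hc, hc']
    ring
  refine ⟨?_, key a e1 h1, key b e2 h2⟩
  unfold pw
  rw [e3, sub_pos, lt_div_iff₀ (by positivity)]
  have := mul_pos (mul_pos hr ha) hb
  nlinarith

/-- A gap of the packing `P`, with its three disks. -/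
structure Gap (P : Set Disk) (C : Set Plane) (d a b : Disk) : Prop where
  ne : C.Nonempty
  op : IsOpen C
  bdd : Bornology.IsBounded C
  sub : C ⊆ (packingUnion P)ᶜ
  comp : ∀ y ∈ C, connectedComponentIn (packingUnion P)ᶜ y = C
  hd : d ∈ P
  ha : a ∈ P
  hb : b ∈ P
  nda : d ≠ a
  ndb : d ≠ b
  nab : a ≠ b
  tda : d.Tangent a
  tdb : d.Tangent b
  tab : a.Tangent b
  meets : {e ∈ P | (closure C ∩ e.set).Nonempty} = {d, a, b}

lemma Disk.Tangent.symm {d a : Disk} (h : d.Tangent a) : a.Tangent d := by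
  unfold Disk.Tangent at *
  rw [dist_comm, h, add_comm]

lemma Gap.rot {P : Set Disk} {C : Set Plane} {d a b : Disk} (h : Gap P C d a b) :
    Gap P C a b d where
  ne := h.ne
  op := h.op
  bdd := h.bdd
  sub := h.sub
  comp := h.comp
  hd := h.ha
  ha := h.hb
  hb := h.hd
  nda := h.nab
  ndb := h.nda.symm
  nab := h.ndb.symm
  tda := h.tab
  tdb := h.tda.symm
  tab := h.tdb.symm
  meets := by
    rw [h.meets]
    ext x
    simp only [Set.mem_insert_iff, Set.mem_singleton_iff]
    tauto

lemma exists_gap {P : Set Disk} {ρ : ℝ} (hG : Good P ρ) (hP : IsCompactPacking P) {x : Plane}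
    (hx : x ∈ (packingUnion P)ᶜ) :
    ∃ d a b, Gap P (connectedComponentIn (packingUnion P)ᶜ x) d a b := by
  obtain ⟨hb, d₁, d₂, d₃, h1, h2, h3, n12, n13, n23, t12, t13, t23, hm⟩ := hP.2 x hx
  exact ⟨d₁, d₂, d₃, ⟨⟨x, mem_connectedComponentIn hx⟩, hG.isClosed.isOpen_compl.connectedComponentIn,
    hb, connectedComponentIn_subset _ _, fun y hy => (connectedComponentIn_eq hy).symm, h1, h2, h3,
    n12, n13, n23, t12, t13, t23, hm⟩⟩

lemma exists_gap' {P : Set Disk} {ρ : ℝ} (hG : Good P ρ) (hP : IsCompactPacking P) {x : Plane}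
    (hx : x ∈ (packingUnion P)ᶜ) {d : Disk} (hd : d ∈ P)
    (hm : (closure (connectedComponentIn (packingUnion P)ᶜ x) ∩ d.set).Nonempty) :
    ∃ a b, Gap P (connectedComponentIn (packingUnion P)ᶜ x) d a b := by
  obtain ⟨d₁, d₂, d₃, h⟩ := exists_gap hG hP hx
  have : d ∈ ({d₁, d₂, d₃} : Set Disk) := by rw [← h.meets]; exact ⟨hd, hm⟩
  rcases this with rfl | rfl | rfl
  · exact ⟨_, _, h⟩
  · exact ⟨_, _, h.rot⟩
  · exact ⟨_, _, h.rot.rot⟩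

/-- A connected set avoiding the three disks and meeting the gap lies in the gap. -/
lemma Gap.absorb {P : Set Disk} {ρ : ℝ} (hG : Good P ρ) {C : Set Plane} {d a b : Disk}
    (h : Gap P C d a b)
    {S : Set Plane} (hS : IsPreconnected S)
    (hav : ∀ y ∈ S, 0 < pw d y ∧ 0 < pw a y ∧ 0 < pw b y) (hne : (S ∩ C).Nonempty) : S ⊆ C := by
  have hfr : ∀ y ∈ S, y ∈ closure C → y ∈ C := by
    intro y hy hyc
    by_cases hyU : y ∈ (packingUnion P)ᶜ
    · have hop : IsOpen (connectedComponentIn (packingUnion P)ᶜ y) :=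
        hG.isClosed.isOpen_compl.connectedComponentIn
      obtain ⟨z, hz1, hz2⟩ := mem_closure_iff.1 hyc _ hop (mem_connectedComponentIn hyU)
      rw [← h.comp z hz2, ← connectedComponentIn_eq hz1]
      exact mem_connectedComponentIn hyU
    · exfalso
      rw [Set.mem_compl_iff, not_not] at hyU
      simp only [packingUnion, Set.mem_iUnion] at hyU
      obtain ⟨e, heP, hye⟩ := hyU
      have : e ∈ ({d, a, b} : Set Disk) := by
        rw [← h.meets]; exact ⟨heP, y, hyc, hye⟩
      obtain ⟨p1, p2, p3⟩ := hav y hy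
      rw [mem_set_iff] at hye
      rcases this with rfl | rfl | rfl <;> linarith
  intro y hy
  by_contra hyC
  have hyc : y ∈ (closure C)ᶜ := fun hc => hyC (hfr y hy hc)
  obtain ⟨z, -, hz1, hz2⟩ := hS C (closure C)ᶜ h.op isClosed_closure.isOpen_compl
    (fun w hw => by
      by_cases hwc : w ∈ closure C
      · exact Or.inl (hfr w hw hwc)
      · exact Or.inr hwc) hne ⟨y, hy, hyc⟩
  exact hz2 (subset_closure hz1)

lemma seg_preconnected (o v : Plane) {I : Set ℝ} (hI : IsPreconnected I) :
    IsPreconnected ((fun s : ℝ => o + s • v) '' I) :=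
  hI.image _ (by fun_prop)

/-- An unbounded ray avoiding the three disks cannot meet the gap. -/
lemma Gap.no_ray {P : Set Disk} {ρ : ℝ} (hG : Good P ρ) {C : Set Plane} {d a b : Disk}
    (h : Gap P C d a b) {o v : Plane} (hv : v ≠ 0)
    (hav : ∀ s : ℝ, 1 ≤ s → 0 < pw d (o + s • v) ∧ 0 < pw a (o + s • v) ∧ 0 < pw b (o + s • v))
    (hq : o + v ∈ C) : False := by
  have hsub := h.absorb hG (seg_preconnected o v (isPreconnected_Ici (a := (1:ℝ))))
    (by rintro _ ⟨s, hs, rfl⟩; exact hav s hs)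
    ⟨o + v, ⟨1, Set.mem_Ici.2 le_rfl, by simp⟩, hq⟩
  obtain ⟨K, hK⟩ := h.bdd.exists_norm_le
  have hv0 : 0 < ‖v‖ := norm_pos_iff.2 hv
  set s := max 1 ((K + ‖o‖ + 1) / ‖v‖) with hs
  have h1 := hK _ (hsub ⟨s, Set.mem_Ici.2 (le_max_left _ _), rfl⟩)
  have h2 : ‖s • v‖ = s * ‖v‖ := by
    rw [norm_smul, Real.norm_eq_abs, abs_of_pos (lt_of_lt_of_le one_pos (le_max_left _ _))]
  have h3 : K + ‖o‖ + 1 ≤ s * ‖v‖ := (div_le_iff₀ hv0).1 (le_max_right _ _)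
  have h4 := norm_sub_le (o + s • v) o
  have h5 : o + s • v - o = s • v := by abel
  rw [h5, h2] at h4
  simp only at h1
  linarith

/-- Comparison of powers along a ray from the radical centre. -/
lemma pw_ray_le {d a : Disk} {o v : Plane} (h0 : pw a o = pw d o) {s₀ : ℝ} (hs₀ : 0 < s₀)
    (h1 : pw d (o + s₀ • v) ≤ pw a (o + s₀ • v)) {s : ℝ} (hs : 0 ≤ s) :
    pw d (o + s • v) ≤ pw a (o + s • v) := by
  rw [pw_line, pw_line] at *
  rw [h0] at *
  have : inner ℝ v (o - d.center) ≤ inner ℝ v (o - a.center) := by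
    have : s₀ * inner ℝ v (o - d.center) ≤ s₀ * inner ℝ v (o - a.center) := by linarith
    exact le_of_mul_le_mul_left this hs₀
  nlinarith

/-- The case analysis in `Gap.inc_mem`. -/
lemma Gap.inc_mem_aux {P : Set Disk} {ρ : ℝ} (hG : Good P ρ) {C : Set Plane} {d a b : Disk}
    (h : Gap P C d a b) {o x : Plane} (hx : x ∈ C) (hoa : pw a o = pw d o)
    (hob : pw b o = pw d o) {s : ℝ} (hs : 1 ≤ s) (hsd : pw d (o + s • (x - o)) ≤ 0) : o ∈ C := by
  set v := x - o with hv
  have hxe : o + (1:ℝ) • v = x := by simp [hv]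
  have hxd : 0 < pw d x := by
    rw [← notMem_set_iff]
    intro hxd
    exact h.sub hx (Set.mem_biUnion h.hd hxd)
  have hmem : o + s • v ∈ d.set := mem_set_iff.2 hsd
  have ha := pw_nonneg hG.pack h.hd h.ha h.nda hmem
  have hb := pw_nonneg hG.pack h.hd h.hb h.ndb hmem
  have hdpos : ∀ τ ∈ Set.Icc (0:ℝ) 1, 0 < pw d (o + τ • v) := by
    intro τ hτ
    by_contra hcon
    rw [not_lt] at hcon
    have hconv : Convex ℝ d.set := convex_closedBall _ _
    have hxs : x ∈ d.set := by
      have hτ1 : τ ≠ 1 := by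
        rintro rfl
        rw [hxe] at hcon
        linarith
      have hτlt : τ < 1 := lt_of_le_of_ne hτ.2 hτ1
      have hst : 0 < s - τ := by linarith
      have := hconv (mem_set_iff.2 hcon) hmem (a := (s - 1) / (s - τ)) (b := (1 - τ) / (s - τ))
        (div_nonneg (by linarith) hst.le) (div_nonneg (by linarith) hst.le)
        (by field_simp; ring)
      convert this using 1
      rw [← hxe]
      have e1 : (s - 1) / (s - τ) = 1 - (1 - τ) / (s - τ) := by field_simp; ring
      have e2 : (1 - τ) / (s - τ) * (s - τ) = 1 - τ := div_mul_cancel₀ _ hst.ne'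
      rw [e1]
      set κ := (1 - τ) / (s - τ)
      have e3 : (1:ℝ) = (1 - κ) * τ + κ * s := by linarith
      calc o + (1:ℝ) • v = o + ((1 - κ) * τ + κ * s) • v := by rw [← e3]
        _ = _ := by module
    rw [mem_set_iff] at hxs
    linarith
  have hsub := h.absorb hG (seg_preconnected o v (isPreconnected_Icc (a := (0:ℝ)) (b := 1)))
    (by
      rintro _ ⟨τ, hτ, rfl⟩
      have h1 := hdpos τ hτ
      have h2 := pw_ray_le hoa (v := v) (s₀ := s) (by linarith) (by linarith) hτ.1
      have h3 := pw_ray_le hob (v := v) (s₀ := s) (by linarith) (by linarith) hτ.1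
      exact ⟨h1, by simp only; linarith, by simp only; linarith⟩)
    ⟨x, ⟨1, ⟨zero_le_one, le_rfl⟩, hxe⟩, hx⟩
  exact hsub ⟨0, ⟨le_rfl, zero_le_one⟩, by simp⟩

lemma Gap.inc_mem {P : Set Disk} {ρ : ℝ} (hG : Good P ρ) {C : Set Plane} {d a b : Disk}
    (h : Gap P C d a b) : inc d a b ∈ C := by
  obtain ⟨h0, hoa, hob⟩ := pw_inc h.tda h.tdb h.tab
  set o := inc d a b
  obtain ⟨x, hx⟩ := h.ne
  by_cases hxo : x = o
  · rw [← hxo]; exact hx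
  by_contra hcon
  refine h.no_ray hG (o := o) (v := x - o) (sub_ne_zero.2 hxo) ?_ (by simpa using hx)
  intro s hs
  refine ⟨?_, ?_, ?_⟩
  · by_contra hh
    exact hcon (h.inc_mem_aux hG hx hoa hob hs (not_lt.1 hh))
  · by_contra hh
    exact hcon (h.rot.inc_mem_aux hG hx (by rw [hoa, hob]) (by rw [hoa]) hs
      (not_lt.1 hh))
  · by_contra hh
    exact hcon (h.rot.rot.inc_mem_aux hG hx (by rw [hob]) (by rw [hoa, hob])
      hs (not_lt.1 hh))

end GeometryPart

section LocalPart
open Filter Topology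

lemma pw_continuous (d : Disk) : Continuous (pw d) := by
  unfold pw
  fun_prop

lemma pw_from {d : Disk} {o q : Plane} (τ : ℝ) :
    pw d (o + τ • (q - o)) = pw d q + 2 * (τ - 1) * inner ℝ (q - o) (q - d.center)
      + (τ - 1) ^ 2 * ‖q - o‖ ^ 2 := by
  have : o + τ • (q - o) = q + (τ - 1) • (q - o) := by module
  rw [this, pw_line]

lemma pw_bd {d : Disk} {p : Plane} (hp : ‖p - d.center‖ = d.radius) {ε : ℝ} (hε : 0 < ε) :
    0 < pw d (p + ε • (p - d.center)) := by
  have : p + ε • (p - d.center) - d.center = (1 + ε) • (p - d.center) := by module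
  unfold pw
  rw [this, norm_smul, hp, Real.norm_eq_abs, abs_of_pos (by linarith)]
  have := d.radius_pos
  have h2 : ((1 + ε) * d.radius) ^ 2 - d.radius ^ 2 = d.radius ^ 2 * (2 * ε + ε ^ 2) := by ring
  rw [h2]
  positivity

lemma tendsto_q (p w : Plane) : Tendsto (fun ε : ℝ => p + ε • w) (𝓝[>] 0) (𝓝 p) := by
  have : Tendsto (fun ε : ℝ => p + ε • w) (𝓝 0) (𝓝 (p + (0:ℝ) • w)) :=
    Continuous.tendsto (by fun_prop) 0
  rw [zero_smul, add_zero] at this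
  exact this.mono_left nhdsWithin_le_nhds

lemma ev_pw_lt {d a : Disk} {p : Plane} (hp : ‖p - d.center‖ = d.radius) (hpa : p ∉ a.set) :
    ∀ᶠ ε : ℝ in 𝓝[>] 0, pw d (p + ε • (p - d.center)) < pw a (p + ε • (p - d.center)) := by
  have h0 : pw d p < pw a p := by
    have : pw d p = 0 := by unfold pw; rw [hp]; ring
    rw [this]; exact notMem_set_iff.1 hpa
  have := (isOpen_lt (pw_continuous d) (pw_continuous a)).mem_nhds h0
  exact (tendsto_q p (p - d.center)).eventually this

lemma Gap.near_in {P : Set Disk} {ρ : ℝ} (hG : Good P ρ) {C : Set Plane} {d a b : Disk}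
    (h : Gap P C d a b) {p : Plane} (hp : ‖p - d.center‖ = d.radius) (hpa : p ∉ a.set)
    (hpb : p ∉ b.set)
    (hin : d.radius ^ 2 < inner ℝ (inc d a b - d.center) (p - d.center)) :
    ∀ᶠ ε : ℝ in 𝓝[>] 0, p + ε • (p - d.center) ∈ C := by
  obtain ⟨-, hoa, hob⟩ := pw_inc h.tda h.tdb h.tab
  have hoC := h.inc_mem hG
  set o := inc d a b
  have h1 : ∀ᶠ q in 𝓝 p, inner ℝ (q - o) (q - d.center) < 0 := by
    have hc : Continuous fun q : Plane => (inner ℝ (q - o) (q - d.center) : ℝ) := by fun_prop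
    refine (isOpen_lt hc continuous_const).mem_nhds ?_
    show inner ℝ (p - o) (p - d.center) < 0
    have : p - o = (p - d.center) - (o - d.center) := by abel
    rw [this, inner_sub_left, real_inner_self_eq_norm_sq, hp]
    linarith
  filter_upwards [(tendsto_q p (p - d.center)).eventually h1, ev_pw_lt hp hpa, ev_pw_lt hp hpb,
    self_mem_nhdsWithin] with ε e1 e2 e3 e4
  have e5 := pw_bd hp e4
  set q := p + ε • (p - d.center)
  have hq : o + (1:ℝ) • (q - o) = q := by simp
  have hsub := h.absorb hG (seg_preconnected o (q - o) (isPreconnected_Icc (a := (0:ℝ)) (b := 1)))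
    (by
      rintro _ ⟨τ, hτ, rfl⟩
      have h1 : 0 < pw d (o + τ • (q - o)) := by
        rw [pw_from]
        nlinarith [hτ.2, sq_nonneg ((τ - 1) * ‖q - o‖)]
      have h2 := pw_ray_le hoa (v := q - o) (s₀ := 1) one_pos (by rw [hq]; exact e2.le) hτ.1
      have h3 := pw_ray_le hob (v := q - o) (s₀ := 1) one_pos (by rw [hq]; exact e3.le) hτ.1
      exact ⟨h1, by simp only; linarith, by simp only; linarith⟩)
    ⟨o, ⟨0, ⟨le_rfl, zero_le_one⟩, by simp⟩, hoC⟩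
  exact hsub ⟨1, ⟨zero_le_one, le_rfl⟩, hq⟩

lemma Gap.near_out {P : Set Disk} {ρ : ℝ} (hG : Good P ρ) {C : Set Plane} {d a b : Disk}
    (h : Gap P C d a b) {p : Plane} (hp : ‖p - d.center‖ = d.radius) (hpa : p ∉ a.set)
    (hpb : p ∉ b.set)
    (hout : inner ℝ (inc d a b - d.center) (p - d.center) < d.radius ^ 2) :
    ∀ᶠ ε : ℝ in 𝓝[>] 0, p + ε • (p - d.center) ∉ C := by
  obtain ⟨-, hoa, hob⟩ := pw_inc h.tda h.tdb h.tab
  set o := inc d a b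
  have h1 : ∀ᶠ q in 𝓝 p, 0 < inner ℝ (q - o) (q - d.center) := by
    have hc : Continuous fun q : Plane => (inner ℝ (q - o) (q - d.center) : ℝ) := by fun_prop
    refine (isOpen_lt continuous_const hc).mem_nhds ?_
    show 0 < inner ℝ (p - o) (p - d.center)
    have : p - o = (p - d.center) - (o - d.center) := by abel
    rw [this, inner_sub_left, real_inner_self_eq_norm_sq, hp]
    linarith
  filter_upwards [(tendsto_q p (p - d.center)).eventually h1, ev_pw_lt hp hpa, ev_pw_lt hp hpb,
    self_mem_nhdsWithin] with ε e1 e2 e3 e4 hqC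
  have e5 := pw_bd hp e4
  set q := p + ε • (p - d.center)
  have hq : o + (1:ℝ) • (q - o) = q := by simp
  refine h.no_ray hG (o := o) (v := q - o) ?_ ?_ (by simpa using hqC)
  · intro h0
    rw [h0, inner_zero_left] at e1
    exact lt_irrefl _ e1
  · intro τ hτ
    have h1 : 0 < pw d (o + τ • (q - o)) := by
      rw [pw_from]
      nlinarith [sq_nonneg ((τ - 1) * ‖q - o‖)]
    have hτ0 : 0 ≤ τ := by linarith
    have h2 := pw_ray_le hoa (v := q - o) (s₀ := 1) one_pos (by rw [hq]; exact e2.le) hτ0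
    have h3 := pw_ray_le hob (v := q - o) (s₀ := 1) one_pos (by rw [hq]; exact e3.le) hτ0
    exact ⟨h1, by linarith, by linarith⟩

lemma closure_comp {U : Set Plane} (hU : IsOpen U) {y w : Plane}
    (hw : w ∈ closure (connectedComponentIn U y)) (hwU : w ∈ U) :
    w ∈ connectedComponentIn U y := by
  obtain ⟨z, hz1, hz2⟩ := mem_closure_iff.1 hw _ (hU.connectedComponentIn (x := w))
    (mem_connectedComponentIn hwU)
  rw [connectedComponentIn_eq hz2, ← connectedComponentIn_eq hz1]
  exact mem_connectedComponentIn hwU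

/-- Near a point of `d` on no other disk, every point outside `d` lies in a gap touching `d`. -/
lemma near_touch {P : Set Disk} {ρ : ℝ} (hG : Good P ρ) {d : Disk} {p : Plane}
    (hp : p ∈ d.set) (hiso : ∀ e ∈ P, e ≠ d → p ∉ e.set) :
    ∃ ε > 0, ∀ y ∈ ball p ε, y ∉ d.set → y ∈ (packingUnion P)ᶜ ∧
      (closure (connectedComponentIn (packingUnion P)ᶜ y) ∩ d.set).Nonempty := by
  have hcl : IsClosed (packingUnion (P \ {d})) := (hG.mono Set.sdiff_subset).isClosed
  have hpn : p ∈ (packingUnion (P \ {d}))ᶜ := by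
    simp only [packingUnion, Set.mem_compl_iff, Set.mem_iUnion, not_exists]
    intro e he
    exact hiso e he.1 he.2
  obtain ⟨ε, hε, hball⟩ := Metric.isOpen_iff.1 hcl.isOpen_compl p hpn
  have hU : ∀ y ∈ ball p ε, y ∉ d.set → y ∈ (packingUnion P)ᶜ := by
    intro y hy hyd hyP
    simp only [packingUnion, Set.mem_iUnion] at hyP
    obtain ⟨e, he, hye⟩ := hyP
    by_cases hed : e = d
    · rw [hed] at hye; exact hyd hye
    · exact hball hy (Set.mem_biUnion (show e ∈ P \ {d} from ⟨he, hed⟩) hye)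
  refine ⟨ε, hε, fun y hy hyd => ⟨hU y hy hyd, ?_⟩⟩
  by_contra hcon
  rw [Set.not_nonempty_iff_eq_empty, Set.eq_empty_iff_forall_notMem] at hcon
  set C := connectedComponentIn (packingUnion P)ᶜ y
  have hop : IsOpen C := hG.isClosed.isOpen_compl.connectedComponentIn
  obtain ⟨z, -, hz1, hz2⟩ := (convex_ball p ε).isPreconnected C (closure C)ᶜ hop
    isClosed_closure.isOpen_compl
    (fun w hw => by
      by_cases hwc : w ∈ closure C
      · exact Or.inl (closure_comp hG.isClosed.isOpen_compl hwc
          (hU w hw fun hwd => hcon w ⟨hwc, hwd⟩))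
      · exact Or.inr hwc) ⟨y, hy, mem_connectedComponentIn (hU y hy hyd)⟩
    ⟨p, mem_ball_self hε, fun hpc => hcon p ⟨hpc, hp⟩⟩
  exact hz2 (subset_closure hz1)

lemma boundary_gap {P : Set Disk} {ρ : ℝ} (hG : Good P ρ) (hP : IsCompactPacking P) {d : Disk}
    {p : Plane} (hd : d ∈ P) (hp : ‖p - d.center‖ = d.radius)
    (hiso : ∀ e ∈ P, e ≠ d → p ∉ e.set) :
    ∃ C a b, Gap P C d a b ∧ ∀ᶠ ε : ℝ in 𝓝[>] 0, p + ε • (p - d.center) ∈ C := by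
  have hpd : p ∈ d.set := by
    rw [mem_set_iff]; unfold pw; rw [hp]; linarith
  obtain ⟨η, hη, hnear⟩ := near_touch hG hpd hiso
  have hev : ∀ᶠ ε : ℝ in 𝓝[>] 0, p + ε • (p - d.center) ∈ ball p η :=
    (tendsto_q p (p - d.center)).eventually (ball_mem_nhds p hη)
  obtain ⟨δ, hδ, hsub⟩ := mem_nhdsGT_iff_exists_Ioc_subset.1 hev
  have hδ0 : (0:ℝ) < δ := hδ
  have hall : ∀ ε ∈ Set.Ioc 0 δ, p + ε • (p - d.center) ∈ ball p η ∧
      p + ε • (p - d.center) ∉ d.set := fun ε hε =>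
    ⟨hsub hε, notMem_set_iff.2 (pw_bd hp hε.1)⟩
  have hδm : δ ∈ Set.Ioc 0 δ := ⟨hδ0, le_rfl⟩
  obtain ⟨hU, hm⟩ := hnear _ (hall δ hδm).1 (hall δ hδm).2
  obtain ⟨a, b, hgap⟩ := exists_gap' hG hP hU hd hm
  refine ⟨_, a, b, hgap, ?_⟩
  have hsubC : (fun s : ℝ => p + s • (p - d.center)) '' Set.Ioc 0 δ ⊆
      connectedComponentIn (packingUnion P)ᶜ (p + δ • (p - d.center)) := by
    refine (seg_preconnected p (p - d.center) isPreconnected_Ioc).subset_connectedComponentIn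
      ⟨δ, hδm, rfl⟩ ?_
    rintro _ ⟨s, hs, rfl⟩
    exact (hnear _ (hall s hs).1 (hall s hs).2).1
  filter_upwards [Ioc_mem_nhdsGT hδ0] with s hs
  exact hsubC ⟨s, hs, rfl⟩

lemma inter_subsingleton {P : Set Disk} (hP : IsPacking P) {d a : Disk} (hd : d ∈ P) (ha : a ∈ P)
    (hne : d ≠ a) {x y : Plane} (hxd : x ∈ d.set) (hxa : x ∈ a.set) (hyd : y ∈ d.set)
    (hya : y ∈ a.set) : x = y := by
  have hm : x + (1 / 2 : ℝ) • (y - x) ∈ a.set := by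
    have := (convex_closedBall a.center a.radius) hxa hya (a := 1 / 2) (b := 1 / 2) (by norm_num)
      (by norm_num) (by norm_num)
    have e : x + (1 / 2 : ℝ) • (y - x) = (1 / 2 : ℝ) • x + (1 / 2 : ℝ) • y := by module
    rw [e]
    exact this
  have h1 := pw_nonneg hP ha hd hne.symm hm
  rw [pw_line] at h1
  have h2 := mem_set_iff.1 hyd
  have h3 := mem_set_iff.1 hxd
  have hy : y = x + (1:ℝ) • (y - x) := by simp
  rw [hy, pw_line] at h2
  have h4 : ‖y - x‖ ^ 2 ≤ 0 := by nlinarith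
  have h5 : ‖y - x‖ = 0 := by
    have := sq_nonneg ‖y - x‖
    exact pow_eq_zero_iff (two_ne_zero) |>.1 (le_antisymm h4 this)
  exact (sub_eq_zero.1 (norm_eq_zero.1 h5)).symm

/-- Connectivity of the packing through gaps. -/
lemma connectivity {P : Set Disk} {ρ : ℝ} (hG : Good P ρ) (hP : IsCompactPacking P) {Q : Set Disk}
    (hQP : Q ⊆ P) (hQ : Q.Nonempty)
    (hcl : ∀ C d a b, Gap P C d a b → d ∈ Q → a ∈ Q ∧ b ∈ Q) : Q = P := by
  by_contra hne
  obtain ⟨d₂, hd₂P, hd₂Q⟩ : ∃ d ∈ P, d ∉ Q := by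
    by_contra h
    push Not at h
    exact hne (Set.Subset.antisymm hQP h)
  obtain ⟨d₁, hd₁⟩ := hQ
  let Z : Set Plane := {x | ∃ d ∈ P, ∃ e ∈ P, d ≠ e ∧ x ∈ d.set ∧ x ∈ e.set}
  have hZ : Z.Countable := by
    have : Z ⊆ ⋃ d ∈ P, ⋃ e ∈ P, {x | d ≠ e ∧ x ∈ d.set ∧ x ∈ e.set} := by
      rintro x ⟨d, hd, e, he, h⟩
      exact Set.mem_biUnion hd (Set.mem_biUnion he h)
    refine Set.Countable.mono this ?_
    refine hG.countable.biUnion fun d hd => hG.countable.biUnion fun e he => ?_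
    refine Set.Subsingleton.countable ?_
    rintro x ⟨hde, hx1, hx2⟩ y ⟨-, hy1, hy2⟩
    exact inter_subsingleton hG.pack hd he hde hx1 hx2 hy1 hy2
  have hconn : IsConnected Zᶜ := by
    refine hZ.isConnected_compl_of_one_lt_rank ?_
    rw [rank_eq_card_basis (EuclideanSpace.basisFun (Fin 2) ℝ).toBasis]
    simp
  -- the part of the plane belonging to a family of disks
  let A : Set Disk → Set Plane := fun T => {x | ∃ d ∈ T, x ∈ d.set} ∪
    {x | x ∈ (packingUnion P)ᶜ ∧
      ∃ d ∈ T, (closure (connectedComponentIn (packingUnion P)ᶜ x) ∩ d.set).Nonempty}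
  have hdisk : ∀ T ⊆ P, ∀ d ∈ T, ∀ x ∉ Z, x ∈ d.set → x ∈ interior (A T) := by
    intro T hT d hd x hxZ hx
    obtain ⟨ε, hε, hnear⟩ := near_touch hG hx
      (fun e he hed hxe => hxZ ⟨e, he, d, hT hd, hed, hxe, hx⟩)
    refine mem_interior.2 ⟨ball x ε, fun y hy => ?_, isOpen_ball, mem_ball_self hε⟩
    by_cases hyd : y ∈ d.set
    · exact Or.inl ⟨d, hd, hyd⟩
    · obtain ⟨h1, h2⟩ := hnear y hy hyd
      exact Or.inr ⟨h1, d, hd, h2⟩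
  have hgap : ∀ T, ∀ d ∈ T, ∀ x ∈ (packingUnion P)ᶜ,
      (closure (connectedComponentIn (packingUnion P)ᶜ x) ∩ d.set).Nonempty →
      x ∈ interior (A T) := by
    intro T d hd x hx hm
    refine mem_interior.2 ⟨connectedComponentIn (packingUnion P)ᶜ x, fun y hy => ?_,
      hG.isClosed.isOpen_compl.connectedComponentIn, mem_connectedComponentIn hx⟩
    refine Or.inr ⟨connectedComponentIn_subset _ _ hy, d, hd, ?_⟩
    rw [← connectedComponentIn_eq hy]
    exact hm
  have hctr : ∀ d ∈ P, d.center ∉ Z := by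
    rintro d hd ⟨e, he, f, hf, hef, hx1, hx2⟩
    have key : ∀ e ∈ P, d.center ∈ e.set → e = d := by
      intro e he hx
      by_contra hed
      have := sep hG.pack hd he (Ne.symm hed)
      have h2 : dist d.center e.center ≤ e.radius := hx
      linarith [d.radius_pos]
    exact hef ((key e he hx1).trans (key f hf hx2).symm)
  have hself : ∀ d : Disk, d.center ∈ d.set := fun d => mem_closedBall_self d.radius_pos.le
  obtain ⟨x, hxZ, hxA, hxB⟩ := hconn.isPreconnected (interior (A Q)) (interior (A (P \ Q)))
    isOpen_interior isOpen_interior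
    (by
      intro x hx
      by_cases hxU : x ∈ (packingUnion P)ᶜ
      · obtain ⟨d, a, b, hg⟩ := exists_gap hG hP hxU
        have hdm : (closure (connectedComponentIn (packingUnion P)ᶜ x) ∩ d.set).Nonempty := by
          have : d ∈ ({d, a, b} : Set Disk) := Or.inl rfl
          rw [← hg.meets] at this
          exact this.2
        by_cases hdQ : d ∈ Q
        · exact Or.inl (hgap Q d hdQ x hxU hdm)
        · exact Or.inr (hgap (P \ Q) d ⟨hg.hd, hdQ⟩ x hxU hdm)
      · rw [Set.mem_compl_iff, not_not] at hxU
        simp only [packingUnion, Set.mem_iUnion] at hxU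
        obtain ⟨d, hd, hxd⟩ := hxU
        by_cases hdQ : d ∈ Q
        · exact Or.inl (hdisk Q hQP d hdQ x hx hxd)
        · exact Or.inr (hdisk (P \ Q) Set.sdiff_subset d ⟨hd, hdQ⟩ x hx hxd))
    ⟨d₁.center, hctr d₁ (hQP hd₁), hdisk Q hQP d₁ hd₁ _ (hctr d₁ (hQP hd₁)) (hself d₁)⟩
    ⟨d₂.center, hctr d₂ hd₂P, hdisk (P \ Q) Set.sdiff_subset d₂ ⟨hd₂P, hd₂Q⟩ _ (hctr d₂ hd₂P)
      (hself d₂)⟩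
  have hxA := interior_subset hxA
  have hxB := interior_subset hxB
  rcases hxA with ⟨d, hd, hxd⟩ | ⟨hxU, d, hd, hm⟩
  · rcases hxB with ⟨e, he, hxe⟩ | ⟨hxU, -⟩
    · exact hxZ ⟨d, hQP hd, e, he.1, fun h => he.2 (h ▸ hd), hxd, hxe⟩
    · exact hxU (Set.mem_biUnion (hQP hd) hxd)
  · rcases hxB with ⟨e, he, hxe⟩ | ⟨-, e, he, hm'⟩
    · exact hxU (Set.mem_biUnion he.1 hxe)
    · obtain ⟨a, b, hg⟩ := exists_gap' hG hP hxU (hQP hd) hm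
      obtain ⟨ha, hb⟩ := hcl _ _ _ _ hg hd
      have : e ∈ ({d, a, b} : Set Disk) := by
        rw [← hg.meets]; exact ⟨he.1, hm'⟩
      rcases this with rfl | rfl | rfl
      · exact he.2 hd
      · exact he.2 ha
      · exact he.2 hb

end LocalPart

section CirclePart
open Filter Topology MeasureTheory

instance fact_two_pi : Fact (0 < 2 * Real.pi) := ⟨Real.two_pi_pos⟩

/-- The circle of directions. -/
abbrev Dir : Type := AddCircle (2 * Real.pi)

/-- The unit vector in a given direction. -/
def dirVec (t : Dir) : Plane := !₂[Real.Angle.cos t, Real.Angle.sin t]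

lemma dirVec_coe (x : ℝ) : dirVec (x : Dir) = !₂[Real.cos x, Real.sin x] := by
  unfold dirVec
  rfl

lemma dirVec_norm (t : Dir) : ‖dirVec t‖ = 1 := by
  induction t using QuotientAddGroup.induction_on with
  | H x =>
    have := dirVec_coe x
    change ‖dirVec (x : Dir)‖ = 1
    rw [this, EuclideanSpace.norm_eq]
    simp

lemma dirVec_inner (x y : ℝ) :
    inner ℝ (dirVec (x : Dir)) (dirVec (y : Dir)) = Real.cos (y - x) := by
  rw [dirVec_coe, dirVec_coe, Real.cos_sub]
  simp [PiLp.inner_apply, Fin.sum_univ_two]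

lemma exists_dir (w : Plane) : ∃ β : ℝ, w = ‖w‖ • dirVec (β : Dir) := by
  refine ⟨Complex.arg ⟨w 0, w 1⟩, ?_⟩
  have hn : ‖w‖ = ‖(⟨w 0, w 1⟩ : ℂ)‖ := by
    rw [EuclideanSpace.norm_eq, Complex.norm_def, Complex.normSq_mk]
    simp [Fin.sum_univ_two, sq]
  rw [hn, dirVec_coe]
  ext i
  fin_cases i
  · simp [Complex.norm_mul_cos_arg]
  · simp [Complex.norm_mul_sin_arg]

lemma exists_rep (t : Dir) (β : ℝ) : ∃ x : ℝ, |x| ≤ Real.pi ∧ t = ((β + x : ℝ) : Dir) ∧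
    dist t (β : Dir) = |x| := by
  have hpi := Real.pi_pos
  obtain ⟨x, hx, hxt⟩ : ∃ x : ℝ, |x| ≤ Real.pi ∧ (x : Dir) = t - (β : Dir) := by
    have h := AddCircle.coe_image_Icc_eq (2 * Real.pi) (-Real.pi)
    have : (t - (β : Dir)) ∈ ((↑) : ℝ → Dir) '' Set.Icc (-Real.pi) (-Real.pi + 2 * Real.pi) := by
      rw [h]; trivial
    obtain ⟨x, hx, hxt⟩ := this
    exact ⟨x, abs_le.2 ⟨hx.1, by linarith [hx.2]⟩, hxt⟩
  refine ⟨x, hx, ?_, ?_⟩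
  · rw [AddCircle.coe_add, hxt]; abel
  · rw [dist_eq_norm, ← hxt, AddCircle.norm_coe_eq_abs_iff _ (by positivity)]
    rw [abs_of_pos Real.two_pi_pos]
    linarith

lemma cos_abs_le_iff {x φ : ℝ} (hx : |x| ≤ Real.pi) (h0 : 0 ≤ φ) (h1 : φ ≤ Real.pi) :
    Real.cos φ ≤ Real.cos x ↔ |x| ≤ φ := by
  rw [← Real.cos_abs x]
  exact Real.strictAntiOn_cos.le_iff_ge ⟨h0, h1⟩ ⟨abs_nonneg x, hx⟩

lemma cap_eq {w : Plane} {r : ℝ} (hr : 0 < r) (hw : r < ‖w‖) :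
    ∃ β : Dir, {t : Dir | r ≤ inner ℝ w (dirVec t)} = closedBall β (Real.arccos (r / ‖w‖)) ∧
      {t : Dir | inner ℝ w (dirVec t) = r}.Finite := by
  obtain ⟨β, hβ⟩ := exists_dir w
  have hw0 : 0 < ‖w‖ := hr.trans hw
  have hq1 : r / ‖w‖ ≤ 1 := (div_le_one hw0).2 hw.le
  have hq0 : 0 ≤ r / ‖w‖ := by positivity
  set φ := Real.arccos (r / ‖w‖) with hφ
  have hcos : Real.cos φ = r / ‖w‖ := Real.cos_arccos (by linarith) hq1
  have hφ0 : 0 ≤ φ := Real.arccos_nonneg _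
  have hφ1 : φ ≤ Real.pi := Real.arccos_le_pi _
  have hin : ∀ x : ℝ, inner ℝ w (dirVec ((β + x : ℝ) : Dir)) = ‖w‖ * Real.cos x := by
    intro x
    conv_lhs => rw [hβ]
    rw [inner_smul_left, dirVec_inner]
    simp
  refine ⟨β, ?_, ?_⟩
  · ext t
    obtain ⟨x, hx, rfl, hd⟩ := exists_rep t β
    rw [mem_closedBall, hd, Set.mem_setOf_eq, hin, ← cos_abs_le_iff hx hφ0 hφ1, hcos,
      div_le_iff₀ hw0, mul_comm]
  · refine Set.Finite.subset (s := {((β + φ : ℝ) : Dir), ((β + -φ : ℝ) : Dir)}) (by simp) ?_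
    intro t ht
    obtain ⟨x, hx, rfl, hd⟩ := exists_rep t β
    rw [Set.mem_setOf_eq, hin] at ht
    have h1 : Real.cos |x| = Real.cos φ := by
      rw [Real.cos_abs, hcos, eq_div_iff hw0.ne', mul_comm]; exact ht
    have h2 : |x| = φ := Real.injOn_cos ⟨abs_nonneg x, hx⟩ ⟨hφ0, hφ1⟩ h1
    rcases abs_choice x with h | h
    · left; rw [← h2, h]
    · right
      rw [Set.mem_singleton_iff, ← h2, h, neg_neg]

lemma dirVec_injective : Function.Injective dirVec := by
  intro s t h
  obtain ⟨y, hy⟩ := QuotientAddGroup.mk_surjective t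
  have hy' : ((y : ℝ) : Dir) = t := hy
  obtain ⟨x, hx, hs, -⟩ := exists_rep s y
  have h1 : inner ℝ (dirVec t) (dirVec s) = (1 : ℝ) := by
    rw [h, real_inner_self_eq_norm_sq, dirVec_norm]; norm_num
  rw [hs, ← hy', dirVec_inner] at h1
  have h2 : |x| ≤ 0 := by
    rw [← cos_abs_le_iff hx le_rfl Real.pi_pos.le, Real.cos_zero]
    have : y + x - y = x := by ring
    rw [this] at h1
    exact h1.ge
  have h3 : x = 0 := abs_eq_zero.1 (le_antisymm h2 (abs_nonneg x))
  rw [hs, h3, add_zero, hy']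

lemma Gap.norm_inc {P : Set Disk} {C : Set Plane} {d a b : Disk} (h : Gap P C d a b) :
    d.radius < ‖inc d a b - d.center‖ ∧
    Real.arccos (d.radius / ‖inc d a b - d.center‖) = angR d.radius a.radius b.radius := by
  have hr := d.radius_pos
  have ha := a.radius_pos
  have hb := b.radius_pos
  have h1 := (pw_inc h.tda h.tdb h.tab).1
  obtain ⟨-, -, e3⟩ := inc_inner h.tda h.tdb h.tab
  have hlt : d.radius < ‖inc d a b - d.center‖ := by
    unfold pw at h1
    exact lt_of_pow_lt_pow_left₀ 2 (norm_nonneg _) (by linarith)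
  refine ⟨hlt, ?_⟩
  unfold angR
  rw [Real.arcsin_eq_arccos (Real.sqrt_nonneg _), Real.sq_sqrt (by positivity)]
  congr 1
  symm
  have hn : 0 < ‖inc d a b - d.center‖ := hr.trans hlt
  rw [Real.sqrt_eq_iff_eq_sq ?_ (by positivity), div_pow, e3]
  · field_simp
    ring
  · rw [sub_nonneg]
    exact mul_le_one₀ ((div_le_one (by positivity)).2 (by linarith)) (by positivity)
      ((div_le_one (by positivity)).2 (by linarith))

lemma angR_nonneg (r a b : ℝ) : 0 ≤ angR r a b := Real.arcsin_nonneg.2 (Real.sqrt_nonneg _)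

lemma angR_le (r a b : ℝ) : angR r a b ≤ Real.pi := by
  have := Real.arcsin_le_pi_div_two (√(a / (r + a) * (b / (r + b))))
  unfold angR
  linarith [Real.pi_pos]

/-- The angle equation around a disk. -/
theorem angle_sum {P : Set Disk} {ρ : ℝ} (hG : Good P ρ) (hP : IsCompactPacking P) {d : Disk}
    (hd : d ∈ P) :
    ∃ E : Finset (Disk × Disk), (∀ e ∈ E, ∃ C, Gap P C d e.1 e.2) ∧
      ∑ e ∈ E, angR d.radius e.1.radius e.2.radius = Real.pi ∧
      (∀ C a b, Gap P C d a b → (a, b) ∈ E ∨ (b, a) ∈ E) := by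
  classical
  let K : Set (Set Plane) := {C | ∃ a b, Gap P C d a b}
  have hK : ∀ C ∈ K, ∃ e : Disk × Disk, Gap P C d e.1 e.2 := by
    rintro C ⟨a, b, h⟩
    exact ⟨(a, b), h⟩
  have : Nonempty (Disk × Disk) := ⟨(d, d)⟩
  choose! f hf using hK
  have hinj : Set.InjOn f K := by
    intro C hC C' hC' he
    have h1 := (hf C hC).inc_mem hG
    have h2 := (hf C' hC').inc_mem hG
    rw [← he] at h2
    rw [← (hf C hC).comp _ h1, ← (hf C' hC').comp _ h2]
  have hKfin : K.Finite := by
    have hN := hG.finite_near d.center 2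
    refine Set.Finite.of_finite_image (f := f) ((hN.prod hN).subset ?_) hinj
    rintro _ ⟨C, hC, rfl⟩
    have h := hf C hC
    have key : ∀ a ∈ P, d.Tangent a → dist a.center d.center ≤ 2 := by
      intro a ha hda
      rw [dist_comm, hda]
      linarith [hG.ub d hd, hG.ub a ha]
    exact ⟨⟨h.ha, key _ h.ha h.tda⟩, ⟨h.hb, key _ h.hb h.tdb⟩⟩
  let p : Dir → Plane := fun t => d.center + d.radius • dirVec t
  have hpc : ∀ t, p t - d.center = d.radius • dirVec t := fun t => by simp [p]
  have hpn : ∀ t, ‖p t - d.center‖ = d.radius := fun t => by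
    rw [hpc, norm_smul, dirVec_norm, mul_one, Real.norm_eq_abs, abs_of_pos d.radius_pos]
  have hpd : ∀ t, p t ∈ d.set := fun t => by
    rw [mem_set_iff]; unfold pw; rw [hpn]; linarith
  have hpinj : Function.Injective p := by
    intro s t h
    apply dirVec_injective
    have h1 := hpc s
    rw [h, hpc t] at h1
    exact (smul_right_injective _ d.radius_pos.ne' h1).symm
  let o : Set Plane → Plane := fun C => inc d (f C).1 (f C).2 - d.center
  have hinner : ∀ (w : Plane) t, inner ℝ w (p t - d.center) = d.radius * inner ℝ w (dirVec t) := by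
    intro w t
    rw [hpc, inner_smul_right]
  -- exceptional directions
  let B1 : Set Dir := {t | ∃ e ∈ P, e ≠ d ∧ p t ∈ e.set}
  let B2 : Set Dir := ⋃ C ∈ K, {t | inner ℝ (o C) (dirVec t) = d.radius}
  have hB1 : B1.Countable := by
    have : B1 ⊆ ⋃ e ∈ P, {t | e ≠ d ∧ p t ∈ e.set} := by
      rintro t ⟨e, he, h⟩
      exact Set.mem_biUnion he h
    refine Set.Countable.mono this (hG.countable.biUnion fun e he => ?_)
    refine Set.Subsingleton.countable ?_
    rintro s ⟨hed, hs⟩ t ⟨-, ht⟩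
    exact hpinj (inter_subsingleton hG.pack he hd hed hs (hpd s) ht (hpd t))
  have hB2 : B2.Countable := by
    refine hKfin.countable.biUnion fun C hC => ?_
    obtain ⟨β, -, h⟩ := cap_eq d.radius_pos (hf C hC).norm_inc.1
    exact h.countable
  have hns : NullSingletonClass (volume : Measure Dir) := ⟨fun x => by
    have h0 : volume (Metric.closedBall x 0) = ENNReal.ofReal (min (2 * Real.pi) (2 * 0)) :=
      AddCircle.volume_closedBall (2 * Real.pi) 0
    rw [Metric.closedBall_zero] at h0
    rw [h0, mul_zero, min_eq_right Real.two_pi_pos.le, ENNReal.ofReal_zero]⟩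
  have hB : volume (B1 ∪ B2) = 0 := (hB1.union hB2).measure_zero _
  let cap : Set Plane → Set Dir := fun C => {t | d.radius ≤ inner ℝ (o C) (dirVec t)}
  have hcap : ∀ C ∈ K, MeasurableSet (cap C) ∧
      volume (cap C) = ENNReal.ofReal (2 * angR d.radius (f C).1.radius (f C).2.radius) := by
    intro C hC
    obtain ⟨β, h, -⟩ := cap_eq d.radius_pos (hf C hC).norm_inc.1
    have h' : cap C = _ := h
    rw [h']
    refine ⟨measurableSet_closedBall, ?_⟩
    rw [AddCircle.volume_closedBall, (hf C hC).norm_inc.2, min_eq_right]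
    have := angR_le d.radius (f C).1.radius (f C).2.radius
    linarith
  have hrsq : ∀ x : ℝ, d.radius < x → d.radius ^ 2 < d.radius * x := fun x hx => by
    rw [sq]; exact mul_lt_mul_of_pos_left hx d.radius_pos
  have hrsq' : ∀ x : ℝ, x < d.radius → d.radius * x < d.radius ^ 2 := fun x hx => by
    rw [sq]; exact mul_lt_mul_of_pos_left hx d.radius_pos
  have hcover : (B1 ∪ B2)ᶜ ⊆ ⋃ C ∈ hKfin.toFinset, cap C := by
    intro t ht
    have hiso : ∀ e ∈ P, e ≠ d → p t ∉ e.set := fun e he hed hpe =>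
      ht (Or.inl ⟨e, he, hed, hpe⟩)
    obtain ⟨C, a, b, hg, hev⟩ := boundary_gap hG hP hd (hpn t) hiso
    have hC : C ∈ K := ⟨a, b, hg⟩
    refine Set.mem_biUnion (hKfin.mem_toFinset.2 hC) ?_
    by_contra hcon
    have hcon : inner ℝ (o C) (dirVec t) < d.radius := not_le.1 hcon
    have h := hf C hC
    have hout := h.near_out hG (hpn t) (hiso _ h.ha h.nda.symm) (hiso _ h.hb h.ndb.symm)
      (by rw [hinner]; exact hrsq' _ hcon)
    obtain ⟨ε, h1, h2⟩ := (hev.and hout).exists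
    exact h2 h1
  have hdisj : ((hKfin.toFinset : Set (Set Plane))).Pairwise
      (Function.onFun (AEDisjoint volume) cap) := by
    intro C hC C' hC' hne
    have hC := hKfin.mem_toFinset.1 hC
    have hC' := hKfin.mem_toFinset.1 hC'
    refine measure_mono_null ?_ hB
    rintro t ⟨ht, ht'⟩
    by_contra hbad
    have hiso : ∀ e ∈ P, e ≠ d → p t ∉ e.set := fun e he hed hpe =>
      hbad (Or.inl ⟨e, he, hed, hpe⟩)
    have key : ∀ C ∈ K, t ∈ cap C → ∀ᶠ ε : ℝ in 𝓝[>] 0, p t + ε • (p t - d.center) ∈ C := by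
      intro C hC ht
      have h := hf C hC
      have hlt : d.radius < inner ℝ (o C) (dirVec t) := by
        refine lt_of_le_of_ne ht fun he => hbad (Or.inr (Set.mem_biUnion hC he.symm))
      exact h.near_in hG (hpn t) (hiso _ h.ha h.nda.symm) (hiso _ h.hb h.ndb.symm)
        (by rw [hinner]; exact hrsq _ hlt)
    obtain ⟨ε, h1, h2⟩ := ((key C hC ht).and (key C' hC' ht')).exists
    exact hne (by rw [← (hf C hC).comp _ h1, ← (hf C' hC').comp _ h2])
  have hsum : ∑ C ∈ hKfin.toFinset, angR d.radius (f C).1.radius (f C).2.radius = Real.pi := by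
    have h1 : volume (⋃ C ∈ hKfin.toFinset, cap C) = ∑ C ∈ hKfin.toFinset, volume (cap C) :=
      measure_biUnion_finset₀ hdisj
        (fun C hC => (hcap C (hKfin.mem_toFinset.1 hC)).1.nullMeasurableSet)
    have h2 : volume (⋃ C ∈ hKfin.toFinset, cap C) = ENNReal.ofReal (2 * Real.pi) := by
      rw [← AddCircle.measure_univ (2 * Real.pi)]
      refine measure_congr (eventuallyEq_univ.2 ?_)
      refine mem_of_superset ?_ hcover
      exact compl_mem_ae_iff.2 hB
    have h3 : ∑ C ∈ hKfin.toFinset, volume (cap C) = ENNReal.ofReal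
        (∑ C ∈ hKfin.toFinset, 2 * angR d.radius (f C).1.radius (f C).2.radius) := by
      rw [ENNReal.ofReal_sum_of_nonneg]
      · exact Finset.sum_congr rfl fun C hC => (hcap C (hKfin.mem_toFinset.1 hC)).2
      · intro C _
        have := angR_nonneg d.radius (f C).1.radius (f C).2.radius
        linarith
    rw [h1, h3, ← Finset.mul_sum] at h2
    have h4 := (ENNReal.ofReal_eq_ofReal_iff (mul_nonneg zero_le_two
      (Finset.sum_nonneg fun C _ => angR_nonneg _ _ _)) Real.two_pi_pos.le).1 h2
    linarith
  refine ⟨hKfin.toFinset.image f, ?_, ?_, ?_⟩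
  · intro e he
    obtain ⟨C, hC, rfl⟩ := Finset.mem_image.1 he
    exact ⟨C, hf C (hKfin.mem_toFinset.1 hC)⟩
  · rw [Finset.sum_image]
    · exact hsum
    · intro C hC C' hC' he
      exact hinj (hKfin.mem_toFinset.1 hC) (hKfin.mem_toFinset.1 hC') he
  · intro C a b h
    have hC : C ∈ K := ⟨a, b, h⟩
    have h' := hf C hC
    have hm : f C ∈ hKfin.toFinset.image f :=
      Finset.mem_image_of_mem f (hKfin.mem_toFinset.2 hC)
    have hset : ({d, a, b} : Set Disk) = {d, (f C).1, (f C).2} := by rw [← h.meets, h'.meets]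
    have ha : a ∈ ({d, (f C).1, (f C).2} : Set Disk) := by rw [← hset]; simp
    have hb : b ∈ ({d, (f C).1, (f C).2} : Set Disk) := by rw [← hset]; simp
    rcases ha with ha | ha | ha
    · exact absurd ha.symm h.nda
    · rcases hb with hb | hb | hb
      · exact absurd hb.symm h.ndb
      · exact absurd (ha.trans hb.symm) h.nab
      · left
        rw [ha, Set.mem_singleton_iff.1 hb]; exact hm
    · rcases hb with hb | hb | hb
      · exact absurd hb.symm h.ndb
      · right
        rw [hb, Set.mem_singleton_iff.1 ha]; exact hm
      · exact absurd ((Set.mem_singleton_iff.1 ha).trans (Set.mem_singleton_iff.1 hb).symm) h.nab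

end CirclePart

section FinalPart

theorem realizable_of_packing {ι : Type*} [Fintype ι] {R : ι → ℝ} (hpos : ∀ i, 0 < R i)
    (hle : ∀ i, R i ≤ 1) (hinj : Function.Injective R) {P : Set Disk} (hP : IsCompactPacking P)
    (hrad : ∀ d ∈ P, ∃ i, R i = d.radius) (huse : ∀ i, UsesRadius P (R i)) : Realizable R := by
  classical
  rcases isEmpty_or_nonempty ι with hι | hι
  · refine ⟨∅, by simp, ?_⟩
    rintro S ⟨i, -⟩
    exact hι.elim i
  obtain ⟨i₀, hi₀⟩ := Finite.exists_min R
  have hG : Good P (R i₀) :=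
    { pack := hP.1
      pos := hpos i₀
      lb := fun d hd => by
        obtain ⟨i, hi⟩ := hrad d hd
        rw [← hi]; exact hi₀ i
      ub := fun d hd => by
        obtain ⟨i, hi⟩ := hrad d hd
        rw [← hi]; exact hle i }
  choose! idx hidx using hrad
  choose! E hE1 hE2 hE3 using fun d (hd : d ∈ P) => angle_sum hG hP hd
  let cnt : Disk → ι × ι → ℕ := fun d p => ((E d).filter fun e => (idx e.1, idx e.2) = p).card
  refine ⟨(fun d => (idx d, cnt d)) '' P, ?_, ?_⟩
  · rintro _ ⟨d, hd, rfl⟩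
    rw [← hE2 d hd]
    rw [← Finset.sum_fiberwise (E d) (fun e => (idx e.1, idx e.2))]
    refine Finset.sum_congr rfl fun p _ => ?_
    have : ∀ e ∈ (E d).filter (fun e => (idx e.1, idx e.2) = p),
        angR d.radius e.1.radius e.2.radius = angR (R (idx d)) (R p.1) (R p.2) := by
      intro e he
      obtain ⟨heE, hep⟩ := Finset.mem_filter.1 he
      obtain ⟨C, hC⟩ := hE1 d hd e heE
      rw [← hep]
      simp only
      rw [hidx d hd, hidx _ hC.ha, hidx _ hC.hb]
    rw [Finset.sum_congr rfl this, Finset.sum_const, nsmul_eq_mul]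
  · intro S hS hcl
    have hQ : {d ∈ P | idx d ∈ S} = P := by
      refine connectivity hG hP (fun d hd => hd.1) ?_ ?_
      · obtain ⟨i, hi⟩ := hS
        obtain ⟨d, hd, hdr⟩ := huse i
        refine ⟨d, hd, ?_⟩
        have : idx d = i := hinj ((hidx d hd).trans hdr)
        rw [this]; exact hi
      · rintro C d a b hg ⟨hd, hdS⟩
        have key : ∀ e ∈ E d, idx e.1 ∈ S ∧ idx e.2 ∈ S := by
          intro e he
          refine hcl _ ⟨d, hd, rfl⟩ hdS (idx e.1, idx e.2) ?_
          exact Finset.card_ne_zero_of_mem (Finset.mem_filter.2 ⟨he, rfl⟩)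
        rcases hE3 d hd C a b hg with h | h
        · exact ⟨⟨hg.ha, (key _ h).1⟩, ⟨hg.hb, (key _ h).2⟩⟩
        · exact ⟨⟨hg.ha, (key _ h).2⟩, ⟨hg.hb, (key _ h).1⟩⟩
    refine Set.eq_univ_of_forall fun i => ?_
    obtain ⟨d, hd, hdr⟩ := huse i
    have h1 : d ∈ {d ∈ P | idx d ∈ S} := by rw [hQ]; exact hd
    have : idx d = i := hinj ((hidx d hd).trans hdr)
    rw [← this]; exact h1.2

end FinalPart

end

/-- for every `n ≥ 1`, there are finitely many tuples
`0 < r₁ < … < r_{n-1} < 1` allowing a compact packing by disks of radii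
`r₁, …, r_{n-1}, 1` using all `n` radii. -/
theorem compact_packing_radii_finite (n : ℕ) (hn : 1 ≤ n) :
    {r : Fin (n - 1) → ℝ | StrictMono r ∧ (∀ i, 0 < r i) ∧ (∀ i, r i < 1) ∧
      ∃ P : Set Disk, IsCompactPacking P ∧ RadiiIn P (Set.range r ∪ {1}) ∧
        (∀ i, UsesRadius P (r i)) ∧ UsesRadius P 1}.Finite := by
  let ext : (Fin (n - 1) → ℝ) → Option (Fin (n - 1)) → ℝ := fun r o => o.elim 1 r
  refine Set.Finite.of_finite_image (f := ext)
    ((realizable_finite (none : Option (Fin (n - 1)))).subset ?_) ?_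
  · rintro _ ⟨r, ⟨hmono, hpos, hlt, P, hP, hrad, huse, huse1⟩, rfl⟩
    have hpos' : ∀ i, 0 < ext r i := by
      rintro (_ | i)
      · exact one_pos
      · exact hpos i
    refine ⟨hpos', rfl, realizable_of_packing hpos' ?_ ?_ hP ?_ ?_⟩
    · rintro (_ | i)
      · exact le_rfl
      · exact (hlt i).le
    · rintro (_ | i) (_ | j) h
      · rfl
      · exact absurd h.symm (hlt j).ne
      · exact absurd h (hlt i).ne
      · exact congrArg some (hmono.injective h)
    · intro d hd
      rcases hrad d hd with ⟨i, hi⟩ | h1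
      · exact ⟨some i, hi⟩
      · exact ⟨none, h1.symm⟩
    · rintro (_ | i)
      · exact huse1
      · exact huse i
  · intro r _ r' _ h
    funext i
    exact congrFun h (some i)
end
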